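/- Let w = (w_1, w_2, w_3) ∈ ℤ³ with w_1 w_2 w_3 ≠ 0. With k = (1,3,5), τ = 5/8, f(α₁,α₂,α₃; X) = Σ_{|x| ≤ X} e(α₁x + α₂x³ + α₃x⁵), and 𝔪 the set of minor arcs in [1/Q₀, 1 + 1/Q₀]³ with Q = ⌊X^{5/8}⌋ and Q₀ = 2Q, one has for every ε > 0: ∫_𝔪 |f(w₁α₁, w₂α₂, w₃α₃; X)|^{30} dα₁ dα₂ dα₃ ≪_{w,ε} X^{21 − 1/8 + ε} for X ≥ 1. -/

import Mathlib

/-!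
The exponent `30` is the critical one for the full quintic Vinogradov system, where
`∫ |∑_{|x| ≤ Y} e(γ₁ x + ⋯ + γ₅ x⁵)|³⁰ dγ ≪ Y^{15 + ε}`. The proof transfers this bound to the
three-dimensional system of degrees `1, 3, 5`.

**Vinogradov's mean value theorem.** The classes modulo `p^n` are decoupled over `ℤ/p^{kn}` for a
fixed prime `p ≥ 16`, `p > k`, by induction on `k` (`expo_all`). The bilinear quantities `Bil`
involve two sets lying in classes modulo `p^a` and `p^b` that are distinct modulo `p`. Averaging
over phase shifts by polynomials that vanish to order `k - l + 1` on one class leaves it unchanged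
and presents the other class as a curve of degree `l` (`low_step`), so that decoupling in degree
`l < k` applies. Alternating this with Hölder's inequality (`iterate`) yields a gain that grows
linearly in the number of rounds (`sum_gain`), and a broad–narrow argument turns the gain into a
smaller exponent of the decoupling constant (`improve`). When `p^n` exceeds the length of the
interval each class has at most one element, which gives `vinogradov`; completion of sums gives a
majorant for all subintervals with the same mean value (`maximal`).

**Few near-periods.** Perturbing the coefficients of `x²` and `x⁴` by `O(X⁻²)` and `O(X⁻⁴)` changes
the sum only by partial summation, and the substitution `x ↦ x - y` acts on coefficient vectors by a
measure-preserving map. Hence `|f|³⁰` at `α` is bounded by the majorant at `≍ X` places of the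
five-dimensional torus, one for each `y` (`pointwise`). Two of these places can only coincide if the
difference of the shifts is a near-period of both `w₂ α₂` and `w₃ α₃`, so on the set of `α` with at
most `M` near-periods the integral is `≪ M X⁻¹ X^{2 + 4} X^{15 + ε} = M X^{20 + ε}` (`mean_few`).
The choice `M = X^{7/8}` gives `X^{21 - 1/8 + ε}`.

**Many near-periods.** If there are more than `X^{7/8}` near-periods, the pigeonhole principle
(`many_pigeon`, `near_zero`) gives `d ≪ X^{1/8}` such that a bounded multiple of `d` is a very good
common denominator of `α₂` and `α₃`. On the minor arcs that multiple is then far from being a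
denominator of `α₁` (`minor_not_close`), and the Kusmin–Landau inequality with that multiple as step
(`kusmin`, `weyl_linear`) shows `f ≪ X^{5/8}` (`many_bound_all`), whose thirtieth power
`X^{150/8}` is smaller than required.
-/

open MeasureTheory Finset

noncomputable def e (θ : ℝ) : ℂ := Complex.exp (2 * Real.pi * Complex.I * θ)

/-- `f_k(α; X) = ∑_{|x| ≤ X} e(∑_i α_i x^{k_i})`. -/
noncomputable def fK {n : ℕ} (k : Fin n → ℕ) (α : Fin n → ℝ) (X : ℝ) : ℂ :=
  ∑ x ∈ Finset.Icc (-⌊X⌋) ⌊X⌋, e (∑ i, α i * (x : ℝ) ^ k i)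

/-- The major arcs `𝔐`. -/
def majorArcs (n : ℕ) (k : Fin n → ℕ) (Q : ℕ) (X : ℝ) : Set (Fin n → ℝ) :=
  {α | ∃ q : ℕ, 1 ≤ q ∧ q ≤ Q ∧ ∃ a : Fin n → ℕ,
    (∀ i, 1 ≤ a i ∧ a i ≤ q) ∧ Nat.gcd (Finset.univ.gcd a) q = 1 ∧
    ∀ i, |α i - (a i : ℝ) / q| ≤ (Q : ℝ) / (q * X ^ k i)}

/-- The minor arcs `𝔪 = [1/Q₀, 1 + 1/Q₀]^n \ 𝔐`, with `Q₀ = 2Q`. -/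
def minorArcs (n : ℕ) (k : Fin n → ℕ) (Q : ℕ) (X : ℝ) : Set (Fin n → ℝ) :=
  Set.Icc (fun _ => 1 / (2 * Q : ℝ)) (fun _ => 1 + 1 / (2 * Q : ℝ)) \ majorArcs n k Q X

set_option linter.unusedSectionVars false

/-! ### Exponential sums over `ℤ/N` and the decoupling inequality -/

namespace VMVT

/-- The triangular number `l (l + 1) / 2`. -/
def tri (l : ℕ) : ℕ := l * (l + 1) / 2

lemma two_tri (l : ℕ) : 2 * tri l = l * (l + 1) :=
  Nat.mul_div_cancel' (Nat.even_mul_succ_self l).two_dvd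

lemma tri_pos {l : ℕ} (hl : 1 ≤ l) : 1 ≤ tri l := by
  have := two_tri l
  nlinarith

lemma tri_real (l : ℕ) : (tri l : ℝ) = l * (l + 1) / 2 := by
  have := two_tri l
  have h : (2 * (tri l : ℝ)) = l * (l + 1) := by exact_mod_cast this
  linarith

/-- Hölder's inequality with conjugate exponents `1 / θ` and `1 / (1 - θ)`. -/
lemma holder_interp {ι : Type*} (s : Finset ι) {f g : ι → ℝ} (hf : ∀ i ∈ s, 0 ≤ f i)
    (hg : ∀ i ∈ s, 0 ≤ g i) {θ : ℝ} (h0 : 0 < θ) (h1 : θ < 1) :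
    ∑ i ∈ s, f i ^ θ * g i ^ (1 - θ) ≤ (∑ i ∈ s, f i) ^ θ * (∑ i ∈ s, g i) ^ (1 - θ) := by
  have h1' : 0 < 1 - θ := by linarith
  have hc : (1 / θ).HolderConjugate (1 / (1 - θ)) := by
    rw [Real.holderConjugate_iff]
    refine ⟨by rw [lt_div_iff₀ h0]; linarith, ?_⟩
    rw [one_div, one_div, inv_inv, inv_inv]; ring
  have key := Real.inner_le_Lp_mul_Lq_of_nonneg s (f := fun i => f i ^ θ)
    (g := fun i => g i ^ (1 - θ)) hc (fun i hi => Real.rpow_nonneg (hf i hi) _)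
    (fun i hi => Real.rpow_nonneg (hg i hi) _)
  rw [one_div_one_div, one_div_one_div] at key
  refine key.trans (le_of_eq ?_)
  congr 2
  · refine Finset.sum_congr rfl fun i hi => ?_
    rw [← Real.rpow_mul (hf i hi), mul_one_div_cancel h0.ne', Real.rpow_one]
  · refine Finset.sum_congr rfl fun i hi => ?_
    rw [← Real.rpow_mul (hg i hi), mul_one_div_cancel h1'.ne', Real.rpow_one]

lemma norm_sum_pow_le {ι : Type*} (s : Finset ι) (f : ι → ℂ) {P : ℕ} (hP : 1 ≤ P) :
    ‖∑ i ∈ s, f i‖ ^ P ≤ (s.card : ℝ) ^ (P - 1) * ∑ i ∈ s, ‖f i‖ ^ P := by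
  obtain ⟨n, rfl⟩ : ∃ n, P = n + 1 := ⟨P - 1, by omega⟩
  have h1 : ‖∑ i ∈ s, f i‖ ^ (n + 1) ≤ (∑ i ∈ s, ‖f i‖) ^ (n + 1) := by
    gcongr
    exact norm_sum_le _ _
  exact h1.trans (pow_sum_le_card_mul_sum_pow (fun _ _ => norm_nonneg _) n)

variable {p : ℕ} [hp : Fact p.Prime]

/-- The monomial phase `e((β₁ x + ⋯ + β_k x^k) / N)` for `β ∈ (ℤ/N)^k`. -/
noncomputable def ph {k N : ℕ} [NeZero N] (β : Fin k → ZMod N) (x : ℤ) : ℂ :=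
  ZMod.stdAddChar (∑ j, β j * (x : ZMod N) ^ (j.val + 1))

lemma norm_ph {k N : ℕ} [NeZero N] (β : Fin k → ZMod N) (x : ℤ) : ‖ph β x‖ = 1 :=
  AddChar.norm_apply _ _

lemma ph_add {k N : ℕ} [NeZero N] (β β' : Fin k → ZMod N) (x : ℤ) :
    ph (β + β') x = ph β x * ph β' x := by
  simp only [ph, Pi.add_apply, add_mul, Finset.sum_add_distrib, AddChar.map_add_eq_mul]

/-- The weighted exponential sum over `x ∈ S`. -/
noncomputable def F {k N : ℕ} [NeZero N] (c : ℤ → ℂ) (S : Finset ℤ) (β : Fin k → ZMod N) : ℂ :=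
  ∑ x ∈ S, c x * ph β x

/-- The elements of `S` in the residue class `ζ` modulo `N`. -/
def cls {N : ℕ} (S : Finset ℤ) (ζ : ZMod N) : Finset ℤ := S.filter fun x => (x : ZMod N) = ζ

lemma mem_cls {N : ℕ} {S : Finset ℤ} {ζ : ZMod N} {x : ℤ} :
    x ∈ cls S ζ ↔ x ∈ S ∧ (x : ZMod N) = ζ := by simp [cls]

lemma F_eq_sum_cls {k N M : ℕ} [NeZero N] [NeZero M] (c : ℤ → ℂ) (S : Finset ℤ)
    (β : Fin k → ZMod N) : F c S β = ∑ ζ : ZMod M, F c (cls S ζ) β :=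
  (Finset.sum_fiberwise S (fun x => (x : ZMod M)) _).symm

variable (p) in
/-- The `ℓ^P` decoupling inequality, with constant `K`, for the moment curve of degree `k` over
`ℤ/p^{kn}`, at the critical exponent `P = k (k + 1)`, into residue classes modulo `p^n`.
It is required uniformly in the coefficients. -/
def Dec (k n : ℕ) (K : ℝ) : Prop :=
  ∀ (S : Finset ℤ) (c : ℤ → ℂ),
    ∑ β : Fin k → ZMod (p ^ (k * n)), ‖F c S β‖ ^ (k * (k + 1)) ≤
      K * (p : ℝ) ^ (n * (tri k - 1)) *
        ∑ ζ : ZMod (p ^ n), ∑ β : Fin k → ZMod (p ^ (k * n)), ‖F c (cls S ζ) β‖ ^ (k * (k + 1))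

lemma Dec.mono {k n : ℕ} {K K' : ℝ} (h : Dec p k n K) (hK : K ≤ K') : Dec p k n K' := by
  intro S c
  refine (h S c).trans ?_
  gcongr

/-- The decoupling inequality with frequencies `Y x` indexed by integers `x`; the map `Y` need not
be injective. -/
lemma Dec.gen {l n : ℕ} {K : ℝ} (h : Dec p l n K) (S : Finset ℤ) (c : ℤ → ℂ) (Y : ℤ → ℤ) :
    ∑ β : Fin l → ZMod (p ^ (l * n)), ‖∑ x ∈ S, c x * ph β (Y x)‖ ^ (l * (l + 1)) ≤
      K * (p : ℝ) ^ (n * (tri l - 1)) *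
        ∑ ζ : ZMod (p ^ n), ∑ β : Fin l → ZMod (p ^ (l * n)),
          ‖∑ x ∈ S.filter (fun x => (Y x : ZMod (p ^ n)) = ζ), c x * ph β (Y x)‖ ^
            (l * (l + 1)) := by
  have key := h (S.image Y) (fun y => ∑ x ∈ S.filter (fun x => Y x = y), c x)
  have e1 : ∀ (β : Fin l → ZMod (p ^ (l * n))) (q : ℤ → Prop) [DecidablePred q],
      F (fun y => ∑ x ∈ S.filter (fun x => Y x = y), c x) ((S.image Y).filter q) β =
        ∑ x ∈ S.filter (fun x => q (Y x)), c x * ph β (Y x) := by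
    intro β q _
    have hm : ∀ x ∈ S.filter (fun x => q (Y x)), Y x ∈ (S.image Y).filter q := by
      intro x hx
      simp only [Finset.mem_filter, Finset.mem_image] at hx ⊢
      exact ⟨⟨x, hx.1, rfl⟩, hx.2⟩
    rw [F, ← Finset.sum_fiberwise_of_maps_to hm]
    refine Finset.sum_congr rfl fun y hy => ?_
    rw [Finset.sum_mul, Finset.filter_filter]
    have : S.filter (fun x => Y x = y) = S.filter (fun x => q (Y x) ∧ Y x = y) := by
      refine Finset.filter_congr fun x _ => ?_
      simp only [Finset.mem_filter] at hy
      constructor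
      · rintro rfl; exact ⟨hy.2, rfl⟩
      · exact fun h => h.2
    rw [this]
    refine Finset.sum_congr rfl fun x hx => ?_
    rw [Finset.mem_filter] at hx
    rw [hx.2.2]
  have e2 : ∀ β : Fin l → ZMod (p ^ (l * n)),
      F (fun y => ∑ x ∈ S.filter (fun x => Y x = y), c x) (S.image Y) β =
        ∑ x ∈ S, c x * ph β (Y x) := by
    intro β
    have := e1 β (fun _ => True)
    simpa using this
  simp only [e2] at key
  refine key.trans (le_of_eq ?_)
  congr 1
  refine Finset.sum_congr rfl fun ζ _ => Finset.sum_congr rfl fun β _ => ?_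
  rw [cls, e1 β (fun y => (y : ZMod (p ^ n)) = ζ)]

lemma stdAddChar_scale (m r : ℕ) (t : ℤ) :
    ZMod.stdAddChar (((p ^ r : ℤ) * t : ℤ) : ZMod (p ^ (m + r))) =
      ZMod.stdAddChar ((t : ℤ) : ZMod (p ^ m)) := by
  have hp0 : (p : ℂ) ≠ 0 := by exact_mod_cast hp.out.ne_zero
  rw [ZMod.stdAddChar_coe, ZMod.stdAddChar_coe]
  congr 1
  push_cast
  field_simp
  ring

/-- The shift of frequency vectors that corresponds to adding `Q(x) / p^m` to the phase, for an
integer polynomial `Q` of degree at most `k`. -/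
noncomputable def sh (p k N m : ℕ) (Q : Polynomial ℤ) : Fin k → ZMod (p ^ N) :=
  fun j => (((p ^ (N - m) : ℤ) * Q.coeff (j.val + 1) : ℤ) : ZMod (p ^ N))

lemma ph_sh {k N m : ℕ} (hm : m ≤ N) (Q : Polynomial ℤ) (hQ : Q.natDegree ≤ k) (x : ℤ) :
    ph (sh p k N m Q) x = ZMod.stdAddChar ((Q.eval x - Q.coeff 0 : ℤ) : ZMod (p ^ m)) := by
  obtain ⟨r, rfl⟩ := Nat.exists_eq_add_of_le hm
  rw [← stdAddChar_scale m r, ph]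
  congr 1
  have h1 : Q.eval x - Q.coeff 0 = ∑ j : Fin k, Q.coeff (j.val + 1) * x ^ (j.val + 1) := by
    rw [Polynomial.eval_eq_sum_range' (n := k + 1) (by omega), Finset.sum_range_succ',
      Finset.sum_range]
    simp
  rw [h1]
  push_cast
  rw [Finset.mul_sum]
  refine Finset.sum_congr rfl fun j _ => ?_
  simp [sh, mul_assoc]

end VMVT

/-! ### Decoupling by averaging over shifts -/

namespace VMVT

variable {p : ℕ} [hp : Fact p.Prime]

lemma ph_add_sh {k N m l n' : ℕ} (hm : m ≤ N) (hln : l * n' ≤ m)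
    (Q : Polynomial ℤ) (hQ : Q.natDegree ≤ k) (h : Fin l → ZMod (p ^ (l * n')))
    (r0 : ℤ) (x y : ℤ)
    (hx : (p ^ m : ℤ) ∣ Q.eval x - r0 - p ^ (m - l * n') * ∑ j, ((h j).val : ℤ) * y ^ (j.val + 1))
    (β : Fin k → ZMod (p ^ N)) :
    ph (β + sh p k N m Q) x =
      ZMod.stdAddChar ((r0 - Q.coeff 0 : ℤ) : ZMod (p ^ m)) * (ph β x * ph h y) := by
  rw [ph_add, ph_sh hm Q hQ]
  have e1 : ((Q.eval x - Q.coeff 0 : ℤ) : ZMod (p ^ m)) = ((r0 - Q.coeff 0 : ℤ) : ZMod (p ^ m)) +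
      ((p ^ (m - l * n') * ∑ j, ((h j).val : ℤ) * y ^ (j.val + 1) : ℤ) : ZMod (p ^ m)) := by
    rw [← Int.cast_add, ← sub_eq_zero, ← Int.cast_sub, ZMod.intCast_zmod_eq_zero_iff_dvd]
    push_cast
    convert hx using 1
    ring
  rw [e1, AddChar.map_add_eq_mul]
  have e2 : ZMod.stdAddChar ((p ^ (m - l * n') * ∑ j, ((h j).val : ℤ) * y ^ (j.val + 1) : ℤ) :
      ZMod (p ^ m)) = ph h y := by
    obtain ⟨r, rfl⟩ := Nat.exists_eq_add_of_le hln
    rw [Nat.add_sub_cancel_left, stdAddChar_scale, ph]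
    congr 1
    push_cast
    refine Finset.sum_congr rfl fun j _ => ?_
    rw [ZMod.natCast_zmod_val]
  rw [e2]
  ring

/-- Decoupling in `ℤ/p^N` by averaging over a family of shifts. If the shifts `Q h / p^m` act on
the frequencies `x ∈ S` as the degree `l` moment curve in `Y x`, and leave `B` invariant, then
decoupling for degree `l` applies fibrewise, with weight `B`. -/
lemma core {k N m l n' : ℕ} {K : ℝ} (hD : Dec p l n' K) (hm : m ≤ N) (hln : l * n' ≤ m)
    (Q : (Fin l → ZMod (p ^ (l * n'))) → Polynomial ℤ) (hQ : ∀ h, (Q h).natDegree ≤ k)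
    (S : Finset ℤ) (Y : ℤ → ℤ)
    (hS : ∀ h, ∃ r0 : ℤ, ∀ x ∈ S, (p ^ m : ℤ) ∣ (Q h).eval x - r0 -
      p ^ (m - l * n') * ∑ j, ((h j).val : ℤ) * (Y x) ^ (j.val + 1))
    (B : (Fin k → ZMod (p ^ N)) → ℝ) (hB0 : ∀ β, 0 ≤ B β)
    (hB : ∀ h β, B (β + sh p k N m (Q h)) = B β) (c : ℤ → ℂ) :
    ∑ β : Fin k → ZMod (p ^ N), ‖F c S β‖ ^ (l * (l + 1)) * B β ≤
      K * (p : ℝ) ^ (n' * (tri l - 1)) * ∑ ζ : ZMod (p ^ n'), ∑ β : Fin k → ZMod (p ^ N),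
        ‖F c (S.filter fun x => (Y x : ZMod (p ^ n')) = ζ) β‖ ^ (l * (l + 1)) * B β := by
  choose r0 hr0 using hS
  have hF : ∀ (T : Finset ℤ), T ⊆ S → ∀ h β, ‖F c T (β + sh p k N m (Q h))‖ =
      ‖∑ x ∈ T, (c x * ph β x) * ph h (Y x)‖ := by
    intro T hT h β
    have : F c T (β + sh p k N m (Q h)) =
        ZMod.stdAddChar ((r0 h - (Q h).coeff 0 : ℤ) : ZMod (p ^ m)) *
          ∑ x ∈ T, (c x * ph β x) * ph h (Y x) := by
      rw [F, Finset.mul_sum]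
      refine Finset.sum_congr rfl fun x hx => ?_
      rw [ph_add_sh hm hln (Q h) (hQ h) h (r0 h) x (Y x) (hr0 h x (hT hx)) β]
      ring
    rw [this, norm_mul, AddChar.norm_apply, one_mul]
  have avg : ∀ T : Finset ℤ, T ⊆ S →
      (Fintype.card (Fin l → ZMod (p ^ (l * n'))) : ℝ) *
        ∑ β : Fin k → ZMod (p ^ N), ‖F c T β‖ ^ (l * (l + 1)) * B β =
      ∑ β : Fin k → ZMod (p ^ N), B β * ∑ h : Fin l → ZMod (p ^ (l * n')),
        ‖∑ x ∈ T, (c x * ph β x) * ph h (Y x)‖ ^ (l * (l + 1)) := by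
    intro T hT
    have e1 : ∀ h : Fin l → ZMod (p ^ (l * n')),
        ∑ β : Fin k → ZMod (p ^ N), ‖F c T β‖ ^ (l * (l + 1)) * B β =
        ∑ β : Fin k → ZMod (p ^ N),
          B β * ‖∑ x ∈ T, (c x * ph β x) * ph h (Y x)‖ ^ (l * (l + 1)) := by
      intro h
      rw [← Equiv.sum_comp (Equiv.addRight (sh p k N m (Q h)))]
      refine Finset.sum_congr rfl fun β _ => ?_
      rw [Equiv.coe_addRight, hF T hT, hB, mul_comm]
    simp_rw [Finset.mul_sum (s := (Finset.univ : Finset (Fin l → ZMod (p ^ (l * n')))))]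
    rw [Finset.sum_comm, ← Finset.sum_congr rfl (fun h _ => e1 h), Finset.sum_const, nsmul_eq_mul,
      Finset.card_univ]
  have hcard : (0 : ℝ) < (Fintype.card (Fin l → ZMod (p ^ (l * n'))) : ℝ) := by
    exact_mod_cast Fintype.card_pos
  refine le_of_mul_le_mul_left ?_ hcard
  rw [avg S subset_rfl]
  have step : ∀ β : Fin k → ZMod (p ^ N), B β * ∑ h : Fin l → ZMod (p ^ (l * n')),
        ‖∑ x ∈ S, (c x * ph β x) * ph h (Y x)‖ ^ (l * (l + 1)) ≤
      B β * (K * (p : ℝ) ^ (n' * (tri l - 1)) *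
        ∑ ζ : ZMod (p ^ n'), ∑ h : Fin l → ZMod (p ^ (l * n')),
          ‖∑ x ∈ S.filter (fun x => (Y x : ZMod (p ^ n')) = ζ), (c x * ph β x) * ph h (Y x)‖ ^
            (l * (l + 1))) := fun β =>
    mul_le_mul_of_nonneg_left (hD.gen S (fun x => c x * ph β x) Y) (hB0 β)
  refine (Finset.sum_le_sum fun β _ => step β).trans (le_of_eq ?_)
  have e3 : ∀ ζ : ZMod (p ^ n'), (Fintype.card (Fin l → ZMod (p ^ (l * n'))) : ℝ) *
      ∑ β : Fin k → ZMod (p ^ N),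
        ‖F c (S.filter fun x => (Y x : ZMod (p ^ n')) = ζ) β‖ ^ (l * (l + 1)) * B β = _ :=
    fun ζ => avg (S.filter fun x => (Y x : ZMod (p ^ n')) = ζ) (Finset.filter_subset _ _)
  rw [mul_left_comm, Finset.mul_sum (s := (Finset.univ : Finset (ZMod (p ^ n')))),
    Finset.sum_congr rfl (fun ζ _ => e3 ζ), Finset.sum_comm, Finset.mul_sum]
  refine Finset.sum_congr rfl fun β _ => ?_
  rw [← Finset.mul_sum]
  ring

/-- Residue classes of `Y x = (x - x0) / p^c` modulo `p^{a - c}` are residue classes of `x`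
modulo `p^a`. -/
lemma sum_filter_le_sum_cls {c a : ℕ} (hca : c ≤ a) (x0 : ℤ) (S : Finset ℤ) (Y : ℤ → ℤ)
    (hY : ∀ x ∈ S, x = x0 + p ^ c * Y x) (Φ : Finset ℤ → ℝ) (hΦ : ∀ T, 0 ≤ Φ T) :
    ∑ ζ : ZMod (p ^ (a - c)), Φ (S.filter fun x => (Y x : ZMod (p ^ (a - c))) = ζ) ≤
      ∑ ζ : ZMod (p ^ a), Φ (cls S ζ) := by
  have hp0 : (p : ℤ) ≠ 0 := by exact_mod_cast hp.out.ne_zero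
  have hiff : ∀ u v : ℤ, ((x0 + p ^ c * u : ℤ) : ZMod (p ^ a)) = ((x0 + p ^ c * v : ℤ) :
      ZMod (p ^ a)) ↔ (u : ZMod (p ^ (a - c))) = (v : ZMod (p ^ (a - c))) := by
    intro u v
    rw [ZMod.intCast_eq_intCast_iff_dvd_sub, ZMod.intCast_eq_intCast_iff_dvd_sub]
    have h1 : (x0 + p ^ c * v) - (x0 + p ^ c * u) = (p : ℤ) ^ c * (v - u) := by ring
    have h2 : ((p ^ a : ℕ) : ℤ) = (p : ℤ) ^ c * ((p ^ (a - c) : ℕ) : ℤ) := by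
      push_cast
      rw [← pow_add, Nat.add_sub_cancel' hca]
    rw [h1, h2, mul_dvd_mul_iff_left (pow_ne_zero _ hp0)]
  let i : ZMod (p ^ (a - c)) → ZMod (p ^ a) := fun ζ => ((x0 + p ^ c * (ζ.val : ℤ) : ℤ) : ZMod (p ^ a))
  have hi : Function.Injective i := by
    intro u v huv
    have := (hiff _ _).1 huv
    simpa using this
  have he : ∀ ζ, (S.filter fun x => (Y x : ZMod (p ^ (a - c))) = ζ) = cls S (i ζ) := by
    intro ζ
    ext x
    simp only [Finset.mem_filter, mem_cls]
    refine and_congr_right fun hx => ?_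
    conv_rhs => rw [hY x hx]
    rw [hiff]
    simp
  simp_rw [he]
  rw [← Finset.sum_image (f := fun ζ => Φ (cls S ζ)) (s := Finset.univ) (g := i)
    (fun _ _ _ _ h => hi h)]
  exact Finset.sum_le_sum_of_subset_of_nonneg (Finset.subset_univ _) fun _ _ _ => hΦ _

end VMVT

/-! ### Affine rescaling and nondegeneracy of the moment curve -/

namespace VMVT

variable {p : ℕ} [hp : Fact p.Prime]

/-- Decoupling for a finite set contained in one residue class modulo `p^a`, by affine
rescaling. -/
lemma Dec.rescale {k n a : ℕ} {K : ℝ} (hK : 0 ≤ K) (han : a ≤ n) (hD : Dec p k (n - a) K)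
    (S : Finset ℤ)
    (x0 : ℤ) (hS : ∀ x ∈ S, (p ^ a : ℤ) ∣ x - x0) (c : ℤ → ℂ) :
    ∑ β : Fin k → ZMod (p ^ (k * n)), ‖F c S β‖ ^ (k * (k + 1)) ≤
      K * (p : ℝ) ^ ((n - a) * (tri k - 1)) *
        ∑ ζ : ZMod (p ^ n), ∑ β : Fin k → ZMod (p ^ (k * n)),
          ‖F c (cls S ζ) β‖ ^ (k * (k + 1)) := by
  have hp0 : (p : ℤ) ≠ 0 := by exact_mod_cast hp.out.ne_zero
  let Y : ℤ → ℤ := fun x => (x - x0) / p ^ a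
  have hY : ∀ x ∈ S, x - x0 = p ^ a * Y x := fun x hx => (Int.mul_ediv_cancel' (hS x hx)).symm
  have key := core (k := k) (N := k * n) (m := k * n) hD le_rfl
    (Nat.mul_le_mul_left k (Nat.sub_le n a))
    (fun h => ∑ j : Fin k, Polynomial.C (((h j).val : ℤ) * p ^ (a * (k - (j.val + 1)))) *
      (Polynomial.X - Polynomial.C x0) ^ (j.val + 1))
    (fun h => Polynomial.natDegree_sum_le_of_forall_le _ _ fun j _ =>
      (Polynomial.natDegree_C_mul_le _ _).trans
        (Polynomial.natDegree_pow_le.trans (by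
          rw [Polynomial.natDegree_X_sub_C]; have := j.isLt; omega)))
    S Y (fun h => ⟨0, fun x hx => by
      have e1 : k * n - k * (n - a) = a * k := by
        rw [← Nat.mul_sub, Nat.sub_sub_self han, mul_comm]
      rw [e1, Polynomial.eval_finsetSum, Finset.mul_sum, sub_zero, ← Finset.sum_sub_distrib,
        Finset.sum_eq_zero]
      · exact dvd_zero _
      · intro j _
        simp only [Polynomial.eval_mul, Polynomial.eval_C, Polynomial.eval_pow,
          Polynomial.eval_sub, Polynomial.eval_X]
        rw [hY x hx, mul_pow, ← pow_mul]
        have e2 : a * k = a * (k - (j.val + 1)) + a * (j.val + 1) := by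
          rw [← mul_add, Nat.sub_add_cancel j.isLt]
        rw [e2, pow_add]
        ring⟩)
    (fun _ => 1) (fun _ => zero_le_one) (fun _ _ => rfl) c
  simp only [mul_one] at key
  refine key.trans ?_
  refine mul_le_mul_of_nonneg_left ?_ (by positivity)
  exact sum_filter_le_sum_cls han x0 S Y (fun x hx => by rw [← hY x hx]; ring)
    (fun T => ∑ β : Fin k → ZMod (p ^ (k * n)), ‖F c T β‖ ^ (k * (k + 1)))
    (fun T => by positivity)

/-- The key nondegeneracy: the curve `(x^{k-l+1}, …, x^k)` has invertible matrix of Taylor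
coefficients of orders `1, …, l` at every point which is nonzero modulo `p > k`. -/
lemma taylor_kernel {k l : ℕ} (hl : l ≤ k) (hkp : k < p) (t : ZMod p) (ht : t ≠ 0)
    (g : Fin l → ZMod p)
    (h : ∀ j : Fin l, ∑ i : Fin l, ((Nat.choose (k - l + 1 + i) (j + 1) : ℕ) : ZMod p) *
      t ^ (k - l + 1 + i.val - (j.val + 1)) * g i = 0) : g = 0 := by
  classical
  set Q : Polynomial (ZMod p) :=
    ∑ i : Fin l, Polynomial.monomial (k - l + 1 + i.val) (g i) with hQ
  have hcoef : ∀ i : Fin l, Q.coeff (k - l + 1 + i.val) = g i := by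
    intro i
    rw [hQ, Polynomial.finsetSum_coeff, Finset.sum_eq_single i]
    · simp
    · intro b _ hb
      rw [Polynomial.coeff_monomial, if_neg]
      intro h
      exact hb (Fin.ext (by omega))
    · simp
  have hder : ∀ q : Polynomial (ZMod p), Polynomial.derivative (Polynomial.taylor t q) =
      Polynomial.taylor t (Polynomial.derivative q) := by
    intro q
    simp [Polynomial.taylor_apply, Polynomial.derivative_comp]
  have hT : ∀ j : ℕ, j < l → (Polynomial.taylor t Q).coeff (j + 1) = 0 := by
    intro j hj
    rw [Polynomial.taylor_coeff, hQ, map_sum, Polynomial.eval_finsetSum]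
    rw [← h ⟨j, hj⟩]
    refine Finset.sum_congr rfl fun i _ => ?_
    rw [Polynomial.hasseDeriv_monomial, Polynomial.eval_monomial]
    ring
  have hd1 : (Polynomial.X - Polynomial.C t) ^ l ∣ Polynomial.derivative Q := by
    have h1 : (Polynomial.X : Polynomial (ZMod p)) ^ l ∣
        Polynomial.taylor t (Polynomial.derivative Q) := by
      rw [← hder, Polynomial.X_pow_dvd_iff]
      intro d hd
      rw [Polynomial.coeff_derivative, hT d hd, zero_mul]
    obtain ⟨U, hU⟩ := h1
    have h2 := congrArg (Polynomial.taylor (-t)) hU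
    rw [Polynomial.taylor_taylor, neg_add_cancel, Polynomial.taylor_zero] at h2
    refine ⟨Polynomial.taylor (-t) U, ?_⟩
    rw [h2]
    simp [Polynomial.taylor_apply, sub_eq_add_neg]
  have hd2 : (Polynomial.X : Polynomial (ZMod p)) ^ (k - l) ∣ Polynomial.derivative Q := by
    rw [Polynomial.X_pow_dvd_iff]
    intro d hd
    rw [Polynomial.coeff_derivative, hQ, Polynomial.finsetSum_coeff, Finset.sum_eq_zero, zero_mul]
    intro i _
    rw [Polynomial.coeff_monomial, if_neg (by omega)]
  have hcop : IsCoprime ((Polynomial.X : Polynomial (ZMod p)) ^ (k - l))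
      ((Polynomial.X - Polynomial.C t) ^ l) := by
    refine IsCoprime.pow ?_
    have := Polynomial.isCoprime_X_sub_C_of_isUnit_sub (R := ZMod p) (a := 0) (b := t)
      (by simpa using ht)
    simpa using this
  have hdvd := hcop.mul_dvd hd2 hd1
  have hQdeg : Q.natDegree ≤ k := by
    refine Polynomial.natDegree_sum_le_of_forall_le _ _ fun i _ => ?_
    refine (Polynomial.natDegree_monomial_le _).trans ?_
    have := i.isLt
    omega
  have hzero : Polynomial.derivative Q = 0 := by
    by_contra hne
    rcases Nat.eq_zero_or_pos Q.natDegree with h0 | h0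
    · apply hne
      rw [Polynomial.eq_C_of_natDegree_eq_zero h0, Polynomial.derivative_C]
    · have h1 := Polynomial.natDegree_le_of_dvd hdvd hne
      have h2 : ((Polynomial.X : Polynomial (ZMod p)) ^ (k - l) *
          (Polynomial.X - Polynomial.C t) ^ l).natDegree = k := by
        rw [Polynomial.natDegree_mul (pow_ne_zero _ Polynomial.X_ne_zero)
          (pow_ne_zero _ (Polynomial.X_sub_C_ne_zero t)), Polynomial.natDegree_pow,
          Polynomial.natDegree_pow, Polynomial.natDegree_X_sub_C, Polynomial.natDegree_X]
        omega
      have h3 := Polynomial.natDegree_derivative_lt (p := Q) h0.ne'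
      omega
  funext i
  have h1 := congrArg (fun q => Polynomial.coeff q (k - l + i.val)) hzero
  simp only [Polynomial.coeff_derivative, Polynomial.coeff_zero] at h1
  rw [show k - l + i.val + 1 = k - l + 1 + i.val by omega, hcoef] at h1
  rcases mul_eq_zero.1 h1 with h2 | h2
  · exact h2
  · exfalso
    have h3 : ((k - l + i.val + 1 : ℕ) : ZMod p) = 0 := by
      push_cast at h2 ⊢
      exact h2
    rw [ZMod.natCast_eq_zero_iff] at h3
    have := Nat.le_of_dvd (by omega) h3
    have := i.isLt
    omega

/-- The nondegeneracy modulo `p` lifted to `p^M`: the Taylor coefficients of orders `1, …, l` of a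
combination of the powers `x^{k-l+1}, …, x^k` can be prescribed modulo `p^M`. -/
lemma taylor_solve {k l : ℕ} (hl : l ≤ k) (hkp : k < p) (t : ℤ) (ht : ¬ (p : ℤ) ∣ t) (M : ℕ)
    (r : Fin l → ℤ) :
    ∃ g : Fin l → ℤ, ∀ j : Fin l, (p ^ M : ℤ) ∣
      ∑ i : Fin l, (Nat.choose (k - l + 1 + i) (j + 1) : ℤ) *
        t ^ (k - l + 1 + i.val - (j.val + 1)) * g i - r j := by
  classical
  let A : Matrix (Fin l) (Fin l) ℤ := Matrix.of fun j i =>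
    (Nat.choose (k - l + 1 + i) (j + 1) : ℤ) *
        t ^ (k - l + 1 + i.val - (j.val + 1))
  have hdet : ¬ (p : ℤ) ∣ A.det := by
    intro hdvd
    have h0 : (A.map (Int.castRingHom (ZMod p))).det = 0 := by
      rw [← RingHom.mapMatrix_apply, ← RingHom.map_det]
      exact (ZMod.intCast_zmod_eq_zero_iff_dvd _ _).2 hdvd
    obtain ⟨v, hv, hv0⟩ := Matrix.exists_mulVec_eq_zero_iff.2 h0
    apply hv
    refine taylor_kernel hl hkp (t : ZMod p) ?_ v ?_
    · rwa [Ne, ZMod.intCast_zmod_eq_zero_iff_dvd]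
    · intro j
      have := congrFun hv0 j
      simpa [Matrix.mulVec, dotProduct, A] using this
  have hcop : IsCoprime A.det ((p : ℤ) ^ M) := by
    refine IsCoprime.pow_right ?_
    exact ((Nat.prime_iff_prime_int.1 hp.out).coprime_iff_not_dvd.2 hdet).symm
  obtain ⟨u, v, huv⟩ := hcop
  refine ⟨fun i => u * (A.adjugate.mulVec r) i, fun j => ?_⟩
  have h1 : ∑ i, A j i * (A.adjugate.mulVec r) i = A.det * r j := by
    have : A.mulVec (A.adjugate.mulVec r) = A.det • r := by
      rw [Matrix.mulVec_mulVec, Matrix.mul_adjugate, Matrix.smul_mulVec, Matrix.one_mulVec]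
    simpa [Matrix.mulVec, dotProduct] using congrFun this j
  have h2 : ∑ i : Fin l, (Nat.choose (k - l + 1 + i) (j + 1) : ℤ) *
        t ^ (k - l + 1 + i.val - (j.val + 1)) * (u * (A.adjugate.mulVec r) i) =
      u * (A.det * r j) := by
    rw [← h1, Finset.mul_sum]
    refine Finset.sum_congr rfl fun i _ => ?_
    simp only [A, Matrix.of_apply]
    ring
  rw [h2]
  refine ⟨-(v * r j), ?_⟩
  linear_combination (r j) * huv

end VMVT

/-! ### Lower-dimensional decoupling -/

namespace VMVT

variable {p : ℕ} [hp : Fact p.Prime]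

lemma norm_F_add_sh {k N m : ℕ} (hm : m ≤ N) (Q : Polynomial ℤ) (hQ : Q.natDegree ≤ k)
    (S : Finset ℤ) (hS : ∀ y ∈ S, (p ^ m : ℤ) ∣ Q.eval y) (c : ℤ → ℂ)
    (β : Fin k → ZMod (p ^ N)) : ‖F c S (β + sh p k N m Q)‖ = ‖F c S β‖ := by
  have : F c S (β + sh p k N m Q) =
      ZMod.stdAddChar ((- Q.coeff 0 : ℤ) : ZMod (p ^ m)) * F c S β := by
    rw [F, F, Finset.mul_sum]
    refine Finset.sum_congr rfl fun y hy => ?_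
    have h0 : ((Q.eval y - Q.coeff 0 : ℤ) : ZMod (p ^ m)) = ((- Q.coeff 0 : ℤ) : ZMod (p ^ m)) := by
      have h1 : ((Q.eval y : ℤ) : ZMod (p ^ m)) = 0 := by
        rw [ZMod.intCast_zmod_eq_zero_iff_dvd]
        exact_mod_cast hS y hy
      push_cast
      rw [h1, zero_sub]
    rw [ph_add, ph_sh hm Q hQ, h0]
    ring
  rw [this, norm_mul, AddChar.norm_apply, one_mul]

/-- One step of lower-dimensional decoupling: `S` lies in a class modulo `p^c`, `S'` in a class
modulo `p^b`, and the two classes are distinct modulo `p`. The shifts by polynomials that vanish to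
order `k - l + 1` at `S'` do not affect `S'`, and see `S` as a curve of degree `l`. -/
lemma low_step {k l b c c1 N : ℕ} {K : ℝ} (hK : 0 ≤ K) (hlk : l ≤ k) (hkp : k < p)
    (hcc : c ≤ c1) (h1 : l * c1 ≤ (l + 1) * c) (h2 : l * c1 ≤ (k - l + 1) * b) (h3 : l * c1 ≤ N)
    (hD : Dec p l (c1 - c) K) (S S' : Finset ℤ) (x0 η : ℤ) (hS : ∀ x ∈ S, (p ^ c : ℤ) ∣ x - x0)
    (hS' : ∀ x ∈ S', (p ^ b : ℤ) ∣ x - η) (hne : ¬ (p : ℤ) ∣ x0 - η) (cf : ℤ → ℂ) (e : ℕ) :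
    ∑ β : Fin k → ZMod (p ^ N), ‖F cf S β‖ ^ (l * (l + 1)) * ‖F cf S' β‖ ^ e ≤
      K * (p : ℝ) ^ ((c1 - c) * (tri l - 1)) * ∑ ζ : ZMod (p ^ c1), ∑ β : Fin k → ZMod (p ^ N),
        ‖F cf (cls S ζ) β‖ ^ (l * (l + 1)) * ‖F cf S' β‖ ^ e := by
  let Y : ℤ → ℤ := fun x => (x - x0) / p ^ c
  have hY : ∀ x ∈ S, x - x0 = p ^ c * Y x := fun x hx => (Int.mul_ediv_cancel' (hS x hx)).symm
  have hsolve : ∀ h : Fin l → ZMod (p ^ (l * (c1 - c))), ∃ g : Fin l → ℤ, ∀ j : Fin l,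
      (p ^ (l * c1) : ℤ) ∣ ∑ i : Fin l, (Nat.choose (k - l + 1 + i) (j + 1) : ℤ) *
        (x0 - η) ^ (k - l + 1 + i.val - (j.val + 1)) * g i -
          ((h j).val : ℤ) * p ^ (c * (l - (j.val + 1))) := fun h =>
    taylor_solve hlk hkp (x0 - η) hne (l * c1) _
  choose g hg using hsolve
  have hsub : l * c1 - l * (c1 - c) = c * l := by
    rw [← Nat.mul_sub, Nat.sub_sub_self hcc, mul_comm]
  let Q : (Fin l → ZMod (p ^ (l * (c1 - c)))) → Polynomial ℤ := fun h =>
    ∑ i : Fin l, Polynomial.C (g h i) * (Polynomial.X - Polynomial.C η) ^ (k - l + 1 + i.val)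
  have hQd : ∀ h, (Q h).natDegree ≤ k := fun h =>
    Polynomial.natDegree_sum_le_of_forall_le _ _ fun i _ =>
      (Polynomial.natDegree_C_mul_le _ _).trans
        (Polynomial.natDegree_pow_le.trans (by
          rw [Polynomial.natDegree_X_sub_C]; have := i.isLt; omega))
  have hQe : ∀ h x, (Q h).eval x = ∑ i : Fin l, g h i * (x - η) ^ (k - l + 1 + i.val) := by
    intro h x
    simp [Q, Polynomial.eval_finsetSum]
  -- Taylor expansion of `Q h` around `x0`
  have hQt : ∀ h x, (Q h).eval x = ∑ s ∈ Finset.range (k + 1),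
      (∑ i : Fin l, (Nat.choose (k - l + 1 + i) s : ℤ) *
        (x0 - η) ^ (k - l + 1 + i.val - s) * g h i) * (x - x0) ^ s := by
    intro h x
    rw [hQe]
    simp_rw [Finset.sum_mul]
    rw [Finset.sum_comm]
    refine Finset.sum_congr rfl fun i _ => ?_
    have hi : k - l + 1 + i.val ≤ k := by have := i.isLt; omega
    rw [show x - η = (x - x0) + (x0 - η) by ring, add_pow, Finset.mul_sum]
    have : ∀ s ∈ Finset.range (k + 1), s ∉ Finset.range (k - l + 1 + i.val + 1) →
        (Nat.choose (k - l + 1 + i) s : ℤ) * (x0 - η) ^ (k - l + 1 + i.val - s) * g h i *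
          (x - x0) ^ s = 0 := by
      intro s _ hs
      rw [Nat.choose_eq_zero_of_lt (by simpa using hs)]
      simp
    rw [← Finset.sum_subset (Finset.range_subset_range.2 (by omega)) this]
    refine Finset.sum_congr rfl fun s _ => ?_
    ring
  have hdv : ∀ u a b c d : ℤ, u ∣ a - d → u ∣ c → u ∣ a + b + c - b - d := by
    intro u a b c d h h'
    have := dvd_add h h'
    rwa [show a + b + c - b - d = a - d + c by ring]
  have key := core (k := k) (N := N) (m := l * c1) hD h3
    (Nat.mul_le_mul_left l (Nat.sub_le c1 c)) Q hQd S Y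
    (fun h => ⟨∑ i : Fin l, (Nat.choose (k - l + 1 + i) 0 : ℤ) *
        (x0 - η) ^ (k - l + 1 + i.val - 0) * g h i, fun x hx => by
      rw [hsub, hQt, ← Nat.sub_add_cancel (show l ≤ k from hlk), add_assoc, add_comm (k - l),
        Finset.sum_range_add, Nat.sub_add_cancel hlk, Finset.sum_range_succ', pow_zero, mul_one,
        Finset.sum_range]
      have t2 : (p ^ (l * c1) : ℤ) ∣ ∑ s ∈ Finset.range (k - l),
          (∑ i : Fin l, (Nat.choose (k - l + 1 + i) (l + 1 + s) : ℤ) *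
            (x0 - η) ^ (k - l + 1 + i.val - (l + 1 + s)) * g h i) * (x - x0) ^ (l + 1 + s) := by
        refine Finset.dvd_sum fun s _ => Dvd.dvd.mul_left ?_ _
        rw [hY x hx, mul_pow, ← pow_mul]
        refine Dvd.dvd.mul_right (pow_dvd_pow _ ?_) _
        nlinarith
      have t1 : (p ^ (l * c1) : ℤ) ∣ ∑ j : Fin l,
          ((∑ i : Fin l, (Nat.choose (k - l + 1 + i) (j + 1) : ℤ) *
            (x0 - η) ^ (k - l + 1 + i.val - (j.val + 1)) * g h i) -
          ((h j).val : ℤ) * p ^ (c * (l - (j.val + 1)))) * (x - x0) ^ (j.val + 1) :=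
        Finset.dvd_sum fun j _ => Dvd.dvd.mul_right (hg h j) _
      have t3 : ∑ j : Fin l, ((h j).val : ℤ) * p ^ (c * (l - (j.val + 1))) *
          (x - x0) ^ (j.val + 1) = p ^ (c * l) * ∑ j, ((h j).val : ℤ) * (Y x) ^ (j.val + 1) := by
        rw [Finset.mul_sum]
        refine Finset.sum_congr rfl fun j _ => ?_
        rw [hY x hx, mul_pow, ← pow_mul]
        have e2 : c * l = c * (l - (j.val + 1)) + c * (j.val + 1) := by
          rw [← mul_add, Nat.sub_add_cancel j.isLt]
        rw [e2, pow_add]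
        ring
      rw [← t3]
      rw [Finset.sum_congr rfl (fun j _ => Int.sub_mul _ _ _), Finset.sum_sub_distrib] at t1
      exact hdv _ _ _ _ _ t1 t2⟩)
    (fun β => ‖F cf S' β‖ ^ e) (fun _ => by positivity)
    (fun h β => by
      rw [norm_F_add_sh h3 (Q h) (hQd h) S' (fun y hy => ?_)]
      rw [hQe]
      refine Finset.dvd_sum fun i _ => Dvd.dvd.mul_left ?_ _
      obtain ⟨z, hz⟩ := hS' y hy
      rw [hz, mul_pow, ← pow_mul]
      refine Dvd.dvd.mul_right (pow_dvd_pow _ ?_) _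
      nlinarith) cf
  refine key.trans ?_
  refine mul_le_mul_of_nonneg_left ?_ (by positivity)
  exact sum_filter_le_sum_cls hcc x0 S Y (fun x hx => by rw [← hY x hx]; ring)
    (fun T => ∑ β : Fin k → ZMod (p ^ N), ‖F cf T β‖ ^ (l * (l + 1)) * ‖F cf S' β‖ ^ e)
    (fun T => by positivity)

end VMVT

/-! ### Mixed moments -/

namespace VMVT

variable {p : ℕ} [hp : Fact p.Prime]

variable (p) in
/-- The set `S` lies in a single residue class modulo `p^a`. -/
def InCls (a : ℕ) (S : Finset ℤ) : Prop := ∀ x ∈ S, ∀ y ∈ S, (p ^ a : ℤ) ∣ x - y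

variable (p) in
/-- No element of `S` is congruent to an element of `S'` modulo `p`. -/
def Sep (S S' : Finset ℤ) : Prop := ∀ x ∈ S, ∀ y ∈ S', ¬ (p : ℤ) ∣ x - y

lemma cls_subset {N : ℕ} (S : Finset ℤ) (ζ : ZMod N) : cls S ζ ⊆ S := Finset.filter_subset _ _

lemma InCls.subset {a : ℕ} {S T : Finset ℤ} (h : InCls p a S) (hT : T ⊆ S) : InCls p a T :=
  fun x hx y hy => h x (hT hx) y (hT hy)

lemma InCls.mono {a b : ℕ} {S : Finset ℤ} (h : InCls p a S) (hb : b ≤ a) : InCls p b S :=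
  fun x hx y hy => (pow_dvd_pow _ hb).trans (h x hx y hy)

lemma Sep.subset {S S' T T' : Finset ℤ} (h : Sep p S S') (hT : T ⊆ S) (hT' : T' ⊆ S') :
    Sep p T T' :=
  fun x hx y hy => h x (hT hx) y (hT' hy)

lemma Sep.symm {S S' : Finset ℤ} (h : Sep p S S') : Sep p S' S :=
  fun x hx y hy hd => h y hy x hx (by rw [← neg_sub]; exact hd.neg_right)

lemma inCls_cls (a : ℕ) (S : Finset ℤ) (ζ : ZMod (p ^ a)) : InCls p a (cls S ζ) := by
  intro x hx y hy
  rw [mem_cls] at hx hy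
  have := (ZMod.intCast_eq_intCast_iff_dvd_sub y x (p ^ a)).1 (hy.2.trans hx.2.symm)
  exact_mod_cast this

lemma sum_cls_cls {c a : ℕ} (hca : c ≤ a) (S : Finset ℤ) (Φ : Finset ℤ → ℝ) (h0 : Φ ∅ = 0) :
    ∑ ζ : ZMod (p ^ c), ∑ ζ' : ZMod (p ^ a), Φ (cls (cls S ζ) ζ') =
      ∑ ζ' : ZMod (p ^ a), Φ (cls S ζ') := by
  rw [Finset.sum_comm]
  refine Finset.sum_congr rfl fun ζ' _ => ?_
  have hx : ∀ x ∈ cls S ζ', (x : ZMod (p ^ c)) = ((ζ'.val : ℤ) : ZMod (p ^ c)) := by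
    intro x hx
    rw [mem_cls] at hx
    have h1 : (x : ZMod (p ^ a)) = ((ζ'.val : ℤ) : ZMod (p ^ a)) := by
      rw [hx.2]; simp
    rw [ZMod.intCast_eq_intCast_iff_dvd_sub] at h1 ⊢
    exact (by exact_mod_cast pow_dvd_pow p hca : ((p ^ c : ℕ) : ℤ) ∣ ((p ^ a : ℕ) : ℤ)).trans h1
  rw [Finset.sum_eq_single (((ζ'.val : ℤ) : ZMod (p ^ c)))]
  · congr 1
    ext x
    simp only [mem_cls]
    constructor
    · exact fun h => ⟨h.1.1, h.2⟩
    · exact fun h => ⟨⟨h.1, hx x (mem_cls.2 h)⟩, h.2⟩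
  · intro ζ _ hne
    rw [← h0]
    congr 1
    rw [Finset.eq_empty_iff_forall_notMem]
    intro x hxx
    simp only [mem_cls] at hxx
    exact hne (hxx.1.2.symm.trans (hx x (mem_cls.2 ⟨hxx.1.1, hxx.2⟩)))
  · simp

variable (p) in
/-- The mixed moment `∑_β |F_S|^{e₁} |F_{S'}|^{e₂}`. -/
noncomputable def mix (k N : ℕ) (cf : ℤ → ℂ) (e₁ e₂ : ℕ) (S S' : Finset ℤ) : ℝ :=
  ∑ β : Fin k → ZMod (p ^ N), ‖F cf S β‖ ^ e₁ * ‖F cf S' β‖ ^ e₂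

lemma mix_nonneg (k N : ℕ) (cf : ℤ → ℂ) (e₁ e₂ : ℕ) (S S' : Finset ℤ) :
    0 ≤ mix p k N cf e₁ e₂ S S' := by
  unfold mix; positivity

lemma F_empty {k N : ℕ} [NeZero N] (c : ℤ → ℂ) (β : Fin k → ZMod N) : F c ∅ β = 0 := by simp [F]

lemma mix_empty (k N : ℕ) (cf : ℤ → ℂ) {e₁ : ℕ} (he : e₁ ≠ 0) (e₂ : ℕ) (S' : Finset ℤ) :
    mix p k N cf e₁ e₂ ∅ S' = 0 := by
  simp [mix, F_empty, he]

lemma mix_comm (k N : ℕ) (cf : ℤ → ℂ) (e₁ e₂ : ℕ) (S S' : Finset ℤ) :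
    mix p k N cf e₁ e₂ S S' = mix p k N cf e₂ e₁ S' S := by
  unfold mix
  exact Finset.sum_congr rfl fun β _ => mul_comm _ _

/-- The trivial decoupling into classes modulo `p^c`. -/
lemma mix_triv (k N c : ℕ) (cf : ℤ → ℂ) {e₁ : ℕ} (he : 1 ≤ e₁) (e₂ : ℕ) (S S' : Finset ℤ) :
    mix p k N cf e₁ e₂ S S' ≤
      (p : ℝ) ^ (c * (e₁ - 1)) * ∑ ζ : ZMod (p ^ c), mix p k N cf e₁ e₂ (cls S ζ) S' := by
  unfold mix
  rw [Finset.sum_comm, Finset.mul_sum]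
  refine Finset.sum_le_sum fun β _ => ?_
  rw [← Finset.sum_mul, ← mul_assoc]
  gcongr
  rw [F_eq_sum_cls (M := p ^ c)]
  refine (norm_sum_pow_le _ _ he).trans (le_of_eq ?_)
  rw [Finset.card_univ, ZMod.card, pow_mul]
  push_cast
  rfl

lemma mix_low_step {k l b c c1 N : ℕ} {K : ℝ} (hK : 0 ≤ K) (hl : 1 ≤ l) (hlk : l ≤ k)
    (hkp : k < p) (hcc : c ≤ c1) (h1 : l * c1 ≤ (l + 1) * c) (h2 : l * c1 ≤ (k - l + 1) * b)
    (h3 : l * c1 ≤ N) (hD : Dec p l (c1 - c) K) {S S' : Finset ℤ} (hS : InCls p c S)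
    (hS' : InCls p b S') (hne : Sep p S S') (cf : ℤ → ℂ) (e : ℕ) :
    mix p k N cf (l * (l + 1)) e S S' ≤ K * (p : ℝ) ^ ((c1 - c) * (tri l - 1)) *
      ∑ ζ : ZMod (p ^ c1), mix p k N cf (l * (l + 1)) e (cls S ζ) S' := by
  rcases S.eq_empty_or_nonempty with rfl | ⟨x0, hx0⟩
  · rw [mix_empty _ _ _ (by positivity)]
    exact mul_nonneg (by positivity) (Finset.sum_nonneg fun _ _ => mix_nonneg _ _ _ _ _ _ _)
  · obtain ⟨η, hη, hη'⟩ : ∃ η, (∀ x ∈ S', (p ^ b : ℤ) ∣ x - η) ∧ ¬ (p : ℤ) ∣ x0 - η := by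
      rcases S'.eq_empty_or_nonempty with rfl | ⟨η, hη⟩
      · refine ⟨x0 - 1, by simp, ?_⟩
        rw [sub_sub_cancel]
        exact fun h => hp.out.one_lt.ne' (by exact_mod_cast Int.eq_one_of_dvd_one (by positivity) h)
      · exact ⟨η, fun x hx => hS' x hx η hη, hne x0 hx0 η hη⟩
    exact low_step hK hlk hkp hcc h1 h2 h3 hD S S' x0 η (fun x hx => hS x hx x0 hx0) hη hη' cf e

variable (p) in
/-- Decoupling holds for degree `k` with constant `O(p^{ηn})`. -/
def Expo (k : ℕ) (η : ℝ) : Prop :=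
  ∃ C : ℝ, 1 ≤ C ∧ ∀ n : ℕ, Dec p k n (C * (p : ℝ) ^ (η * n))

lemma one_le_p : (1 : ℝ) ≤ p := by exact_mod_cast hp.out.one_lt.le
lemma one_lt_p : (1 : ℝ) < p := by exact_mod_cast hp.out.one_lt
lemma p_pos : (0 : ℝ) < p := zero_lt_one.trans one_lt_p

/-- Refinement of a splitting into classes modulo `p^c` to one modulo `p^A`. -/
lemma mix_refine {k N c A e₁ e₂ : ℕ} (he : e₁ ≠ 0) (hcA : c ≤ A) {cf : ℤ → ℂ} {S S' : Finset ℤ}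
    {K₁ K₂ : ℝ} (hK₁ : 0 ≤ K₁)
    (h1 : mix p k N cf e₁ e₂ S S' ≤ K₁ * ∑ ζ : ZMod (p ^ c), mix p k N cf e₁ e₂ (cls S ζ) S')
    (h2 : ∀ ζ : ZMod (p ^ c), mix p k N cf e₁ e₂ (cls S ζ) S' ≤
      K₂ * ∑ ζ' : ZMod (p ^ A), mix p k N cf e₁ e₂ (cls (cls S ζ) ζ') S') :
    mix p k N cf e₁ e₂ S S' ≤
      K₁ * K₂ * ∑ ζ' : ZMod (p ^ A), mix p k N cf e₁ e₂ (cls S ζ') S' := by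
  have h3 := Finset.sum_le_sum fun ζ (_ : ζ ∈ Finset.univ) => h2 ζ
  rw [← Finset.mul_sum, sum_cls_cls hcA S (fun T => mix p k N cf e₁ e₂ T S')
    (mix_empty _ _ _ he _ _)] at h3
  rw [mul_assoc]
  exact h1.trans (mul_le_mul_of_nonneg_left h3 hK₁)

/-- Lower-dimensional decoupling of `S` from a class modulo `p^a` into classes modulo `p^A`,
in the presence of a separated `S'` in a class modulo `p^b`. -/
lemma low {k l : ℕ} (hl : 1 ≤ l) (hlk : l ≤ k) (hkp : k < p) (hE : ∀ ε : ℝ, 0 < ε → Expo p l ε)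
    (ε : ℝ) (hε : 0 < ε) :
    ∃ C : ℝ, 1 ≤ C ∧ ∀ (a A b N : ℕ), a ≤ A → l * A ≤ (k - l + 1) * b → l * A ≤ N →
      ∀ (S S' : Finset ℤ), InCls p a S → InCls p b S' → Sep p S S' → ∀ (cf : ℤ → ℂ) (e : ℕ),
      mix p k N cf (l * (l + 1)) e S S' ≤
        C * (p : ℝ) ^ (ε * A) * (p : ℝ) ^ ((A - a) * (tri l - 1)) *
          ∑ ζ : ZMod (p ^ A), mix p k N cf (l * (l + 1)) e (cls S ζ) S' := by
  have he0 : l * (l + 1) ≠ 0 := by positivity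
  obtain ⟨C0, hC0, hD⟩ := hE (ε / 2) (by linarith)
  obtain ⟨t0, ht0⟩ : ∃ t0 : ℕ, C0 ≤ (p : ℝ) ^ (ε / 2 * t0) := by
    obtain ⟨t0, ht0⟩ := pow_unbounded_of_one_lt C0 (Real.one_lt_rpow (one_lt_p (p := p)) (half_pos hε))
    exact ⟨t0, by rw [Real.rpow_mul p_pos.le, Real.rpow_natCast]; exact ht0.le⟩
  have hD' : ∀ t : ℕ, t0 ≤ t → Dec p l t ((p : ℝ) ^ (ε * t)) := by
    intro t ht
    refine (hD t).mono ?_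
    have e1 : (p : ℝ) ^ (ε * t) = (p : ℝ) ^ (ε / 2 * t) * (p : ℝ) ^ (ε / 2 * t) := by
      rw [← Real.rpow_add p_pos]; ring_nf
    rw [e1]
    gcongr
    refine ht0.trans (Real.rpow_le_rpow_of_exponent_le one_le_p ?_)
    gcongr
  set c0 := l * (t0 + 1) with hc0
  have main : ∀ (d c A b N : ℕ), A - c = d → c0 ≤ c → c ≤ A → l * A ≤ (k - l + 1) * b → l * A ≤ N →
      ∀ (S S' : Finset ℤ), InCls p c S → InCls p b S' → Sep p S S' → ∀ (cf : ℤ → ℂ) (e : ℕ),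
      mix p k N cf (l * (l + 1)) e S S' ≤
        C0 * (p : ℝ) ^ (ε * (A - c : ℕ)) * (p : ℝ) ^ ((A - c) * (tri l - 1)) *
          ∑ ζ : ZMod (p ^ A), mix p k N cf (l * (l + 1)) e (cls S ζ) S' := by
    intro d
    induction d using Nat.strong_induction_on with
    | _ d ih =>
    intro c A b N hd hc hcA hAb hAN S S' hS hS' hsep cf e
    by_cases hlast : l * A ≤ (l + 1) * c
    · refine (mix_low_step (by positivity) hl hlk hkp hcA hlast hAb hAN (hD (A - c)) hS hS' hsep
        cf e).trans ?_
      have := Finset.sum_nonneg fun (ζ : ZMod (p ^ A)) (_ : ζ ∈ Finset.univ) =>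
        mix_nonneg (p := p) k N cf (l * (l + 1)) e (cls S ζ) S'
      gcongr
      · exact one_le_p
      · linarith
    · push Not at hlast
      have hq : l * (c / l) ≤ c := Nat.mul_div_le c l
      have hq1 : t0 + 1 ≤ c / l := by
        rw [Nat.le_div_iff_mul_le hl, mul_comm]; exact hc
      set c1 := c + c / l with hc1
      have hl1 : l * c1 ≤ (l + 1) * c := by rw [hc1, mul_add]; nlinarith
      have hc1A : c1 < A := by
        by_contra hcon
        push Not at hcon
        have := Nat.mul_le_mul_left l hcon
        omega
      have hlA : l * c1 ≤ l * A := Nat.mul_le_mul_left l hc1A.le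
      have s1 := mix_low_step (K := (p : ℝ) ^ (ε * (c1 - c : ℕ))) (by positivity) hl hlk hkp
        (by omega : c ≤ c1) hl1 (hlA.trans hAb) (hlA.trans hAN) (hD' (c1 - c) (by omega)) hS hS'
        hsep cf e
      have s2 := mix_refine he0 hc1A.le (by positivity) s1 (fun ζ =>
        ih (A - c1) (by omega) c1 A b N rfl (by omega) hc1A.le hAb hAN (cls S ζ) S'
          (inCls_cls _ _ _) hS' (hsep.subset (cls_subset _ _) subset_rfl) cf e)
      refine s2.trans (le_of_eq ?_)
      congr 1
      have e1 : A - c = (c1 - c) + (A - c1) := by omega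
      rw [e1, add_mul, pow_add]
      push_cast
      rw [mul_add, Real.rpow_add p_pos]
      ring
  refine ⟨C0 * (p : ℝ) ^ (c0 * (l * (l + 1) - 1)), ?_, ?_⟩
  · exact one_le_mul_of_one_le_of_one_le hC0 (one_le_pow₀ one_le_p)
  intro a A b N haA hAb hAN S S' hS hS' hsep cf e
  have hnn := Finset.sum_nonneg fun (ζ : ZMod (p ^ A)) (_ : ζ ∈ Finset.univ) =>
        mix_nonneg (p := p) k N cf (l * (l + 1)) e (cls S ζ) S'
  have hpE : (1 : ℝ) ≤ (p : ℝ) ^ (c0 * (l * (l + 1) - 1)) := one_le_pow₀ one_le_p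
  by_cases hca : c0 ≤ a
  · refine (main _ a A b N rfl hca haA hAb hAN S S' hS hS' hsep cf e).trans ?_
    refine mul_le_mul_of_nonneg_right (mul_le_mul_of_nonneg_right ?_ (by positivity)) hnn
    refine mul_le_mul ?_ (Real.rpow_le_rpow_of_exponent_le one_le_p ?_) (by positivity)
      (by positivity)
    · exact le_mul_of_one_le_right (by linarith) hpE
    · gcongr; omega
  push Not at hca
  by_cases hcA : A ≤ c0
  · refine (mix_triv k N A cf (by omega) e S S').trans ?_
    refine mul_le_mul_of_nonneg_right ?_ hnn
    have a1 : (1 : ℝ) ≤ (p : ℝ) ^ ((A - a) * (tri l - 1)) := one_le_pow₀ one_le_p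
    have a2 : (1 : ℝ) ≤ (p : ℝ) ^ (ε * A) := Real.one_le_rpow one_le_p (by positivity)
    have a3 : (p : ℝ) ^ (A * (l * (l + 1) - 1)) ≤ (p : ℝ) ^ (c0 * (l * (l + 1) - 1)) :=
      pow_le_pow_right₀ one_le_p (Nat.mul_le_mul_right _ hcA)
    calc _ ≤ (p : ℝ) ^ (c0 * (l * (l + 1) - 1)) := a3
      _ ≤ C0 * (p : ℝ) ^ (c0 * (l * (l + 1) - 1)) := le_mul_of_one_le_left (by positivity) hC0
      _ ≤ C0 * (p : ℝ) ^ (c0 * (l * (l + 1) - 1)) * (p : ℝ) ^ (ε * A) :=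
        le_mul_of_one_le_right (by positivity) a2
      _ ≤ _ := le_mul_of_one_le_right (by positivity) a1
  · push Not at hcA
    have s2 := mix_refine he0 hcA.le (by positivity) (mix_triv k N c0 cf (by omega) e S S') (fun ζ =>
      main _ c0 A b N rfl le_rfl hcA.le hAb hAN (cls S ζ) S'
          (inCls_cls _ _ _) hS' (hsep.subset (cls_subset _ _) subset_rfl) cf e)
    refine s2.trans (mul_le_mul_of_nonneg_right ?_ hnn)
    have a1 : (p : ℝ) ^ ((A - c0) * (tri l - 1)) ≤ (p : ℝ) ^ ((A - a) * (tri l - 1)) :=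
      pow_le_pow_right₀ one_le_p (Nat.mul_le_mul_right _ (by omega))
    have a2 : (p : ℝ) ^ (ε * (A - c0 : ℕ)) ≤ (p : ℝ) ^ (ε * A) := by
      refine Real.rpow_le_rpow_of_exponent_le one_le_p ?_
      gcongr; omega
    calc _ = C0 * (p : ℝ) ^ (c0 * (l * (l + 1) - 1)) * (p : ℝ) ^ (ε * (A - c0 : ℕ)) *
        (p : ℝ) ^ ((A - c0) * (tri l - 1)) := by ring
      _ ≤ _ := by gcongr

end VMVT

/-! ### Bilinear decoupling estimates -/

namespace VMVT

variable {p : ℕ} [hp : Fact p.Prime]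

variable (p) in
/-- The fully decoupled side: `∑_ζ ∑_β |F_{S ∩ ζ}|^{k(k+1)}` over classes `ζ` modulo `p^n`. -/
noncomputable def V (k n : ℕ) (cf : ℤ → ℂ) (S : Finset ℤ) : ℝ :=
  ∑ ζ : ZMod (p ^ n), ∑ β : Fin k → ZMod (p ^ (k * n)), ‖F cf (cls S ζ) β‖ ^ (k * (k + 1))

lemma V_nonneg (k n : ℕ) (cf : ℤ → ℂ) (S : Finset ℤ) : 0 ≤ V p k n cf S := by
  unfold V; positivity

lemma V_empty {k : ℕ} (hk : 1 ≤ k) (n : ℕ) (cf : ℤ → ℂ) : V p k n cf ∅ = 0 := by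
  have : k * (k + 1) ≠ 0 := by positivity
  simp [V, cls, F_empty, this]

lemma V_add {k : ℕ} (hk : 1 ≤ k) {a n : ℕ} (han : a ≤ n) (cf : ℤ → ℂ) (S : Finset ℤ) :
    ∑ ζ : ZMod (p ^ a), V p k n cf (cls S ζ) = V p k n cf S := by
  have : k * (k + 1) ≠ 0 := by positivity
  exact sum_cls_cls han S
    (fun T => ∑ β : Fin k → ZMod (p ^ (k * n)), ‖F cf T β‖ ^ (k * (k + 1))) (by simp [F_empty, this])

/-- The ratio `l (l + 1) / (k (k + 1))`. -/
noncomputable def rat (k l : ℕ) : ℝ := (l * (l + 1) : ℝ) / (k * (k + 1))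

lemma rat_nonneg (k l : ℕ) : 0 ≤ rat k l := by unfold rat; positivity

lemma rat_le_one {k l : ℕ} (h : l ≤ k) : rat k l ≤ 1 := by
  unfold rat
  refine div_le_one_of_le₀ ?_ (by positivity)
  gcongr

lemma rat_pos {k l : ℕ} (hl : 1 ≤ l) (h : l ≤ k) : 0 < rat k l := by
  unfold rat
  have : 1 ≤ k := hl.trans h
  positivity

lemma rat_lt_one {k l : ℕ} (h : l < k) : rat k l < 1 := by
  unfold rat
  have h1 : (l : ℝ) + 1 ≤ k := by exact_mod_cast h
  have h0 : (0 : ℝ) ≤ l := by positivity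
  rw [div_lt_one (by nlinarith)]
  nlinarith

variable (p) in
/-- The decoupled side weighted by the loss expected for a class modulo `p^a`. -/
noncomputable def U (k n a : ℕ) (cf : ℤ → ℂ) (S : Finset ℤ) : ℝ :=
  (p : ℝ) ^ ((n - a) * (tri k - 1)) * V p k n cf S

lemma U_nonneg (k n a : ℕ) (cf : ℤ → ℂ) (S : Finset ℤ) : 0 ≤ U p k n a cf S :=
  mul_nonneg (by positivity) (V_nonneg _ _ _ _)

variable (p) in
/-- The asymmetric bilinear decoupling estimate, with constant `M`, for separated sets in classes
modulo `p^a` and `p^b`. -/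
def Bil (k n l a b : ℕ) (M : ℝ) : Prop :=
  ∀ (S S' : Finset ℤ) (cf : ℤ → ℂ), InCls p a S → InCls p b S' → Sep p S S' →
    mix p k (k * n) cf (l * (l + 1)) (k * (k + 1) - l * (l + 1)) S S' ≤
      M * (U p k n a cf S ^ rat k l * U p k n b cf S' ^ (1 - rat k l))

lemma Bil.mono {k n l a b : ℕ} {M M' : ℝ} (h : Bil p k n l a b M) (hM : M ≤ M') :
    Bil p k n l a b M' := by
  intro S S' cf h1 h2 h3
  refine (h S S' cf h1 h2 h3).trans (mul_le_mul_of_nonneg_right hM ?_)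
  exact mul_nonneg (Real.rpow_nonneg (U_nonneg _ _ _ _ _) _)
    (Real.rpow_nonneg (U_nonneg _ _ _ _ _) _)

lemma interp_pow {x : ℝ} (hx : 0 ≤ x) {a b c : ℕ} {θ : ℝ} (h0 : 0 ≤ θ) (h1 : θ ≤ 1)
    (h : θ * a + (1 - θ) * b = c) : (x ^ a) ^ θ * (x ^ b) ^ (1 - θ) = x ^ c := by
  rw [← Real.rpow_natCast, ← Real.rpow_natCast, ← Real.rpow_natCast, ← Real.rpow_mul hx,
    ← Real.rpow_mul hx, ← Real.rpow_add_of_nonneg hx (by positivity)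
      (mul_nonneg (by positivity) (by linarith)), ← h]
  ring_nf

/-- Rescaled decoupling for a set in a class modulo `p^a`. -/
lemma moment_le {k n a : ℕ} {K : ℝ} (hK : 0 ≤ K) (han : a ≤ n) (hD : Dec p k (n - a) K)
    {S : Finset ℤ} (hS : InCls p a S) (cf : ℤ → ℂ) :
    ∑ β : Fin k → ZMod (p ^ (k * n)), ‖F cf S β‖ ^ (k * (k + 1)) ≤ K * U p k n a cf S := by
  have : ∃ x0, ∀ x ∈ S, (p ^ a : ℤ) ∣ x - x0 := by
    rcases S.eq_empty_or_nonempty with rfl | ⟨x0, hx0⟩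
    · exact ⟨0, by simp⟩
    · exact ⟨x0, fun x hx => hS x hx x0 hx0⟩
  obtain ⟨x0, hx0⟩ := this
  rw [U, ← mul_assoc]
  exact hD.rescale hK han S x0 hx0 cf

lemma bil_zero {k n a b : ℕ} {K : ℝ} (hK : 0 ≤ K) (hbn : b ≤ n) (hD : Dec p k (n - b) K) :
    Bil p k n 0 a b K := by
  intro S S' cf _ hS' _
  have : rat k 0 = 0 := by simp [rat]
  rw [this, Real.rpow_zero, one_mul, sub_zero, Real.rpow_one]
  refine le_trans (le_of_eq ?_) (moment_le hK hbn hD hS' cf)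
  simp [mix]

/-- The bilinear estimate that follows from the linear one by Hölder's inequality, without gain.
-/
lemma bil_triv {k n l a b : ℕ} {K : ℝ} (hK : 0 ≤ K) (hl : 1 ≤ l) (hlk : l < k) (han : a ≤ n)
    (hbn : b ≤ n) (hDa : Dec p k (n - a) K) (hDb : Dec p k (n - b) K) : Bil p k n l a b K := by
  intro S S' cf hS hS' _
  have t0 := rat_pos hl hlk.le
  have t1 := rat_lt_one hlk
  have hle : l * (l + 1) ≤ k * (k + 1) := by gcongr
  have hk : (0 : ℝ) < k := by exact_mod_cast (by omega : 0 < k)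
  have h := holder_interp (Finset.univ : Finset (Fin k → ZMod (p ^ (k * n))))
    (f := fun β => ‖F cf S β‖ ^ (k * (k + 1))) (g := fun β => ‖F cf S' β‖ ^ (k * (k + 1)))
    (fun _ _ => by positivity) (fun _ _ => by positivity) t0 t1
  have e1 : ∀ β : Fin k → ZMod (p ^ (k * n)), (‖F cf S β‖ ^ (k * (k + 1))) ^ rat k l *
      (‖F cf S' β‖ ^ (k * (k + 1))) ^ (1 - rat k l) =
      ‖F cf S β‖ ^ (l * (l + 1)) * ‖F cf S' β‖ ^ (k * (k + 1) - l * (l + 1)) := by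
    intro β
    have a1 := interp_pow (norm_nonneg (F cf S β)) (a := k * (k + 1)) (b := 0) (c := l * (l + 1))
      t0.le t1.le (by push_cast; rw [rat]; field_simp; ring)
    have a2 := interp_pow (norm_nonneg (F cf S' β)) (a := 0) (b := k * (k + 1))
      (c := k * (k + 1) - l * (l + 1)) t0.le t1.le
      (by push_cast [Nat.cast_sub hle]; rw [rat]; field_simp; ring)
    simp only [pow_zero, Real.one_rpow, mul_one, one_mul] at a1 a2
    rw [a1, a2]
  simp only [e1] at h
  refine h.trans ?_
  have hUa := U_nonneg (p := p) k n a cf S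
  have hUb := U_nonneg (p := p) k n b cf S'
  have hs1 : 0 ≤ ∑ β : Fin k → ZMod (p ^ (k * n)), ‖F cf S β‖ ^ (k * (k + 1)) := by positivity
  have hs2 : 0 ≤ ∑ β : Fin k → ZMod (p ^ (k * n)), ‖F cf S' β‖ ^ (k * (k + 1)) := by positivity
  calc _ ≤ (K * U p k n a cf S) ^ rat k l * (K * U p k n b cf S') ^ (1 - rat k l) :=
        mul_le_mul (Real.rpow_le_rpow hs1 (moment_le hK han hDa hS cf) t0.le)
          (Real.rpow_le_rpow hs2 (moment_le hK hbn hDb hS' cf) (by linarith))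
          (Real.rpow_nonneg hs2 _) (Real.rpow_nonneg (mul_nonneg hK hUa) _)
    _ = (K ^ rat k l * K ^ (1 - rat k l)) *
        (U p k n a cf S ^ rat k l * U p k n b cf S' ^ (1 - rat k l)) := by
      rw [Real.mul_rpow hK hUa, Real.mul_rpow hK hUb]; ring
    _ = _ := by
      rw [← Real.rpow_add_of_nonneg hK t0.le (by linarith), add_sub_cancel, Real.rpow_one]

/-- A set in one class modulo `p^a` meets at most `p^{A-a}` classes modulo `p^A`. -/
lemma card_classes {a A : ℕ} (haA : a ≤ A) {S : Finset ℤ} (hS : InCls p a S) :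
    ((Finset.univ.filter fun ζ : ZMod (p ^ A) => (cls S ζ).Nonempty).card : ℝ) ≤
      (p : ℝ) ^ (A - a) := by
  rcases S.eq_empty_or_nonempty with rfl | ⟨x0, hx0⟩
  · simp [cls]
  classical
  have hsub : (Finset.univ.filter fun ζ : ZMod (p ^ A) => (cls S ζ).Nonempty) ⊆
      (Finset.univ : Finset (ZMod (p ^ (A - a)))).image
        (fun u => ((x0 + p ^ a * (u.val : ℤ) : ℤ) : ZMod (p ^ A))) := by
    intro ζ hζ
    simp only [Finset.mem_filter, Finset.mem_univ, true_and] at hζ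
    obtain ⟨x, hx⟩ := hζ
    rw [mem_cls] at hx
    obtain ⟨y, hy⟩ := hS x hx.1 x0 hx0
    rw [Finset.mem_image]
    refine ⟨(y : ZMod (p ^ (A - a))), Finset.mem_univ _, ?_⟩
    rw [← hx.2, ZMod.intCast_eq_intCast_iff_dvd_sub]
    have h1 : ((p ^ (A - a) : ℕ) : ℤ) ∣ y - (((y : ZMod (p ^ (A - a))).val : ℕ) : ℤ) := by
      rw [← ZMod.intCast_eq_intCast_iff_dvd_sub]
      simp
    have h2 : ((p ^ A : ℕ) : ℤ) = (p : ℤ) ^ a * ((p ^ (A - a) : ℕ) : ℤ) := by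
      push_cast
      rw [← pow_add, Nat.add_sub_cancel' haA]
    have h3 : x - (x0 + p ^ a * (((y : ZMod (p ^ (A - a))).val : ℕ) : ℤ)) =
        p ^ a * (y - (((y : ZMod (p ^ (A - a))).val : ℕ) : ℤ)) := by
      linear_combination hy
    rw [h2, h3]
    exact mul_dvd_mul_left _ h1
  have h := (Finset.card_le_card hsub).trans Finset.card_image_le
  rw [Finset.card_univ, ZMod.card] at h
  exact_mod_cast h

/-- Passing from classes modulo `p^A` to a class modulo `p^a` by lower-dimensional decoupling: all
powers of `p` other than the constant `K` cancel. -/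
lemma bil_lower {k n l a A b : ℕ} {M K : ℝ} (hM : 0 ≤ M) (hK : 0 ≤ K) (hl : 1 ≤ l) (hlk : l < k)
    (haA : a ≤ A) (hAn : A ≤ n) (hB : Bil p k n l A b M)
    (hlow : ∀ (S S' : Finset ℤ), InCls p a S → InCls p b S' → Sep p S S' → ∀ (cf : ℤ → ℂ) (e : ℕ),
      mix p k (k * n) cf (l * (l + 1)) e S S' ≤ K * (p : ℝ) ^ ((A - a) * (tri l - 1)) *
          ∑ ζ : ZMod (p ^ A), mix p k (k * n) cf (l * (l + 1)) e (cls S ζ) S') :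
    Bil p k n l a b (K * M) := by
  intro S S' cf hS hS' hsep
  have t0 := rat_pos hl hlk.le
  have t1 := rat_lt_one hlk
  have hk : 1 ≤ k := by omega
  have hP : l * (l + 1) ≠ 0 := by positivity
  refine (hlow S S' hS hS' hsep cf _).trans ?_
  set W := U p k n b cf S' ^ (1 - rat k l) with hW
  have hW0 : 0 ≤ W := Real.rpow_nonneg (U_nonneg _ _ _ _ _) _
  have h1 : ∀ ζ : ZMod (p ^ A), mix p k (k * n) cf (l * (l + 1)) (k * (k + 1) - l * (l + 1))
      (cls S ζ) S' ≤ M * W * ((p : ℝ) ^ ((n - A) * (tri k - 1))) ^ rat k l *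
        (V p k n cf (cls S ζ) ^ rat k l *
          (if (cls S ζ).Nonempty then (1 : ℝ) else 0) ^ (1 - rat k l)) := by
    intro ζ
    split_ifs with hne
    · refine (hB (cls S ζ) S' cf (inCls_cls _ _ _) hS'
        (hsep.subset (cls_subset _ _) subset_rfl)).trans (le_of_eq ?_)
      rw [U, Real.mul_rpow (by positivity) (V_nonneg _ _ _ _), Real.one_rpow]
      ring
    · rw [Finset.not_nonempty_iff_eq_empty] at hne
      rw [hne, mix_empty _ _ _ hP, Real.zero_rpow (by linarith), mul_zero, mul_zero]
  have h2 := holder_interp (Finset.univ : Finset (ZMod (p ^ A)))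
    (f := fun ζ => V p k n cf (cls S ζ)) (g := fun ζ => if (cls S ζ).Nonempty then (1 : ℝ) else 0)
    (fun _ _ => V_nonneg _ _ _ _) (fun _ _ => by positivity) t0 t1
  rw [V_add hk hAn, Finset.sum_boole] at h2
  have h3 : (((Finset.univ.filter fun ζ : ZMod (p ^ A) => (cls S ζ).Nonempty).card : ℝ)) ^
      (1 - rat k l) ≤ ((p : ℝ) ^ (A - a)) ^ (1 - rat k l) :=
    Real.rpow_le_rpow (by positivity) (card_classes haA hS) (by linarith)
  have h4 := (Finset.sum_le_sum fun ζ (_ : ζ ∈ Finset.univ) => h1 ζ)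
  rw [← Finset.mul_sum] at h4
  have hV0 : 0 ≤ V p k n cf S ^ rat k l := Real.rpow_nonneg (V_nonneg _ _ _ _) _
  have hp0 : (0 : ℝ) < p := p_pos
  have h5 : (p : ℝ) ^ ((A - a) * (tri l - 1)) * (((p : ℝ) ^ ((n - A) * (tri k - 1))) ^ rat k l *
      ((p : ℝ) ^ (A - a)) ^ (1 - rat k l)) = ((p : ℝ) ^ ((n - a) * (tri k - 1))) ^ rat k l := by
    simp only [← Real.rpow_natCast]
    rw [← Real.rpow_mul hp0.le, ← Real.rpow_mul hp0.le, ← Real.rpow_mul hp0.le,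
      ← Real.rpow_add hp0, ← Real.rpow_add hp0]
    congr 1
    have c1 := tri_pos hl
    have c2 := tri_pos hk
    push_cast [Nat.cast_sub c1, Nat.cast_sub c2, Nat.cast_sub haA, Nat.cast_sub hAn,
      Nat.cast_sub (haA.trans hAn)]
    have c3 : (tri l : ℝ) = rat k l * tri k := by
      rw [tri_real, tri_real, rat]
      have : (0 : ℝ) < k := by exact_mod_cast hk
      field_simp
    rw [c3]
    ring
  calc K * (p : ℝ) ^ ((A - a) * (tri l - 1)) * ∑ ζ : ZMod (p ^ A),
        mix p k (k * n) cf (l * (l + 1)) (k * (k + 1) - l * (l + 1)) (cls S ζ) S'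
      ≤ K * (p : ℝ) ^ ((A - a) * (tri l - 1)) *
        (M * W * ((p : ℝ) ^ ((n - A) * (tri k - 1))) ^ rat k l *
          (V p k n cf S ^ rat k l * ((p : ℝ) ^ (A - a)) ^ (1 - rat k l))) := by
        refine mul_le_mul_of_nonneg_left (h4.trans ?_) (by positivity)
        refine mul_le_mul_of_nonneg_left (h2.trans ?_) (by positivity)
        exact mul_le_mul_of_nonneg_left h3 hV0
    _ = K * M * (((p : ℝ) ^ ((A - a) * (tri l - 1)) * (((p : ℝ) ^ ((n - A) * (tri k - 1))) ^
          rat k l * ((p : ℝ) ^ (A - a)) ^ (1 - rat k l))) * V p k n cf S ^ rat k l * W) := by ring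
    _ = _ := by
        rw [h5, ← Real.mul_rpow (by positivity) (V_nonneg _ _ _ _)]; rfl

/-- Hölder's inequality between the two neighbouring bilinear quantities. -/
lemma bil_holder {k n l a b : ℕ} {M₁ M₂ : ℝ} (hM₁ : 0 ≤ M₁) (hM₂ : 0 ≤ M₂) (hl : 1 ≤ l)
    (hlk : l < k) (h1 : Bil p k n (k - l) b a M₁) (h2 : Bil p k n (l - 1) a b M₂) :
    Bil p k n l a b (M₁ ^ (1 / (k - l + 1 : ℝ)) * M₂ ^ (1 - 1 / (k - l + 1 : ℝ))) := by
  intro S S' cf hS hS' hsep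
  have g1 := h1 S' S cf hS' hS hsep.symm
  have g2 := h2 S S' cf hS hS' hsep
  rw [mix_comm] at g1
  set θ : ℝ := 1 / (k - l + 1 : ℝ) with hθ
  have hkl : (l : ℝ) + 1 ≤ k := by exact_mod_cast hlk
  have hθ0 : 0 < θ := by rw [hθ]; apply div_pos one_pos; linarith
  have hθ1 : θ < 1 := by rw [hθ, div_lt_one (by linarith)]; linarith
  obtain ⟨m, hm, rfl⟩ : ∃ m, 1 ≤ m ∧ k = m + l := ⟨k - l, by omega, by omega⟩
  obtain ⟨j, rfl⟩ : ∃ j, l = j + 1 := ⟨l - 1, by omega⟩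
  rw [Nat.add_sub_cancel] at g1 g2
  have hθm : θ * (m + 1) = 1 := by
    rw [hθ]; push_cast; rw [add_sub_cancel_right]; field_simp
  clear_value θ
  set k := m + (j + 1) with hk
  have hkr : (k : ℝ) = m + (j + 1) := by rw [hk]; push_cast; ring
  have hs1 : m * (m + 1) ≤ k * (k + 1) := by gcongr <;> omega
  have hs2 : j * (j + 1) ≤ k * (k + 1) := by gcongr <;> omega
  have hs3 : (j + 1) * (j + 1 + 1) ≤ k * (k + 1) := by gcongr
  have E1 : θ * ((k * (k + 1) - m * (m + 1) : ℕ) : ℝ) + (1 - θ) * ((j * (j + 1) : ℕ) : ℝ) =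
      (((j + 1) * (j + 1 + 1) : ℕ) : ℝ) := by
    push_cast [Nat.cast_sub hs1]
    rw [hkr]
    linear_combination 2 * ((j : ℝ) + 1) * hθm
  have E2 : θ * ((m * (m + 1) : ℕ) : ℝ) + (1 - θ) * ((k * (k + 1) - j * (j + 1) : ℕ) : ℝ) =
      ((k * (k + 1) - (j + 1) * (j + 1 + 1) : ℕ) : ℝ) := by
    push_cast [Nat.cast_sub hs1] at E1
    push_cast [Nat.cast_sub hs2, Nat.cast_sub hs3] at E1 ⊢
    linear_combination -E1
  have hol := holder_interp (Finset.univ : Finset (Fin k → ZMod (p ^ (k * n))))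
    (f := fun β => ‖F cf S β‖ ^ (k * (k + 1) - m * (m + 1)) * ‖F cf S' β‖ ^ (m * (m + 1)))
    (g := fun β => ‖F cf S β‖ ^ (j * (j + 1)) * ‖F cf S' β‖ ^ (k * (k + 1) - j * (j + 1)))
    (fun _ _ => by positivity) (fun _ _ => by positivity) hθ0 hθ1
  have e1 : ∀ β : Fin k → ZMod (p ^ (k * n)),
      (‖F cf S β‖ ^ (k * (k + 1) - m * (m + 1)) * ‖F cf S' β‖ ^ (m * (m + 1))) ^ θ *
      (‖F cf S β‖ ^ (j * (j + 1)) * ‖F cf S' β‖ ^ (k * (k + 1) - j * (j + 1))) ^ (1 - θ) =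
      ‖F cf S β‖ ^ ((j + 1) * (j + 1 + 1)) *
        ‖F cf S' β‖ ^ (k * (k + 1) - (j + 1) * (j + 1 + 1)) := by
    intro β
    rw [Real.mul_rpow (by positivity) (by positivity),
      Real.mul_rpow (by positivity) (by positivity),
      ← interp_pow (norm_nonneg (F cf S β)) hθ0.le hθ1.le E1,
      ← interp_pow (norm_nonneg (F cf S' β)) hθ0.le hθ1.le E2]
    ring
  simp only [e1] at hol
  have hol' : mix p k (k * n) cf ((j + 1) * (j + 1 + 1)) (k * (k + 1) - (j + 1) * (j + 1 + 1)) S S' ≤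
    mix p k (k * n) cf (k * (k + 1) - m * (m + 1)) (m * (m + 1)) S S' ^ θ *
    mix p k (k * n) cf (j * (j + 1)) (k * (k + 1) - j * (j + 1)) S S' ^ (1 - θ) := hol
  refine hol'.trans ?_
  set x := U p k n a cf S with hx
  set y := U p k n b cf S' with hy
  have hx0 : 0 ≤ x := U_nonneg _ _ _ _ _
  have hy0 : 0 ≤ y := U_nonneg _ _ _ _ _
  have q1 := rat_nonneg k m
  have q2 := rat_le_one (k := k) (l := m) (by omega)
  have q3 := rat_nonneg k j
  have q4 := rat_le_one (k := k) (l := j) (by omega)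
  have q5 : 0 ≤ 1 - rat k m := by linarith
  have q6 : 0 ≤ 1 - rat k j := by linarith
  have q7 : 0 ≤ 1 - θ := by linarith
  have hkpos : (0 : ℝ) < k := by rw [hkr]; positivity
  have R1 : (1 - rat k m) * θ + rat k j * (1 - θ) = rat k (j + 1) := by
    push_cast [Nat.cast_sub hs1] at E1
    unfold rat
    push_cast
    field_simp
    linear_combination E1
  have R2 : rat k m * θ + (1 - rat k j) * (1 - θ) = 1 - rat k (j + 1) := by
    linear_combination -R1
  calc _ ≤ (M₁ * (y ^ rat k m * x ^ (1 - rat k m))) ^ θ *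
        (M₂ * (x ^ rat k j * y ^ (1 - rat k j))) ^ (1 - θ) :=
        mul_le_mul (Real.rpow_le_rpow (mix_nonneg _ _ _ _ _ _ _) g1 hθ0.le)
          (Real.rpow_le_rpow (mix_nonneg _ _ _ _ _ _ _) g2 q7)
          (Real.rpow_nonneg (mix_nonneg _ _ _ _ _ _ _) _) (by positivity)
    _ = M₁ ^ θ * M₂ ^ (1 - θ) * ((x ^ ((1 - rat k m) * θ) * x ^ (rat k j * (1 - θ))) *
        (y ^ (rat k m * θ) * y ^ ((1 - rat k j) * (1 - θ)))) := by
      rw [Real.mul_rpow hM₁ (by positivity), Real.mul_rpow hM₂ (by positivity),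
        Real.mul_rpow (by positivity) (by positivity),
        Real.mul_rpow (by positivity) (by positivity),
        Real.rpow_mul hx0, Real.rpow_mul hx0, Real.rpow_mul hy0, Real.rpow_mul hy0]
      ring
    _ = _ := by
      rw [← Real.rpow_add_of_nonneg hx0 (by positivity) (by positivity),
        ← Real.rpow_add_of_nonneg hy0 (by positivity) (by positivity), R1, R2]

/-- A crude splitting of the second set, from one class modulo `p` to classes modulo `p^b`. -/
lemma bil_split {k n l a b : ℕ} {M : ℝ} (hM : 0 ≤ M) (hlk : l < k) (hb : 1 ≤ b) (hbn : b ≤ n)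
    (h : Bil p k n l a b M) : Bil p k n l a 1 ((p : ℝ) ^ (b * (k * (k + 1))) * M) := by
  intro S S' cf hS _ hsep
  have t0 := rat_nonneg k l
  have t1 := rat_lt_one hlk
  have hlt : l * (l + 1) < k * (k + 1) := by
    nlinarith
  have hE : 1 ≤ k * (k + 1) - l * (l + 1) := by omega
  rw [mix_comm]
  refine (mix_triv k (k * n) b cf hE _ S' S).trans ?_
  have h1 : ∀ ζ : ZMod (p ^ b), mix p k (k * n) cf (k * (k + 1) - l * (l + 1)) (l * (l + 1))
      (cls S' ζ) S ≤ M * (U p k n a cf S ^ rat k l * U p k n 1 cf S' ^ (1 - rat k l)) := by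
    intro ζ
    rw [mix_comm]
    refine (h S (cls S' ζ) cf hS (inCls_cls _ _ _)
      (hsep.subset subset_rfl (cls_subset _ _))).trans ?_
    have hU0 := Real.rpow_nonneg (U_nonneg (p := p) k n a cf S) (rat k l)
    have hV : V p k n cf (cls S' ζ) ≤ V p k n cf S' := by
      rw [← V_add (by omega : 1 ≤ k) hbn cf S']
      exact Finset.single_le_sum (f := fun ζ => V p k n cf (cls S' ζ))
        (fun _ _ => V_nonneg _ _ _ _) (Finset.mem_univ ζ)
    have hU : U p k n b cf (cls S' ζ) ≤ U p k n 1 cf S' := by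
      unfold U
      refine mul_le_mul (pow_le_pow_right₀ one_le_p ?_) hV (V_nonneg _ _ _ _) (by positivity)
      gcongr
    refine mul_le_mul_of_nonneg_left (mul_le_mul_of_nonneg_left ?_ hU0) hM
    exact Real.rpow_le_rpow (U_nonneg _ _ _ _ _) hU (by linarith)
  have h2 := Finset.sum_le_sum fun ζ (_ : ζ ∈ Finset.univ) => h1 ζ
  rw [Finset.sum_const, Finset.card_univ, ZMod.card, nsmul_eq_mul] at h2
  have hR : 0 ≤ M * (U p k n a cf S ^ rat k l * U p k n 1 cf S' ^ (1 - rat k l)) :=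
    mul_nonneg hM (mul_nonneg (Real.rpow_nonneg (U_nonneg _ _ _ _ _) _)
      (Real.rpow_nonneg (U_nonneg _ _ _ _ _) _))
  calc _ ≤ (p : ℝ) ^ (b * (k * (k + 1) - l * (l + 1) - 1)) * (((p ^ b : ℕ) : ℝ) *
        (M * (U p k n a cf S ^ rat k l * U p k n 1 cf S' ^ (1 - rat k l)))) :=
        mul_le_mul_of_nonneg_left h2 (by positivity)
    _ = (p : ℝ) ^ (b * (k * (k + 1) - l * (l + 1) - 1) + b) *
        (M * (U p k n a cf S ^ rat k l * U p k n 1 cf S' ^ (1 - rat k l))) := by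
        push_cast; rw [pow_add]; ring
    _ ≤ (p : ℝ) ^ (b * (k * (k + 1))) *
        (M * (U p k n a cf S ^ rat k l * U p k n 1 cf S' ^ (1 - rat k l))) := by
        refine mul_le_mul_of_nonneg_right (pow_le_pow_right₀ one_le_p ?_) hR
        rw [← Nat.mul_succ]
        gcongr
        omega
    _ = _ := by ring

end VMVT

/-! ### Iteration of the bilinear estimates -/

namespace VMVT

variable {p : ℕ} [hp : Fact p.Prime]

/-- The gains of the iteration: `gain k r l` is the saving in the bilinear estimate with parameter
`l` after `r` rounds, in units of `η b`. -/
noncomputable def gain (k : ℕ) : ℕ → ℕ → ℝ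
  | 0, l => if l = 0 then 1 else 0
  | r + 1, l => if l = 0 then 1 else
      gain k r (k - l) / l + ((k - l : ℝ) / (k - l + 1)) * gain k r (l - 1)

lemma gain_zero_right (k r : ℕ) : gain k r 0 = 1 := by cases r <;> simp [gain]

/-- The sum of the gains grows linearly. -/
lemma sum_gain {k : ℕ} (hk : 2 ≤ k) (r : ℕ) :
    ∑ i ∈ Finset.range (k - 1), gain k r (i + 1) = r * ((k - 1 : ℝ) / k) := by
  have hk0 : (0 : ℝ) < k := by exact_mod_cast (by omega : 0 < k)
  induction r with
  | zero => simp [gain]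
  | succ r ih =>
    have e1 : ∑ i ∈ Finset.range (k - 1), gain k (r + 1) (i + 1) =
        ∑ i ∈ Finset.range (k - 1), gain k r (k - (i + 1)) / ((i : ℝ) + 1) +
        ∑ i ∈ Finset.range (k - 1), ((k - i - 1 : ℝ) / (k - i)) * gain k r i := by
      rw [← Finset.sum_add_distrib]
      refine Finset.sum_congr rfl fun i _ => ?_
      rw [gain, if_neg (by omega), Nat.add_sub_cancel]
      push_cast
      congr 3 <;> ring
    have e2 : ∑ i ∈ Finset.range (k - 1), gain k r (k - (i + 1)) / ((i : ℝ) + 1) =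
        ∑ i ∈ Finset.range (k - 1), gain k r (i + 1) / (k - i - 1 : ℝ) := by
      rw [← Finset.sum_range_reflect]
      refine Finset.sum_congr rfl fun i hi => ?_
      rw [Finset.mem_range] at hi
      have h1 : k - (k - 1 - 1 - i + 1) = i + 1 := by omega
      have h2 : ((k - 1 - 1 - i : ℕ) : ℝ) + 1 = k - i - 1 := by
        have : (k - 1 - 1 - i) + 1 + (i + 1) = k := by omega
        have h3 : (((k - 1 - 1 - i : ℕ) : ℝ) + 1 + ((i : ℝ) + 1)) = k := by exact_mod_cast this
        linarith
      rw [h1, h2]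
    have e3 : ∑ i ∈ Finset.range (k - 1), ((k - i - 1 : ℝ) / (k - i)) * gain k r i =
        (k - 1 : ℝ) / k + ∑ i ∈ Finset.range (k - 1),
          ((k - i - 2 : ℝ) / (k - i - 1)) * gain k r (i + 1) := by
      have h1 := Finset.sum_range_succ (fun i : ℕ => ((k - i - 1 : ℝ) / (k - i)) * gain k r i) (k - 1)
      have h2 := Finset.sum_range_succ' (fun i : ℕ => ((k - i - 1 : ℝ) / (k - i)) * gain k r i) (k - 1)
      have h3 : ((k - (k - 1 : ℕ) - 1 : ℝ) / (k - (k - 1 : ℕ))) * gain k r (k - 1) = 0 := by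
        push_cast [Nat.cast_sub (by omega : 1 ≤ k)]
        simp
      rw [h3, add_zero] at h1
      rw [← h1, h2, gain_zero_right, add_comm]
      congr 1
      · simp
      · refine Finset.sum_congr rfl fun i _ => ?_
        push_cast
        congr 2 <;> ring
    rw [e1, e2, e3, add_left_comm, ← Finset.sum_add_distrib]
    have e4 : ∀ i ∈ Finset.range (k - 1), gain k r (i + 1) / (k - i - 1 : ℝ) +
        ((k - i - 2 : ℝ) / (k - i - 1)) * gain k r (i + 1) = gain k r (i + 1) := by
      intro i hi
      rw [Finset.mem_range] at hi
      have : ((i : ℝ) + 1) < k := by exact_mod_cast (by omega : i + 1 < k)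
      have h0 : (k - i - 1 : ℝ) ≠ 0 := by
        apply ne_of_gt; linarith
      field_simp
      ring
    rw [Finset.sum_congr rfl e4, ih]
    push_cast
    ring

/-- Some parameter `l` has a gain at least the average. -/
lemma exists_gain {k : ℕ} (hk : 2 ≤ k) (r : ℕ) :
    ∃ l, 1 ≤ l ∧ l < k ∧ (r : ℝ) / k ≤ gain k r l := by
  have hk0 : (0 : ℝ) < k := by exact_mod_cast (by omega : 0 < k)
  have h : ∑ i ∈ Finset.range (k - 1), (r : ℝ) / k ≤
      ∑ i ∈ Finset.range (k - 1), gain k r (i + 1) := by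
    rw [sum_gain hk, Finset.sum_const, Finset.card_range, nsmul_eq_mul]
    push_cast [Nat.cast_sub (by omega : 1 ≤ k)]
    apply le_of_eq
    ring
  obtain ⟨i, hi, hle⟩ := Finset.exists_le_of_sum_le
    (Finset.nonempty_range_iff.2 (by omega)) h
  rw [Finset.mem_range] at hi
  exact ⟨i + 1, by omega, by omega, hle⟩

/-- The iteration: `r` rounds of lower-dimensional decoupling and Hölder's inequality. -/
lemma iterate {k : ℕ} (hk : 2 ≤ k) (hkp : k < p)
    (hlow : ∀ l, 1 ≤ l → l < k → ∀ ε : ℝ, 0 < ε → Expo p l ε) {η C : ℝ} (hη : 0 ≤ η) (hC : 1 ≤ C)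
    (hD : ∀ n : ℕ, Dec p k n (C * (p : ℝ) ^ (η * n))) (r : ℕ) (ε : ℝ) (hε : 0 < ε) :
    ∃ C' : ℝ, 1 ≤ C' ∧ ∀ n b l a : ℕ, Nat.factorial k ^ r ∣ b → k ^ (r + 1) * b ≤ n → 1 ≤ l → l < k →
      l * a ≤ (k - l + 1) * b →
      Bil p k n l a b (C' * (p : ℝ) ^ (η * n - η * gain k r l * b + ε * n)) := by
  induction r generalizing ε with
  | zero =>
    refine ⟨C, hC, fun n b l a _ hbn hl hlk hab => ?_⟩
    have han : a ≤ n := by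
      have h1 : l * a ≤ l * (k * b) := by
        refine hab.trans ?_
        rw [← mul_assoc]
        gcongr
        have : k ≤ l * k := Nat.le_mul_of_pos_left k hl
        omega
      have := Nat.le_of_mul_le_mul_left h1 hl
      rw [zero_add, pow_one] at hbn
      omega
    have hbn' : b ≤ n := by
      rw [zero_add, pow_one] at hbn
      exact (Nat.le_mul_of_pos_left b (by omega)).trans hbn
    have hm : ∀ m : ℕ, C * (p : ℝ) ^ (η * (n - m : ℕ)) ≤
        C * (p : ℝ) ^ (η * n - η * gain k 0 l * b + ε * n) := by
      intro m
      have h2 : ((n - m : ℕ) : ℝ) ≤ n := by exact_mod_cast Nat.sub_le n m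
      have h3 : 0 ≤ ε * n := by positivity
      rw [gain, if_neg (by omega)]
      refine mul_le_mul_of_nonneg_left (Real.rpow_le_rpow_of_exponent_le one_le_p ?_) (by linarith)
      nlinarith
    exact bil_triv (by positivity) hl hlk han hbn' ((hD _).mono (hm a)) ((hD _).mono (hm b))
  | succ r ih =>
    obtain ⟨C1, hC1, h1⟩ := ih (ε / 2) (half_pos hε)
    have hL : ∃ CL : ℝ, 1 ≤ CL ∧ ∀ l, 1 ≤ l → l < k → ∀ (a A b N : ℕ), a ≤ A →
        l * A ≤ (k - l + 1) * b → l * A ≤ N →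
        ∀ (S S' : Finset ℤ), InCls p a S → InCls p b S' → Sep p S S' → ∀ (cf : ℤ → ℂ) (e : ℕ),
        mix p k N cf (l * (l + 1)) e S S' ≤
          CL * (p : ℝ) ^ (ε / 2 * A) * (p : ℝ) ^ ((A - a) * (tri l - 1)) *
            ∑ ζ : ZMod (p ^ A), mix p k N cf (l * (l + 1)) e (cls S ζ) S' := by
      have hex : ∀ l, 1 ≤ l → l < k → _ := fun l hl hlk =>
        low (p := p) hl hlk.le hkp (hlow l hl hlk) (ε / 2) (half_pos hε)
      choose! c hc1 hc using hex
      have hbd : ∀ l, 1 ≤ l → l < k → c l ≤ ∑ i ∈ Finset.Ico 1 k, |c i| := fun l hl hlk =>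
        (le_abs_self _).trans (Finset.single_le_sum (f := fun i => |c i|)
          (fun _ _ => abs_nonneg _) (Finset.mem_Ico.2 ⟨hl, hlk⟩))
      refine ⟨∑ i ∈ Finset.Ico 1 k, |c i|, (hc1 1 le_rfl (by omega)).trans (hbd 1 le_rfl (by omega)),
        fun l hl hlk a A b N haA hAb hAN S S' hS hS' hsep cf e => ?_⟩
      refine (hc l hl hlk a A b N haA hAb hAN S S' hS hS' hsep cf e).trans ?_
      have : 0 ≤ ∑ ζ : ZMod (p ^ A), mix p k N cf (l * (l + 1)) e (cls S ζ) S' :=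
        Finset.sum_nonneg fun _ _ => mix_nonneg _ _ _ _ _ _ _
      gcongr
      exact hbd l hl hlk
    obtain ⟨CL, hCL, hL⟩ := hL
    refine ⟨CL * (C1 * C), one_le_mul_of_one_le_of_one_le hCL
      (one_le_mul_of_one_le_of_one_le hC1 hC), fun n b l a hdvd hbn hl hlk hab => ?_⟩
    have hlfac : l ∣ Nat.factorial k := Nat.dvd_factorial hl hlk.le
    obtain ⟨u, rfl⟩ := hdvd
    obtain ⟨v, hv⟩ := hlfac
    set b0 := Nat.factorial k ^ r * (v * u) with hb0
    have hb : Nat.factorial k ^ (r + 1) * u = l * b0 := by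
      have h3 : Nat.factorial k ^ (r + 1) * u = Nat.factorial k ^ r * (l * v) * u := by
        rw [pow_succ, ← hv]
      rw [h3, hb0]
      ring
    rw [hb] at hbn hab ⊢
    set b := l * b0 with hbdef
    set A := (k - l + 1) * b0 with hA
    have hlA : l * A = (k - l + 1) * b := by rw [hA, hbdef]; ring
    have haA : a ≤ A := Nat.le_of_mul_le_mul_left (by rw [hlA]; exact hab) hl
    have hAkb0 : A ≤ k * b0 := by
      rw [hA]; gcongr; omega
    have hb0b : b0 ≤ b := Nat.le_mul_of_pos_left b0 hl
    have hAkb : A ≤ k * b := hAkb0.trans (Nat.mul_le_mul_left k hb0b)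
    have hkn : k * b ≤ n := by
      refine le_trans ?_ hbn
      rw [pow_succ, mul_assoc]
      exact Nat.le_mul_of_pos_left _ (by positivity)
    have hAn : A ≤ n := hAkb.trans hkn
    have hbn' : b ≤ n := (Nat.le_mul_of_pos_left b (by omega)).trans hkn
    have hkA : k ^ (r + 1) * A ≤ n := by
      refine le_trans ?_ hbn
      rw [pow_succ k (r + 1), mul_assoc]
      exact Nat.mul_le_mul_left _ hAkb
    have hd1 : Nat.factorial k ^ r ∣ A := Dvd.dvd.mul_left (Dvd.intro _ rfl) _
    have hd2 : Nat.factorial k ^ r ∣ b := Dvd.dvd.mul_left (Dvd.intro _ rfl) _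
    have B1 : Bil p k n (k - l) b A
        (C1 * (p : ℝ) ^ (η * n - η * gain k r (k - l) * A + ε / 2 * n)) := by
      refine h1 n A (k - l) b hd1 hkA (by omega) (by omega) ?_
      have : k - (k - l) + 1 = l + 1 := by omega
      rw [this, add_mul, hlA]
      calc (k - l) * b ≤ (k - l + 1) * b := by gcongr; omega
        _ ≤ _ := Nat.le_add_right _ _
    have B2 : Bil p k n (l - 1) A b
        (C1 * C * (p : ℝ) ^ (η * n - η * gain k r (l - 1) * b + ε / 2 * n)) := by
      rcases Nat.eq_or_lt_of_le hl with h | h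
      · subst h
        refine (bil_zero (by positivity) hbn' (hD (n - b))).mono ?_
        rw [Nat.sub_self, gain_zero_right]
        refine mul_le_mul (le_mul_of_one_le_left (by linarith) hC1)
          (Real.rpow_le_rpow_of_exponent_le one_le_p ?_) (by positivity) (by positivity)
        rw [Nat.cast_sub hbn']
        have : 0 ≤ ε / 2 * n := by positivity
        linarith
      · refine (h1 n b (l - 1) A hd2 ?_ (by omega) (by omega) ?_).mono ?_
        · refine le_trans ?_ hbn
          gcongr
          · omega
          · omega
        · calc (l - 1) * A ≤ l * A := by gcongr; omega
            _ = (k - l + 1) * b := hlA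
            _ ≤ _ := by gcongr; omega
        · refine mul_le_mul_of_nonneg_right ?_ (by positivity)
          exact le_mul_of_one_le_right (by linarith) hC
    have B3 := bil_holder (by positivity) (by positivity) hl hlk B1 B2
    have B4 := bil_lower (K := CL * (p : ℝ) ^ (ε / 2 * A)) (by positivity) (by positivity) hl hlk haA
      hAn B3 (fun S S' hS hS' hsep cf e => hL l hl hlk a A b (k * n) haA hlA.le
        (Nat.mul_le_mul hlk.le hAn) S S' hS hS' hsep cf e)
    refine B4.mono ?_
    have hkl : (l : ℝ) + 1 ≤ k := by exact_mod_cast hlk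
    set θ : ℝ := 1 / (k - l + 1 : ℝ) with hθ
    have hθ0 : 0 < θ := by rw [hθ]; apply div_pos one_pos; linarith
    have hθ1 : θ < 1 := by rw [hθ, div_lt_one (by linarith)]; linarith
    have hAr : (A : ℝ) = (k - l + 1) * b0 := by
      rw [hA]; push_cast [Nat.cast_sub hlk.le]; ring
    have hbr : (b : ℝ) = l * b0 := by rw [hbdef]; push_cast; ring
    have hθA : θ * A = b0 := by
      rw [hAr, hθ]
      have : (k - l + 1 : ℝ) ≠ 0 := by apply ne_of_gt; linarith
      field_simp
    have hl0 : (0 : ℝ) < l := by exact_mod_cast hl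
    have hg : gain k (r + 1) l * b = gain k r (k - l) * (θ * A) + (1 - θ) * (gain k r (l - 1) * b) := by
      rw [gain, if_neg (by omega), hθA, hbr, hθ]
      have : (k - l + 1 : ℝ) ≠ 0 := by apply ne_of_gt; linarith
      field_simp
      ring
    have hpp : (0 : ℝ) < p := p_pos
    rw [Real.mul_rpow (by positivity) (by positivity), Real.mul_rpow (by positivity) (by positivity),
      ← Real.rpow_mul hpp.le, ← Real.rpow_mul hpp.le]
    have hCC : C1 ^ θ * (C1 * C) ^ (1 - θ) ≤ C1 * C := by
      have h2 : C1 ^ θ ≤ (C1 * C) ^ θ := Real.rpow_le_rpow (by linarith)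
        (le_mul_of_one_le_right (by linarith) hC) hθ0.le
      calc C1 ^ θ * (C1 * C) ^ (1 - θ) ≤ (C1 * C) ^ θ * (C1 * C) ^ (1 - θ) := by gcongr
        _ = C1 * C := by
          rw [← Real.rpow_add (by positivity), add_sub_cancel, Real.rpow_one]
    have hAnr : (A : ℝ) ≤ n := by exact_mod_cast hAn
    calc _ = (CL * (C1 ^ θ * (C1 * C) ^ (1 - θ))) * ((p : ℝ) ^ (ε / 2 * A) *
          ((p : ℝ) ^ ((η * n - η * gain k r (k - l) * A + ε / 2 * n) * θ) *
          (p : ℝ) ^ ((η * n - η * gain k r (l - 1) * b + ε / 2 * n) * (1 - θ)))) := by ring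
      _ ≤ (CL * (C1 * C)) * (p : ℝ) ^ (η * n - η * gain k (r + 1) l * b + ε * n) := by
        refine mul_le_mul (mul_le_mul_of_nonneg_left hCC (by linarith)) ?_ (by positivity)
          (by positivity)
        rw [← Real.rpow_add hpp, ← Real.rpow_add hpp]
        refine Real.rpow_le_rpow_of_exponent_le one_le_p ?_
        have : η * gain k (r + 1) l * b = η * (gain k r (k - l) * (θ * A) +
          (1 - θ) * (gain k r (l - 1) * b)) := by rw [← hg]; ring
        rw [this]
        nlinarith

end VMVT

/-! ### Lowering the decoupling exponent -/

namespace VMVT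

variable {p : ℕ} [hp : Fact p.Prime]

/-- Either one term dominates a sum, or two distinct terms are comparable to it. -/
lemma broad_narrow {ι : Type*} [Fintype ι] [DecidableEq ι] [Nonempty ι] (f : ι → ℂ) {P e : ℕ}
    (he : e ≤ P) :
    ‖∑ i, f i‖ ^ P ≤ 2 ^ P * ∑ i, ‖f i‖ ^ P + (2 * Fintype.card ι : ℝ) ^ P *
      ∑ i, ∑ j, if i ≠ j then ‖f i‖ ^ e * ‖f j‖ ^ (P - e) else 0 := by
  obtain ⟨m, -, hm⟩ := Finset.exists_max_image Finset.univ (fun i => ‖f i‖) Finset.univ_nonempty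
  have hpos2 : 0 ≤ (2 * Fintype.card ι : ℝ) ^ P *
      ∑ i, ∑ j, if i ≠ j then ‖f i‖ ^ e * ‖f j‖ ^ (P - e) else 0 := by
    refine mul_nonneg (by positivity) (Finset.sum_nonneg fun i _ => Finset.sum_nonneg fun j _ => ?_)
    split_ifs <;> positivity
  by_cases h : ‖∑ i, f i‖ ≤ 2 * ‖f m‖
  · have h1 : ‖∑ i, f i‖ ^ P ≤ 2 ^ P * ‖f m‖ ^ P := by
      rw [← mul_pow]; gcongr
    have h2 : ‖f m‖ ^ P ≤ ∑ i, ‖f i‖ ^ P :=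
      Finset.single_le_sum (f := fun i => ‖f i‖ ^ P) (fun _ _ => by positivity) (Finset.mem_univ m)
    nlinarith [pow_pos (two_pos : (0 : ℝ) < 2) P]
  · push Not at h
    have h1 : ‖∑ i, f i‖ ≤ ‖f m‖ + ∑ i ∈ Finset.univ.erase m, ‖f i‖ := by
      rw [Finset.add_sum_erase _ (fun i => ‖f i‖) (Finset.mem_univ m)]
      exact norm_sum_le _ _
    have hc : (0 : ℝ) < Fintype.card ι := by exact_mod_cast Fintype.card_pos
    set x := ‖∑ i, f i‖ with hx
    obtain ⟨j, hj, hjx⟩ : ∃ j, j ≠ m ∧ x ≤ 2 * Fintype.card ι * ‖f j‖ := by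
      by_contra hcon
      push Not at hcon
      have h2 : ∑ i ∈ Finset.univ.erase m, ‖f i‖ ≤ ∑ i ∈ Finset.univ.erase m,
          x / (2 * Fintype.card ι) := by
        refine Finset.sum_le_sum fun i hi => ?_
        rw [le_div_iff₀ (by positivity)]
        have := hcon i (Finset.ne_of_mem_erase hi)
        linarith
      have h3 : ∑ i ∈ Finset.univ.erase m, x / (2 * Fintype.card ι) ≤ x / 2 := by
        rw [Finset.sum_const, nsmul_eq_mul]
        have h4 : (((Finset.univ.erase m).card : ℕ) : ℝ) ≤ Fintype.card ι := by
          exact_mod_cast Finset.card_le_univ _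
        have hx0 : 0 ≤ x := norm_nonneg _
        calc _ ≤ (Fintype.card ι : ℝ) * (x / (2 * Fintype.card ι)) := by gcongr
          _ = x / 2 := by field_simp
      linarith
    have hxm : x ≤ 2 * Fintype.card ι * ‖f m‖ := by
      refine hjx.trans ?_
      have := hm j (Finset.mem_univ j)
      gcongr
    have h5 : x ^ P ≤ (2 * Fintype.card ι : ℝ) ^ P * (‖f m‖ ^ e * ‖f j‖ ^ (P - e)) := by
      calc x ^ P = x ^ e * x ^ (P - e) := by rw [← pow_add, Nat.add_sub_cancel' he]
        _ ≤ (2 * Fintype.card ι * ‖f m‖) ^ e * (2 * Fintype.card ι * ‖f j‖) ^ (P - e) := by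
          have : 0 ≤ x := norm_nonneg _
          gcongr
        _ = ((2 * Fintype.card ι : ℝ) ^ e * (2 * Fintype.card ι : ℝ) ^ (P - e)) *
            (‖f m‖ ^ e * ‖f j‖ ^ (P - e)) := by rw [mul_pow, mul_pow]; ring
        _ = _ := by rw [← pow_add, Nat.add_sub_cancel' he]
    have h6 : ‖f m‖ ^ e * ‖f j‖ ^ (P - e) ≤
        ∑ i, ∑ j, if i ≠ j then ‖f i‖ ^ e * ‖f j‖ ^ (P - e) else 0 := by
      have a1 := Finset.single_le_sum (f := fun j => if m ≠ j then ‖f m‖ ^ e * ‖f j‖ ^ (P - e) else 0)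
        (fun i _ => by split_ifs <;> positivity) (Finset.mem_univ j)
      rw [if_pos hj.symm] at a1
      refine a1.trans (Finset.single_le_sum
        (f := fun i => ∑ j, if i ≠ j then ‖f i‖ ^ e * ‖f j‖ ^ (P - e) else 0)
        (fun i _ => Finset.sum_nonneg fun j _ => ?_) (Finset.mem_univ m))
      split_ifs <;> positivity
    have h7 : 0 ≤ (2 : ℝ) ^ P * ∑ i, ‖f i‖ ^ P := by positivity
    have h8 := mul_le_mul_of_nonneg_left h6
      (by positivity : (0 : ℝ) ≤ (2 * Fintype.card ι : ℝ) ^ P)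
    linarith

/-- The recursive inequality for the decoupling constants: passing from `n - 1` to `n` halves the
constant up to a bilinear term. -/
lemma dec_step {k n l : ℕ} {K M : ℝ} (hk : 2 ≤ k) (hp16 : 16 ≤ p) (hn : 1 ≤ n)
    (hlk : l < k) (hK : 0 ≤ K) (hM : 0 ≤ M) (hD : Dec p k (n - 1) K) (hB : Bil p k n l 1 1 M) :
    Dec p k n (K / 2 + (2 * p : ℝ) ^ (k * (k + 1)) * (p ^ 2 * M)) := by
  classical
  intro S cf
  have hle : l * (l + 1) ≤ k * (k + 1) := by gcongr
  have h1 : ∀ β : Fin k → ZMod (p ^ (k * n)), ‖F cf S β‖ ^ (k * (k + 1)) ≤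
      2 ^ (k * (k + 1)) * ∑ ξ : ZMod (p ^ 1), ‖F cf (cls S ξ) β‖ ^ (k * (k + 1)) +
      (2 * p : ℝ) ^ (k * (k + 1)) * ∑ ξ : ZMod (p ^ 1), ∑ ξ' : ZMod (p ^ 1), if ξ ≠ ξ' then
        ‖F cf (cls S ξ) β‖ ^ (l * (l + 1)) *
          ‖F cf (cls S ξ') β‖ ^ (k * (k + 1) - l * (l + 1)) else 0 := by
    intro β
    have := broad_narrow (fun ξ : ZMod (p ^ 1) => F cf (cls S ξ) β) hle
    have hc : ((Fintype.card (ZMod (p ^ 1)) : ℕ) : ℝ) = p := by rw [ZMod.card]; simp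
    rw [← F_eq_sum_cls, hc] at this
    exact this
  have h2 := Finset.sum_le_sum fun β (_ : β ∈ Finset.univ) => h1 β
  rw [Finset.sum_add_distrib, ← Finset.mul_sum, ← Finset.mul_sum] at h2
  refine h2.trans ?_
  have hV0 := V_nonneg (p := p) k n cf S
  have hw1 := tri_pos (show 1 ≤ k by omega)
  -- narrow part: one class modulo `p` dominates; `p ≥ 16` absorbs the factor `2 ^ (k (k + 1))`
  have hn1 : ∑ β : Fin k → ZMod (p ^ (k * n)), ∑ ξ : ZMod (p ^ 1),
      ‖F cf (cls S ξ) β‖ ^ (k * (k + 1)) ≤ K * ((p : ℝ) ^ ((n - 1) * (tri k - 1)) * V p k n cf S) := by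
    rw [Finset.sum_comm, ← V_add (by omega : 1 ≤ k) hn cf S, Finset.mul_sum, Finset.mul_sum]
    exact Finset.sum_le_sum fun ξ _ => moment_le hK hn hD (inCls_cls 1 S ξ) cf
  have hn2 : (2 : ℝ) ^ (k * (k + 1)) * (p : ℝ) ^ ((n - 1) * (tri k - 1)) ≤
      (p : ℝ) ^ (n * (tri k - 1)) / 2 := by
    have e1 : n * (tri k - 1) = (n - 1) * (tri k - 1) + (tri k - 1) := by
      obtain ⟨m, rfl⟩ : ∃ m, n = m + 1 := ⟨n - 1, by omega⟩
      rw [Nat.add_sub_cancel]; ring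
    have e2 : (2 : ℝ) ^ (k * (k + 1) + 1) ≤ (p : ℝ) ^ (tri k - 1) := by
      have e3 : k * (k + 1) + 1 ≤ 4 * (tri k - 1) := by
        have := two_tri k
        have : 6 ≤ k * (k + 1) := by nlinarith
        omega
      calc (2 : ℝ) ^ (k * (k + 1) + 1) ≤ 2 ^ (4 * (tri k - 1)) :=
            pow_le_pow_right₀ (by norm_num) e3
        _ = 16 ^ (tri k - 1) := by rw [pow_mul]; norm_num
        _ ≤ (p : ℝ) ^ (tri k - 1) := by gcongr; exact_mod_cast hp16
    rw [e1, pow_add, le_div_iff₀ two_pos]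
    rw [pow_succ] at e2
    have := pow_pos (p_pos (p := p)) ((n - 1) * (tri k - 1))
    nlinarith
  -- broad part: two distinct classes modulo `p` contribute, and the bilinear bound applies
  have hb : ∑ β : Fin k → ZMod (p ^ (k * n)), ∑ ξ : ZMod (p ^ 1), ∑ ξ' : ZMod (p ^ 1),
      (if ξ ≠ ξ' then ‖F cf (cls S ξ) β‖ ^ (l * (l + 1)) *
          ‖F cf (cls S ξ') β‖ ^ (k * (k + 1) - l * (l + 1)) else 0) ≤
      p ^ 2 * M * ((p : ℝ) ^ (n * (tri k - 1)) * V p k n cf S) := by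
    have hX0 : 0 ≤ (p : ℝ) ^ (n * (tri k - 1)) * V p k n cf S := by positivity
    have hU : ∀ ξ : ZMod (p ^ 1), U p k n 1 cf (cls S ξ) ≤
        (p : ℝ) ^ (n * (tri k - 1)) * V p k n cf S := by
      intro ξ
      unfold U
      refine mul_le_mul (pow_le_pow_right₀ one_le_p ?_) ?_ (V_nonneg _ _ _ _) (by positivity)
      · gcongr; omega
      · rw [← V_add (by omega : 1 ≤ k) hn cf S]
        exact Finset.single_le_sum (f := fun ζ => V p k n cf (cls S ζ))
          (fun _ _ => V_nonneg _ _ _ _) (Finset.mem_univ ξ)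
    have hpair : ∀ ξ ξ' : ZMod (p ^ 1), ∑ β : Fin k → ZMod (p ^ (k * n)),
        (if ξ ≠ ξ' then ‖F cf (cls S ξ) β‖ ^ (l * (l + 1)) *
          ‖F cf (cls S ξ') β‖ ^ (k * (k + 1) - l * (l + 1)) else 0) ≤
        M * ((p : ℝ) ^ (n * (tri k - 1)) * V p k n cf S) := by
      intro ξ ξ'
      split_ifs with hne
      · have hsep : Sep p (cls S ξ) (cls S ξ') := by
          intro x hx y hy hd
          rw [mem_cls] at hx hy
          apply hne
          rw [← hx.2, ← hy.2, eq_comm, ZMod.intCast_eq_intCast_iff_dvd_sub]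
          simpa using hd
        refine (hB (cls S ξ) (cls S ξ') cf (inCls_cls 1 S ξ) (inCls_cls 1 S ξ') hsep).trans ?_
        refine mul_le_mul_of_nonneg_left ?_ hM
        have t0 := rat_nonneg k l
        have t1 := rat_lt_one hlk
        calc _ ≤ ((p : ℝ) ^ (n * (tri k - 1)) * V p k n cf S) ^ rat k l *
              ((p : ℝ) ^ (n * (tri k - 1)) * V p k n cf S) ^ (1 - rat k l) :=
              mul_le_mul (Real.rpow_le_rpow (U_nonneg _ _ _ _ _) (hU ξ) t0)
                (Real.rpow_le_rpow (U_nonneg _ _ _ _ _) (hU ξ') (by linarith))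
                (Real.rpow_nonneg (U_nonneg _ _ _ _ _) _) (Real.rpow_nonneg hX0 _)
          _ = _ := by
            rw [← Real.rpow_add_of_nonneg hX0 t0 (by linarith), add_sub_cancel, Real.rpow_one]
      · rw [Finset.sum_const_zero]; positivity
    rw [Finset.sum_comm]
    simp_rw [Finset.sum_comm (s := (Finset.univ : Finset (Fin k → ZMod (p ^ (k * n)))))]
    refine (Finset.sum_le_sum fun ξ _ => Finset.sum_le_sum fun ξ' _ => hpair ξ ξ').trans
      (le_of_eq ?_)
    rw [Finset.sum_const, Finset.sum_const, Finset.card_univ, ZMod.card, nsmul_eq_mul, nsmul_eq_mul]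
    push_cast
    ring
  have g1 := mul_le_mul_of_nonneg_left hn1 (by positivity : (0 : ℝ) ≤ 2 ^ (k * (k + 1)))
  have g2 := mul_le_mul_of_nonneg_left hb (by positivity : (0 : ℝ) ≤ (2 * p : ℝ) ^ (k * (k + 1)))
  have g3 := mul_le_mul_of_nonneg_left hn2 (mul_nonneg hK hV0)
  have hVdef : V p k n cf S = ∑ ζ : ZMod (p ^ n), ∑ β : Fin k → ZMod (p ^ (k * n)),
    ‖F cf (cls S ζ) β‖ ^ (k * (k + 1)) := rfl
  rw [← hVdef]
  nlinarith

/-- The exponent of the decoupling constant can be lowered by a fixed amount as long as it stays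
above `ηs`. -/
lemma improve {k : ℕ} (hk : 2 ≤ k) (hkp : k < p) (hp16 : 16 ≤ p)
    (hlow : ∀ l, 1 ≤ l → l < k → ∀ ε : ℝ, 0 < ε → Expo p l ε) (ηs : ℝ) (hηs : 0 < ηs) :
    ∃ σ : ℝ, 0 < σ ∧ ∀ η : ℝ, ηs ≤ η → Expo p k η → Expo p k (η - σ) := by
  have hk0 : (0 : ℝ) < k := by exact_mod_cast (by omega : 0 < k)
  obtain ⟨r, hr⟩ := exists_nat_ge (k * ((k * (k + 1) : ℕ) + 1 : ℝ) / ηs)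
  obtain ⟨l, hl, hlk, hgain⟩ := exists_gain hk r
  have hgl : ((k * (k + 1) : ℕ) + 1 : ℝ) ≤ ηs * gain k r l := by
    rw [div_le_iff₀ hηs] at hr
    rw [div_le_iff₀ hk0] at hgain
    have h1 : (r : ℝ) * ηs ≤ gain k r l * k * ηs := mul_le_mul_of_nonneg_right hgain hηs.le
    have h2 := hr.trans h1
    have h3 : k * ((k * (k + 1) : ℕ) + 1 : ℝ) ≤ k * (ηs * gain k r l) := by linarith
    exact le_of_mul_le_mul_left h3 hk0
  set T := Nat.factorial k ^ r with hT
  have hT1 : 1 ≤ T := Nat.one_le_pow _ _ (Nat.factorial_pos k)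
  set R := k ^ (r + 1) * T with hR
  have hR1 : 1 ≤ R := Nat.mul_pos (pow_pos (by omega) _) hT1
  set κ : ℝ := 1 / (2 * k ^ (r + 1)) with hκ
  have hκ0 : 0 < κ := by positivity
  refine ⟨min (κ / 2) ηs, lt_min (half_pos hκ0) hηs, fun η hη hE => ?_⟩
  set σ := min (κ / 2) ηs with hσ
  have hσ1 : σ ≤ κ / 2 := min_le_left _ _
  have hσ2 : σ ≤ ηs := min_le_right _ _
  obtain ⟨C, hC, hD⟩ := hE
  obtain ⟨C', hC', hB⟩ := iterate hk hkp hlow (hηs.le.trans hη) hC hD r (κ / 2) (half_pos hκ0)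
  set n0 := R * k with hn0
  have hBil : ∀ n, n0 ≤ n → Bil p k n l 1 1 (C' * (p : ℝ) ^ ((η - σ) * n)) := by
    intro n hn
    set b := T * (n / R) with hb
    have hq : k ≤ n / R := by
      rw [Nat.le_div_iff_mul_le hR1, mul_comm]; exact hn
    have hkb : k ≤ b := hq.trans (Nat.le_mul_of_pos_left _ hT1)
    have hbn : k ^ (r + 1) * b ≤ n := by
      rw [hb, ← mul_assoc, ← hR]; exact Nat.mul_div_le n R
    have hbn' : b ≤ n := (Nat.le_mul_of_pos_left b (pow_pos (by omega) _)).trans hbn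
    have hBb := hB n b l 1 (Dvd.intro _ rfl) hbn hl hlk (by
      calc l * 1 ≤ b := by omega
        _ ≤ _ := Nat.le_mul_of_pos_left b (by omega))
    have h1 := bil_split (by positivity) hlk (by omega : 1 ≤ b) hbn' hBb
    refine h1.mono ?_
    have hκb : κ * n ≤ b := by
      have h2 : n < R * (n / R) + R := by
        have := Nat.div_add_mod n R
        have := Nat.mod_lt n hR1
        omega
      have h3 : R * 1 ≤ R * (n / R) := Nat.mul_le_mul_left R (by omega)
      have h4 : n ≤ 2 * (k ^ (r + 1) * b) := by
        have : k ^ (r + 1) * b = R * (n / R) := by rw [hb, ← mul_assoc]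
        omega
      have h5 : (n : ℝ) ≤ 2 * (k ^ (r + 1) * b) := by exact_mod_cast h4
      rw [hκ, div_mul_eq_mul_div, one_mul, div_le_iff₀ (by positivity)]
      linarith
    rw [← Real.rpow_natCast, mul_left_comm, ← Real.rpow_add p_pos]
    refine mul_le_mul_of_nonneg_left (Real.rpow_le_rpow_of_exponent_le one_le_p ?_) (by linarith)
    have hg0 : 0 ≤ gain k r l := le_trans (by positivity) hgain
    have h6 : ((k * (k + 1) : ℕ) + 1 : ℝ) ≤ η * gain k r l :=
      hgl.trans (mul_le_mul_of_nonneg_right hη hg0)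
    have h7 : ((k * (k + 1) : ℕ) + 1 : ℝ) * b ≤ η * gain k r l * b :=
      mul_le_mul_of_nonneg_right h6 (by positivity)
    have h8 : σ * n ≤ κ / 2 * n := mul_le_mul_of_nonneg_right hσ1 (by positivity)
    have h9 : ((b * (k * (k + 1)) : ℕ) : ℝ) = ((k * (k + 1) : ℕ) : ℝ) * b := by push_cast; ring
    rw [h9]
    linarith
  have hησ : 0 ≤ η - σ := by linarith
  set D := (2 * p : ℝ) ^ (k * (k + 1)) * (p ^ 2 * C') with hDD
  have hDpos : 0 ≤ D := by positivity
  set C2 := max (2 * D) (C * (p : ℝ) ^ (η * n0)) with hC2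
  have hC2' : C * (p : ℝ) ^ (η * n0) ≤ C2 := le_max_right _ _
  have hη0 : 0 ≤ η := hηs.le.trans hη
  have hC21 : 1 ≤ C2 := le_trans (one_le_mul_of_one_le_of_one_le hC
    (Real.one_le_rpow one_le_p (by positivity))) hC2'
  refine ⟨C2, hC21, fun n => ?_⟩
  induction n with
  | zero =>
    refine (hD 0).mono ?_
    simp only [Nat.cast_zero, mul_zero, Real.rpow_zero, mul_one]
    exact le_trans (le_mul_of_one_le_right (by linarith)
      (Real.one_le_rpow one_le_p (by positivity))) hC2'
  | succ n ih =>
    by_cases hn : n0 ≤ n + 1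
    · have h1 := dec_step (K := C2 * (p : ℝ) ^ ((η - σ) * n)) hk hp16 (by omega : 1 ≤ n + 1)
        hlk (by positivity) (by positivity) (by simpa using ih) (hBil (n + 1) hn)
      refine h1.mono ?_
      have h2 : (p : ℝ) ^ ((η - σ) * n) ≤ (p : ℝ) ^ ((η - σ) * (n + 1 : ℕ)) := by
        refine Real.rpow_le_rpow_of_exponent_le one_le_p ?_
        push_cast
        nlinarith
      have h3 : 2 * D ≤ C2 := le_max_left _ _
      have h4 : 0 < (p : ℝ) ^ ((η - σ) * (n + 1 : ℕ)) := Real.rpow_pos_of_pos p_pos _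
      have h5 : (2 * p : ℝ) ^ (k * (k + 1)) * (p ^ 2 * (C' * (p : ℝ) ^ ((η - σ) * (n + 1 : ℕ)))) =
        D * (p : ℝ) ^ ((η - σ) * (n + 1 : ℕ)) := by rw [hDD]; ring
      rw [h5]
      have h6 := mul_le_mul_of_nonneg_left h2 (by linarith : 0 ≤ C2)
      have h7 := mul_le_mul_of_nonneg_right h3 h4.le
      linarith
    · push Not at hn
      refine (hD (n + 1)).mono ?_
      have h1 : (p : ℝ) ^ (η * (n + 1 : ℕ)) ≤ (p : ℝ) ^ (η * n0) := by
        refine Real.rpow_le_rpow_of_exponent_le one_le_p (mul_le_mul_of_nonneg_left ?_ hη0)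
        exact_mod_cast hn.le
      have h2 : (1 : ℝ) ≤ (p : ℝ) ^ ((η - σ) * (n + 1 : ℕ)) :=
        Real.one_le_rpow one_le_p (by positivity)
      calc C * (p : ℝ) ^ (η * (n + 1 : ℕ)) ≤ C * (p : ℝ) ^ (η * n0) := by gcongr
        _ ≤ C2 := hC2'
        _ ≤ _ := le_mul_of_one_le_right (by linarith) h2

/-- The trivial exponent, from Hölder's inequality. -/
lemma expo_triv (k : ℕ) (hk : 1 ≤ k) : Expo p k (k * (k + 1) : ℕ) := by
  refine ⟨1, le_rfl, fun n S cf => ?_⟩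
  have hP : 1 ≤ k * (k + 1) := Nat.mul_pos (by omega) (by omega)
  have h1 := mix_triv (p := p) k (k * n) n cf hP 0 S ∅
  simp only [mix, pow_zero, mul_one] at h1
  refine h1.trans ?_
  refine mul_le_mul_of_nonneg_right ?_ (by positivity)
  have h2 : (1 : ℝ) ≤ (p : ℝ) ^ (n * (tri k - 1)) := one_le_pow₀ one_le_p
  have h3 : (p : ℝ) ^ (n * (k * (k + 1) - 1)) ≤ 1 * (p : ℝ) ^ (((k * (k + 1) : ℕ) : ℝ) * n) := by
    rw [one_mul, ← Nat.cast_mul, Real.rpow_natCast]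
    refine pow_le_pow_right₀ one_le_p ?_
    rw [mul_comm]
    gcongr
    omega
  exact h3.trans (le_mul_of_one_le_right (by positivity) h2)

lemma Expo.mono {k : ℕ} {η η' : ℝ} (h : Expo p k η) (hη : η ≤ η') : Expo p k η' := by
  obtain ⟨C, hC, hD⟩ := h
  refine ⟨C, hC, fun n => (hD n).mono ?_⟩
  refine mul_le_mul_of_nonneg_left (Real.rpow_le_rpow_of_exponent_le one_le_p ?_) (by linarith)
  exact mul_le_mul_of_nonneg_right hη (by positivity)

end VMVT

/-! ### Decoupling with arbitrarily small loss -/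

namespace VMVT

variable {p : ℕ} [hp : Fact p.Prime]

lemma F_cls_one {N : ℕ} [NeZero N] (c : ℤ → ℂ) (S : Finset ℤ) (ζ : ZMod N) (β : Fin 1 → ZMod N) :
    F c (cls S ζ) β = (∑ x ∈ cls S ζ, c x) * ZMod.stdAddChar (β 0 * ζ) := by
  rw [F, Finset.sum_mul]
  refine Finset.sum_congr rfl fun x hx => ?_
  rw [mem_cls] at hx
  simp [ph, hx.2]

/-- Orthogonality of the residue classes modulo `N` in mean square. -/
lemma parseval {N : ℕ} [NeZero N] (c : ℤ → ℂ) (S : Finset ℤ) :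
    ∑ β : Fin 1 → ZMod N, ‖F c S β‖ ^ 2 =
      ∑ ζ : ZMod N, ∑ β : Fin 1 → ZMod N, ‖F c (cls S ζ) β‖ ^ 2 := by
  have key : (∑ β : Fin 1 → ZMod N, ((‖F c S β‖ ^ 2 : ℝ) : ℂ)) =
      ∑ ζ : ZMod N, ∑ β : Fin 1 → ZMod N, ((‖F c (cls S ζ) β‖ ^ 2 : ℝ) : ℂ) := by
    have hsq : ∀ z : ℂ, ((‖z‖ ^ 2 : ℝ) : ℂ) = z * (starRingEnd ℂ) z := by
      intro z; rw [Complex.mul_conj, Complex.normSq_eq_norm_sq]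
    simp_rw [hsq]
    have h1 : ∀ β : Fin 1 → ZMod N, F c S β * (starRingEnd ℂ) (F c S β) =
        ∑ ζ : ZMod N, ∑ ζ' : ZMod N, F c (cls S ζ) β * (starRingEnd ℂ) (F c (cls S ζ') β) := by
      intro β
      conv_lhs => rw [F_eq_sum_cls (M := N) c S β]
      rw [map_sum, Finset.sum_mul_sum]
    simp_rw [h1]
    rw [Finset.sum_comm]
    refine Finset.sum_congr rfl fun ζ _ => ?_
    rw [Finset.sum_comm]
    rw [Finset.sum_eq_single ζ]
    · intro ζ' _ hne
      have h2 : ∀ β : Fin 1 → ZMod N, F c (cls S ζ) β * (starRingEnd ℂ) (F c (cls S ζ') β) =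
          (∑ x ∈ cls S ζ, c x) * (starRingEnd ℂ) (∑ x ∈ cls S ζ', c x) *
            ZMod.stdAddChar (β 0 * (ζ - ζ')) := by
        intro β
        have hconj : (starRingEnd ℂ) (ZMod.stdAddChar (β 0 * ζ')) =
            ZMod.stdAddChar (-(β 0 * ζ')) := (AddChar.map_neg_eq_conj _ _).symm
        rw [F_cls_one, F_cls_one, (starRingEnd ℂ).map_mul, hconj, mul_sub, sub_eq_add_neg,
          AddChar.map_add_eq_mul]
        ring
      simp_rw [h2]
      rw [← Finset.mul_sum]
      have h3 : ∑ β : Fin 1 → ZMod N, ZMod.stdAddChar (β 0 * (ζ - ζ')) =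
          ∑ b : ZMod N, (ZMod.stdAddChar (b * (ζ - ζ')) : ℂ) :=
        Fintype.sum_equiv (Equiv.funUnique (Fin 1) (ZMod N)) _ _ (fun β => rfl)
      rw [h3, AddChar.sum_mulShift _ (ZMod.isPrimitive_stdAddChar N), if_neg (sub_ne_zero.2 hne.symm)]
      simp
    · intro h; exact absurd (Finset.mem_univ _) h
  exact_mod_cast key

/-- In degree `1` decoupling is orthogonality. -/
lemma dec_one (n : ℕ) : Dec p 1 n 1 := by
  intro S c
  have h : ∀ m, m = n → ∑ β : Fin 1 → ZMod (p ^ m), ‖F c S β‖ ^ 2 =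
      ∑ ζ : ZMod (p ^ n), ∑ β : Fin 1 → ZMod (p ^ m), ‖F c (cls S ζ) β‖ ^ 2 := by
    rintro m rfl; exact parseval c S
  have h1 := h (1 * n) (one_mul n)
  simpa [tri] using h1.le

/-- Decoupling for the moment curve of degree `k` over `ℤ_p`, with an arbitrarily small loss. -/
lemma expo_all (hp16 : 16 ≤ p) (k : ℕ) : 1 ≤ k → k < p → ∀ ε : ℝ, 0 < ε → Expo p k ε := by
  induction k using Nat.strong_induction_on with
  | _ k ih =>
    intro hk hkp ε hε
    rcases Nat.eq_or_lt_of_le hk with rfl | hk2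
    · refine Expo.mono (η := 0) ⟨1, le_rfl, fun n => ?_⟩ hε.le
      simpa using dec_one (p := p) n
    · obtain ⟨σ, hσ, himp⟩ := improve (p := p) hk2 hkp hp16
        (fun l hl hlk => ih l hlk hl (hlk.trans hkp)) ε hε
      by_contra hcon
      have h : ∀ m : ℕ, Expo p k ((k * (k + 1) : ℕ) - m * σ) := by
        intro m
        induction m with
        | zero => simpa using expo_triv (p := p) k hk
        | succ m im =>
          have h1 : ε ≤ (k * (k + 1) : ℕ) - m * σ := by
            by_contra hlt
            exact hcon (im.mono (not_le.1 hlt).le)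
          have := himp _ h1 im
          convert this using 1
          push_cast; ring
      obtain ⟨m, hm⟩ := exists_nat_ge (((k * (k + 1) : ℕ) : ℝ) / σ)
      rw [div_le_iff₀ hσ] at hm
      exact hcon ((h m).mono (by linarith))

end VMVT

/-! ### Vinogradov's mean value theorem -/

namespace VMVT

variable {p : ℕ} [hp : Fact p.Prime]

/-- The monomial phase `e(γ₁ x + ⋯ + γ_k x^k)` for `γ ∈ (ℝ/ℤ)^k`. -/
noncomputable def tph {k : ℕ} (γ : Fin k → UnitAddCircle) (x : ℤ) : ℂ :=
  AddCircle.toCircle (∑ j, x ^ (j.val + 1) • γ j)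

lemma norm_tph {k : ℕ} (γ : Fin k → UnitAddCircle) (x : ℤ) : ‖tph γ x‖ = 1 := Circle.norm_coe _

lemma continuous_tph {k : ℕ} (x : ℤ) : Continuous fun γ : Fin k → UnitAddCircle => tph γ x := by
  unfold tph
  refine continuous_subtype_val.comp (AddCircle.continuous_toCircle.comp ?_)
  fun_prop

lemma tph_add {k : ℕ} (γ γ' : Fin k → UnitAddCircle) (x : ℤ) :
    tph (γ + γ') x = tph γ x * tph γ' x := by
  simp only [tph, Pi.add_apply, smul_add, Finset.sum_add_distrib, AddCircle.toCircle_add,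
    Circle.coe_mul]

lemma tph_zmod {k N : ℕ} [NeZero N] (β : Fin k → ZMod N) (x : ℤ) :
    tph (fun j => ZMod.toAddCircle (β j)) x = ph β x := by
  have h1 : ∑ j : Fin k, x ^ (j.val + 1) • ZMod.toAddCircle (β j) =
      ZMod.toAddCircle (∑ j, β j * (x : ZMod N) ^ (j.val + 1)) := by
    rw [map_sum]
    refine Finset.sum_congr rfl fun j _ => ?_
    rw [← map_zsmul, zsmul_eq_mul, mul_comm]
    push_cast
    rfl
  rw [tph, h1]
  rfl

lemma volume_torus {ι : Type*} [Fintype ι] : (volume : Measure (ι → UnitAddCircle)) Set.univ = 1 := by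
  rw [← Set.pi_univ Set.univ, volume_pi_pi]
  simp

instance {ι : Type*} [Fintype ι] : IsProbabilityMeasure (volume : Measure (ι → UnitAddCircle)) :=
  ⟨volume_torus⟩

/-- Vinogradov's mean value theorem at the critical exponent, with bounded coefficients. -/
lemma vinogradov (k : ℕ) (hk : 1 ≤ k) (hk16 : k < p) (hp16 : 16 ≤ p) (ε : ℝ) (hε : 0 < ε) :
    ∃ C : ℝ, 0 < C ∧ ∀ (Y : ℕ), 1 ≤ Y → ∀ c : ℤ → ℂ, (∀ x, ‖c x‖ ≤ 1) →
      ∫ γ : Fin k → UnitAddCircle, ‖∑ x ∈ Finset.Icc (-(Y : ℤ)) Y, c x * tph γ x‖ ^ (k * (k + 1)) ≤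
        C * (Y : ℝ) ^ (tri k + ε) := by
  obtain ⟨C, hC, hD⟩ := expo_all (p := p) hp16 k hk hk16 ε hε
  refine ⟨C * (2 * p : ℝ) ^ (tri k + ε), by have := p_pos (p := p); positivity, fun Y hY c hc => ?_⟩
  set n := Nat.log p (2 * Y) + 1 with hn
  have hn1 : 2 * Y < p ^ n := Nat.lt_pow_succ_log_self hp.out.one_lt _
  have hn2 : (p : ℝ) ^ n ≤ 2 * p * Y := by
    have := Nat.pow_log_le_self p (show 2 * Y ≠ 0 by omega)
    have h2 : ((p ^ Nat.log p (2 * Y) : ℕ) : ℝ) ≤ (2 * Y : ℕ) := by exact_mod_cast this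
    rw [hn, pow_succ]
    push_cast at h2
    nlinarith [p_pos (p := p)]
  set S := Finset.Icc (-(Y : ℤ)) Y with hS
  set N := p ^ (k * n) with hN
  set P := k * (k + 1) with hP
  set g : (Fin k → UnitAddCircle) → ℝ := fun γ => ‖∑ x ∈ S, c x * tph γ x‖ ^ P with hg
  have hgc : Continuous g := by
    refine (continuous_norm.comp (continuous_finsetSum _ fun x _ => ?_)).pow P
    exact continuous_const.mul (continuous_tph x)
  have hgi : ∀ b : Fin k → UnitAddCircle, Integrable (fun γ => g (γ + b)) volume := fun b =>
    (hgc.comp (continuous_id.add continuous_const)).integrable_of_hasCompactSupport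
      (HasCompactSupport.of_compactSpace _)
  have hinv : ∀ b : Fin k → UnitAddCircle, ∫ γ, g (γ + b) = ∫ γ, g γ := fun b =>
    MeasureTheory.integral_add_right_eq_self g b
  have hpt : ∀ γ, ∑ β : Fin k → ZMod N, g (γ + fun j => ZMod.toAddCircle (β j)) ≤
      C * (p : ℝ) ^ (ε * n) * (p : ℝ) ^ (n * (tri k - 1)) * ((p : ℝ) ^ n * (N : ℝ) ^ k) := by
    intro γ
    have h1 : ∀ β : Fin k → ZMod N, g (γ + fun j => ZMod.toAddCircle (β j)) =
        ‖F (fun x => c x * tph γ x) S β‖ ^ P := by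
      intro β
      simp only [hg, F, tph_add, tph_zmod, mul_assoc]
    simp_rw [h1]
    refine (hD n S _).trans ?_
    have hC0 : 0 ≤ C := by linarith
    refine mul_le_mul_of_nonneg_left ?_ (by positivity)
    have h2 : ∀ ζ : ZMod (p ^ n), ∀ β : Fin k → ZMod N,
        ‖F (fun x => c x * tph γ x) (cls S ζ) β‖ ^ (k * (k + 1)) ≤ 1 := by
      intro ζ β
      refine pow_le_one₀ (norm_nonneg _) ?_
      have hcard : (cls S ζ).card ≤ 1 := by
        rw [Finset.card_le_one]
        intro x hx y hy
        rw [mem_cls, hS, Finset.mem_Icc] at hx hy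
        have hxy : ((p ^ n : ℕ) : ℤ) ∣ y - x := by
          rw [← ZMod.intCast_eq_intCast_iff_dvd_sub, hx.2, hy.2]
        have := Int.eq_zero_of_abs_lt_dvd hxy (by
          rw [abs_lt]
          have : (2 * Y : ℤ) < (p ^ n : ℕ) := by exact_mod_cast hn1
          constructor <;> omega)
        omega
      refine (norm_sum_le _ _).trans ?_
      refine (Finset.sum_le_card_nsmul _ _ 1 fun x _ => ?_).trans ?_
      · rw [norm_mul, norm_mul, norm_tph, norm_ph, mul_one, mul_one]; exact hc x
      · simpa using hcard
    refine (Finset.sum_le_sum fun ζ _ => Finset.sum_le_sum fun β _ => h2 ζ β).trans (le_of_eq ?_)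
    simp [ZMod.card]
  have hsum : (N : ℝ) ^ k * ∫ γ, g γ ≤
      C * (p : ℝ) ^ (ε * n) * (p : ℝ) ^ (n * (tri k - 1)) * ((p : ℝ) ^ n * (N : ℝ) ^ k) := by
    have h1 : ∫ γ, ∑ β : Fin k → ZMod N, g (γ + fun j => ZMod.toAddCircle (β j)) =
        (N : ℝ) ^ k * ∫ γ, g γ := by
      rw [integral_finsetSum _ fun β _ => hgi _]
      simp_rw [hinv]
      simp [ZMod.card]
    rw [← h1]
    refine (integral_mono (integrable_finsetSum _ fun β _ => hgi _) (integrable_const _) hpt).trans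
      (le_of_eq ?_)
    simp
  have hN0 : (0 : ℝ) < (N : ℝ) ^ k := by
    have : 0 < N := pow_pos hp.out.pos _
    positivity
  have h3 : ∫ γ, g γ ≤ C * ((p : ℝ) ^ (ε * n) * (p : ℝ) ^ (n * (tri k - 1)) * (p : ℝ) ^ n) := by
    refine le_of_mul_le_mul_left (hsum.trans (le_of_eq (by ring))) hN0
  refine h3.trans ?_
  have h4 : (p : ℝ) ^ (ε * n) * (p : ℝ) ^ (n * (tri k - 1)) * (p : ℝ) ^ n =
      ((p : ℝ) ^ n) ^ (tri k + ε) := by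
    have ht := tri_pos hk
    rw [mul_assoc, ← pow_add, ← Real.rpow_natCast, ← Real.rpow_natCast, ← Real.rpow_add p_pos,
      ← Real.rpow_mul p_pos.le]
    congr 1
    have : n * (tri k - 1) + n = n * tri k := by
      obtain ⟨m, hm⟩ : ∃ m, tri k = m + 1 := ⟨tri k - 1, by omega⟩
      rw [hm, Nat.add_sub_cancel]; ring
    rw [this]; push_cast; ring
  rw [h4, mul_assoc, ← Real.mul_rpow (by have := p_pos (p := p); positivity) (by positivity)]
  refine mul_le_mul_of_nonneg_left (Real.rpow_le_rpow (by positivity) hn2 (by positivity))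
    (by linarith)

end VMVT

/-! ### Incomplete sums -/

namespace VMVT

lemma sum_Ico_int {M : Type*} [AddCommMonoid M] (a : ℤ) (n : ℕ) (f : ℤ → M) :
    ∑ x ∈ Finset.Ico a (a + n), f x = ∑ i ∈ Finset.range n, f (a + i) := by
  symm
  refine Finset.sum_nbij (fun i : ℕ => a + (i : ℤ)) ?_ ?_ ?_ (fun _ _ => rfl)
  · intro i hi
    simp only [Finset.mem_range, Finset.mem_Ico] at hi ⊢
    omega
  · intro i _ j _ h
    simpa using h
  · intro x hx
    simp only [Finset.coe_Ico, Set.mem_Ico] at hx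
    exact ⟨(x - a).toNat, by simp only [Finset.coe_range, Set.mem_Iio]; omega, by simp only; omega⟩

lemma norm_toCircle_sub_one (θ : ℝ) :
    ‖(AddCircle.toCircle (θ : UnitAddCircle) : ℂ) - 1‖ =
      2 * |Real.sin (Real.pi * (θ - round θ))| := by
  have h0 : ((θ : ℝ) : UnitAddCircle) = ((θ - round θ : ℝ) : UnitAddCircle) := by
    rw [AddCircle.coe_sub]
    have : ((round θ : ℝ) : UnitAddCircle) = 0 := by
      rw [AddCircle.coe_eq_zero_iff]
      exact ⟨round θ, by simp⟩
    rw [this, sub_zero]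
  rw [h0, AddCircle.toCircle_apply_mk, Circle.coe_exp, mul_comm _ Complex.I,
    Complex.norm_exp_I_mul_ofReal_sub_one]
  rw [Real.norm_eq_abs, abs_mul, abs_two]
  congr 3
  ring

lemma four_norm_le (t : UnitAddCircle) : 4 * ‖t‖ ≤ ‖(AddCircle.toCircle t : ℂ) - 1‖ := by
  induction t using QuotientAddGroup.induction_on with
  | H θ =>
    change 4 * ‖(θ : UnitAddCircle)‖ ≤ ‖(AddCircle.toCircle (θ : UnitAddCircle) : ℂ) - 1‖
    rw [norm_toCircle_sub_one, UnitAddCircle.norm_eq]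
    have h1 := abs_sub_round θ
    have hpi := Real.pi_pos
    have h2 := Real.mul_abs_le_abs_sin (x := Real.pi * (θ - round θ)) (by
      rw [abs_mul, abs_of_pos hpi]; nlinarith)
    rw [abs_mul, abs_of_pos hpi] at h2
    have h3 : 2 / Real.pi * (Real.pi * |θ - round θ|) = 2 * |θ - round θ| := by field_simp
    linarith

lemma norm_sub_one_le (t : UnitAddCircle) :
    ‖(AddCircle.toCircle t : ℂ) - 1‖ ≤ 2 * Real.pi * ‖t‖ := by
  induction t using QuotientAddGroup.induction_on with
  | H θ =>
    change ‖(AddCircle.toCircle (θ : UnitAddCircle) : ℂ) - 1‖ ≤ 2 * Real.pi * ‖(θ : UnitAddCircle)‖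
    rw [norm_toCircle_sub_one, UnitAddCircle.norm_eq]
    have h2 := Real.abs_sin_le_abs (x := Real.pi * (θ - round θ))
    rw [abs_mul, abs_of_pos Real.pi_pos] at h2
    linarith

/-- The shift of the linear coefficient by `h / N`. -/
noncomputable def linShift {N : ℕ} [NeZero N] (h : ZMod N) : Fin 5 → UnitAddCircle :=
  Pi.single 0 (ZMod.toAddCircle h)

lemma tph_linShift {N : ℕ} [NeZero N] (h : ZMod N) (x : ℤ) :
    tph (linShift h) x = ZMod.stdAddChar (h * (x : ZMod N)) := by
  have h1 : ∑ j : Fin 5, x ^ (j.val + 1) • linShift h j = ZMod.toAddCircle (h * (x : ZMod N)) := by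
    rw [Finset.sum_eq_single 0]
    · simp only [linShift, Pi.single_eq_same]
      rw [← map_zsmul, zsmul_eq_mul, mul_comm]
      simp
    · intro j _ hj
      simp [linShift, hj]
    · simp
  rw [tph, h1]
  rfl

/-- A bound for the normalised Fourier coefficients modulo `N` of an interval. -/
noncomputable def kbd (N : ℕ) [NeZero N] (h : ZMod N) : ℝ :=
  if h = 0 then 1 else 1 / h.val + 1 / (N - h.val)

lemma kbd_nonneg (N : ℕ) [NeZero N] (h : ZMod N) : 0 ≤ kbd N h := by
  have h1 : (h.val : ℝ) < N := by exact_mod_cast ZMod.val_lt h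
  unfold kbd
  split_ifs
  · positivity
  · have : 0 < (N : ℝ) - h.val := by linarith
    positivity

lemma norm_geom_le {N : ℕ} [NeZero N] (h : ZMod N) (a : ℤ) (n : ℕ) (hn : n ≤ N) :
    ‖∑ i ∈ Finset.range n, ZMod.stdAddChar (-(h * ((a + i : ℤ) : ZMod N)))‖ ≤ N * kbd N h := by
  have hN : (0 : ℝ) < N := by exact_mod_cast Nat.pos_of_ne_zero (NeZero.ne N)
  unfold kbd
  split_ifs with h0
  · refine (norm_sum_le _ _).trans ((Finset.sum_le_card_nsmul _ _ 1 fun i _ => ?_).trans ?_)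
    · rw [AddChar.norm_apply]
    · simpa using hn
  · set z : ℂ := ZMod.stdAddChar (-h) with hz
    have hz1 : ‖z‖ = 1 := AddChar.norm_apply _ _
    have hsum : ∑ i ∈ Finset.range n, ZMod.stdAddChar (-(h * ((a + i : ℤ) : ZMod N))) =
        ZMod.stdAddChar (-(h * (a : ZMod N))) * ∑ i ∈ Finset.range n, z ^ i := by
      rw [Finset.mul_sum]
      refine Finset.sum_congr rfl fun i _ => ?_
      rw [hz, ← AddChar.map_nsmul_eq_pow, ← AddChar.map_add_eq_mul]
      congr 1
      rw [nsmul_eq_mul]; push_cast; ring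
    set v := h.val with hv
    have hvN : (v : ℝ) < N := by exact_mod_cast ZMod.val_lt h
    have hv0 : (0 : ℝ) < v := by
      have : v ≠ 0 := by rw [hv, Ne, ZMod.val_eq_zero]; exact h0
      exact_mod_cast Nat.pos_of_ne_zero this
    have hd : 0 < (N : ℝ) - v := by linarith
    have hnorm : min (v : ℝ) (N - v) / N ≤ ‖ZMod.toAddCircle h‖ := by
      rw [ZMod.toAddCircle_apply, ← hv, UnitAddCircle.norm_eq]
      set θ : ℝ := v / N with hθ
      have e1 : min (v : ℝ) (N - v) / N ≤ θ := by
        rw [hθ]; gcongr; exact min_le_left _ _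
      have e2 : min (v : ℝ) (N - v) / N ≤ 1 - θ := by
        have : 1 - θ = (N - v) / N := by rw [hθ]; field_simp
        rw [this]; gcongr; exact min_le_right _ _
      rcases le_or_gt (round θ) 0 with hr | hr
      · have : (round θ : ℝ) ≤ 0 := by exact_mod_cast hr
        exact (by linarith : _ ≤ θ - round θ).trans (le_abs_self _)
      · have : (1 : ℝ) ≤ round θ := by exact_mod_cast hr
        exact (by linarith : _ ≤ -(θ - round θ)).trans (neg_le_abs _)
    have hz2 : 4 * (min (v : ℝ) (N - v) / N) ≤ ‖z - 1‖ := by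
      have h1 := four_norm_le (ZMod.toAddCircle (-h))
      rw [map_neg, norm_neg, ← map_neg] at h1
      have h2 : z = (AddCircle.toCircle (ZMod.toAddCircle (-h)) : ℂ) := rfl
      rw [← h2] at h1
      linarith
    have hm : 0 < min (v : ℝ) (N - v) := lt_min hv0 hd
    have hzpos : 0 < ‖z - 1‖ := lt_of_lt_of_le (by positivity) hz2
    have hzne : z ≠ 1 := by
      intro hz; rw [hz] at hzpos; simp at hzpos
    rw [hsum, norm_mul, AddChar.norm_apply, one_mul, geom_sum_eq hzne, norm_div]
    have hnum : ‖z ^ n - 1‖ ≤ 2 := by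
      refine (norm_sub_le _ _).trans ?_
      rw [norm_pow, hz1]; norm_num
    have hinv : 1 / min (v : ℝ) (N - v) ≤ 1 / v + 1 / (N - v) := by
      rcases min_choice (v : ℝ) (N - v) with h | h <;> rw [h]
      · have : 0 ≤ 1 / ((N : ℝ) - v) := by positivity
        linarith
      · have : 0 ≤ 1 / (v : ℝ) := by positivity
        linarith
    calc ‖z ^ n - 1‖ / ‖z - 1‖ ≤ 2 / (4 * (min (v : ℝ) (N - v) / N)) := by gcongr
      _ = N * (1 / min (v : ℝ) (N - v)) / 2 := by field_simp; norm_num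
      _ ≤ N * (1 / min (v : ℝ) (N - v)) := by
        have : 0 ≤ N * (1 / min (v : ℝ) (N - v)) := by positivity
        linarith
      _ ≤ _ := by gcongr

lemma sum_kbd (N : ℕ) [NeZero N] : ∑ h : ZMod N, kbd N h ≤ 3 + 2 * Real.log N := by
  have hN : 0 < N := Nat.pos_of_ne_zero (NeZero.ne N)
  obtain ⟨m, rfl⟩ : ∃ m, N = m + 1 := ⟨N - 1, by omega⟩
  have h1 : ∑ h : ZMod (m + 1), kbd (m + 1) h = ∑ v ∈ Finset.range (m + 1),
      (if v = 0 then (1 : ℝ) else 1 / v + 1 / ((m + 1 : ℕ) - v)) := by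
    rw [← Fin.sum_univ_eq_sum_range (fun v => if v = 0 then (1 : ℝ) else
      1 / (v : ℝ) + 1 / (((m + 1 : ℕ) : ℝ) - v))]
    refine Finset.sum_congr rfl fun h _ => ?_
    unfold kbd
    have : h = 0 ↔ (h : Fin (m + 1)).val = 0 := Fin.ext_iff
    simp only [this]
    rfl
  rw [h1, Finset.sum_range_succ']
  simp only [Nat.add_eq_zero_iff, one_ne_zero, and_false, if_false, if_true]
  rw [Finset.sum_add_distrib]
  have h2 : ∑ i ∈ Finset.range m, 1 / ((i + 1 : ℕ) : ℝ) = (harmonic m : ℝ) := by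
    simp [harmonic]
  have h3 : ∑ i ∈ Finset.range m, 1 / (((m + 1 : ℕ) : ℝ) - ((i + 1 : ℕ) : ℝ)) = (harmonic m : ℝ) := by
    rw [← h2, ← Finset.sum_range_reflect]
    refine Finset.sum_congr rfl fun i hi => ?_
    rw [Finset.mem_range] at hi
    congr 1
    have : ((m - 1 - i : ℕ) : ℝ) = m - 1 - i := by
      rw [Nat.cast_sub (by omega), Nat.cast_sub (by omega)]; simp
    push_cast
    rw [this]; ring
  rw [h2, h3]
  have h4 := harmonic_le_one_add_log m
  have h5 : Real.log m ≤ Real.log (m + 1 : ℕ) := by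
    rcases Nat.eq_zero_or_pos m with rfl | hm
    · simp
    · apply Real.log_le_log (by exact_mod_cast hm); push_cast; linarith
  linarith

/-- Completion: a sum over a subinterval is controlled by the complete sums twisted by additive
characters modulo `N`. -/
lemma completion {N : ℕ} [NeZero N] (Y : ℕ) (hN : N = 2 * Y + 1) (u : ℤ → ℂ) (a : ℤ) (n : ℕ)
    (ha : -(Y : ℤ) ≤ a) (hb : a + n ≤ Y + 1) :
    ‖∑ i ∈ Finset.range n, u (a + i)‖ ≤ ∑ h : ZMod N, kbd N h *
      ‖∑ z ∈ Finset.Icc (-(Y : ℤ)) Y, u z * ZMod.stdAddChar (h * (z : ZMod N))‖ := by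
  have hN0 : (0 : ℝ) < N := by exact_mod_cast Nat.pos_of_ne_zero (NeZero.ne N)
  have hNC : (N : ℂ) ≠ 0 := by exact_mod_cast hN0.ne'
  have key : (N : ℂ) * ∑ i ∈ Finset.range n, u (a + i) = ∑ h : ZMod N,
      (∑ i ∈ Finset.range n, ZMod.stdAddChar (-(h * ((a + i : ℤ) : ZMod N)))) *
      ∑ z ∈ Finset.Icc (-(Y : ℤ)) Y, u z * ZMod.stdAddChar (h * (z : ZMod N)) := by
    simp_rw [Finset.sum_mul_sum]
    rw [Finset.sum_comm, Finset.mul_sum]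
    refine Finset.sum_congr rfl fun i hi => ?_
    rw [Finset.mem_range] at hi
    rw [Finset.sum_comm, Finset.sum_eq_single (a + i : ℤ)]
    · have : ∀ h : ZMod N, ZMod.stdAddChar (-(h * ((a + i : ℤ) : ZMod N))) *
          (u (a + i) * ZMod.stdAddChar (h * ((a + i : ℤ) : ZMod N))) = u (a + i) := by
        intro h
        rw [mul_left_comm, ← AddChar.map_add_eq_mul, neg_add_cancel, AddChar.map_zero_eq_one, mul_one]
      simp_rw [this]
      simp [ZMod.card]
    · intro z hz hne
      have : ∀ h : ZMod N, ZMod.stdAddChar (-(h * ((a + i : ℤ) : ZMod N))) *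
          (u z * ZMod.stdAddChar (h * (z : ZMod N))) =
          u z * ZMod.stdAddChar (h * ((z : ZMod N) - ((a + i : ℤ) : ZMod N))) := by
        intro h
        rw [mul_left_comm, ← AddChar.map_add_eq_mul]
        congr 2
        ring
      simp_rw [this]
      rw [← Finset.mul_sum, AddChar.sum_mulShift _ (ZMod.isPrimitive_stdAddChar N), if_neg]
      · simp
      · rw [sub_eq_zero, eq_comm, ZMod.intCast_eq_intCast_iff_dvd_sub]
        intro hd
        rw [Finset.mem_Icc] at hz
        have := Int.eq_zero_of_abs_lt_dvd hd (by rw [abs_lt]; constructor <;> omega)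
        omega
    · intro h
      exfalso; apply h
      rw [Finset.mem_Icc]; omega
  have h1 : (N : ℝ) * ‖∑ i ∈ Finset.range n, u (a + i)‖ ≤ ∑ h : ZMod N, (N * kbd N h) *
      ‖∑ z ∈ Finset.Icc (-(Y : ℤ)) Y, u z * ZMod.stdAddChar (h * (z : ZMod N))‖ := by
    have : (N : ℝ) * ‖∑ i ∈ Finset.range n, u (a + i)‖ =
        ‖(N : ℂ) * ∑ i ∈ Finset.range n, u (a + i)‖ := by rw [norm_mul]; simp
    rw [this, key]
    refine (norm_sum_le _ _).trans (Finset.sum_le_sum fun h _ => ?_)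
    rw [norm_mul]
    refine mul_le_mul_of_nonneg_right (norm_geom_le h a n (by omega)) (norm_nonneg _)
  simp_rw [mul_assoc, ← Finset.mul_sum] at h1
  exact le_of_mul_le_mul_left h1 hN0

/-- Jensen's inequality with weights `k i` of arbitrary total mass. -/
lemma weighted_pow {ι : Type*} [Fintype ι] (k D : ι → ℝ) (hk : ∀ i, 0 ≤ k i) (hD : ∀ i, 0 ≤ D i)
    (n : ℕ) : (∑ i, k i * D i) ^ (n + 1) ≤ (∑ i, k i) ^ n * ∑ i, k i * D i ^ (n + 1) := by
  rcases (Finset.sum_nonneg fun i (_ : i ∈ Finset.univ) => hk i).eq_or_lt with h0 | hpos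
  · have : ∀ i, k i = 0 := by
      intro i
      exact (Finset.sum_eq_zero_iff_of_nonneg fun i _ => hk i).1 h0.symm i (Finset.mem_univ i)
    simp [this]
  · set K := ∑ i, k i with hK
    have h1 := Real.pow_arith_mean_le_arith_mean_pow Finset.univ (fun i => k i / K) D
      (fun i _ => div_nonneg (hk i) hpos.le) (by rw [← Finset.sum_div, div_self hpos.ne'])
      (fun i _ => hD i) (n + 1)
    have h2 : ∀ m, ∑ i, k i / K * D i ^ m = (∑ i, k i * D i ^ m) / K := by
      intro m; rw [Finset.sum_div]; exact Finset.sum_congr rfl fun i _ => by ring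
    have h3 := h2 1
    simp only [pow_one] at h3
    rw [h3, h2, div_pow, div_le_div_iff₀ (by positivity) hpos, pow_succ K] at h1
    have h4 : (∑ i, k i * D i) ^ (n + 1) * K ≤ ((∑ i, k i * D i ^ (n + 1)) * K ^ n) * K := by
      linarith
    have := le_of_mul_le_mul_right h4 hpos
    linarith

/-- A majorant for all incomplete Vinogradov sums, satisfying the mean value bound. -/
lemma maximal (ε : ℝ) (hε : 0 < ε) : ∃ C : ℝ, 0 < C ∧ ∀ Y : ℕ, 1 ≤ Y →
    ∃ G : (Fin 5 → UnitAddCircle) → ℝ, Continuous G ∧ (∀ γ, 0 ≤ G γ) ∧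
      (∀ γ (a : ℤ) (n : ℕ), -(Y : ℤ) ≤ a → a + n ≤ Y + 1 →
        ‖∑ i ∈ Finset.range n, tph γ (a + i)‖ ^ 30 ≤ G γ) ∧
      ∫ γ, G γ ≤ C * (Y : ℝ) ^ (15 + ε) := by
  have : Fact (Nat.Prime 17) := ⟨by norm_num⟩
  obtain ⟨C, hC, hV⟩ := vinogradov (p := 17) 5 (by norm_num) (by norm_num) (by norm_num)
    (ε / 2) (by linarith)
  set δ := ε / 60 with hδ
  have hδ0 : 0 < δ := by rw [hδ]; linarith
  refine ⟨(3 + 2 * 3 ^ δ / δ) ^ 30 * C, by positivity, fun Y hY => ?_⟩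
  have hY1 : (1 : ℝ) ≤ Y := by exact_mod_cast hY
  set N := 2 * Y + 1 with hN
  have : NeZero N := ⟨by omega⟩
  set D : (Fin 5 → UnitAddCircle) → ℝ := fun γ => ‖∑ z ∈ Finset.Icc (-(Y : ℤ)) Y, tph γ z‖ with hD
  have hDc : Continuous D :=
    continuous_norm.comp (continuous_finsetSum _ fun x _ => continuous_tph x)
  set K := ∑ h : ZMod N, kbd N h with hK
  have hK0 : 0 ≤ K := Finset.sum_nonneg fun h _ => kbd_nonneg N h
  have hDi : ∀ b : Fin 5 → UnitAddCircle, Integrable (fun γ => D (γ + b) ^ 30) volume := fun b =>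
    ((hDc.comp (continuous_id.add continuous_const)).pow 30).integrable_of_hasCompactSupport
      (HasCompactSupport.of_compactSpace _)
  refine ⟨fun γ => K ^ 29 * ∑ h : ZMod N, kbd N h * D (γ + linShift h) ^ 30, ?_, ?_, ?_, ?_⟩
  · refine continuous_const.mul (continuous_finsetSum _ fun h _ => continuous_const.mul ?_)
    exact (hDc.comp (continuous_id.add continuous_const)).pow 30
  · intro γ
    refine mul_nonneg (by positivity) (Finset.sum_nonneg fun h _ => mul_nonneg (kbd_nonneg N h) ?_)
    positivity
  · intro γ a n ha hb
    have h1 := completion (N := N) Y hN (tph γ) a n ha hb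
    have h2 : ∀ h : ZMod N, ‖∑ z ∈ Finset.Icc (-(Y : ℤ)) Y,
        tph γ z * ZMod.stdAddChar (h * (z : ZMod N))‖ = D (γ + linShift h) := by
      intro h
      simp only [hD, tph_add, tph_linShift]
    simp_rw [h2] at h1
    calc _ ≤ (∑ h : ZMod N, kbd N h * D (γ + linShift h)) ^ 30 := by gcongr
      _ ≤ _ := weighted_pow _ _ (kbd_nonneg N) (fun h => norm_nonneg _) 29
  · have hVY : ∫ γ, D γ ^ 30 ≤ C * (Y : ℝ) ^ (15 + ε / 2) := by
      have := hV Y hY (fun _ => 1) (by simp)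
      simpa [tri, one_mul] using this
    have hinv : ∀ b : Fin 5 → UnitAddCircle, ∫ γ, D (γ + b) ^ 30 = ∫ γ, D γ ^ 30 := fun b =>
      MeasureTheory.integral_add_right_eq_self (fun γ => D γ ^ 30) b
    rw [integral_const_mul, integral_finsetSum _ fun h _ => (hDi _).const_mul _]
    simp_rw [integral_const_mul, hinv]
    rw [← Finset.sum_mul, ← hK]
    have hKb : K ≤ (3 + 2 * 3 ^ δ / δ) * (Y : ℝ) ^ δ := by
      have h1 := sum_kbd N
      have h2 : Real.log N ≤ Real.log (3 * Y) := by
        apply Real.log_le_log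
        · rw [hN]; push_cast; positivity
        · rw [hN]; push_cast; linarith
      have h3 := Real.log_le_rpow_div (x := 3 * Y) (by positivity) hδ0
      rw [Real.mul_rpow (by norm_num) (by positivity)] at h3
      have h4 : 1 ≤ (Y : ℝ) ^ δ := Real.one_le_rpow hY1 hδ0.le
      have h5 : (3 + 2 * 3 ^ δ / δ) * (Y : ℝ) ^ δ = 3 * (Y : ℝ) ^ δ + 2 * (3 ^ δ * (Y : ℝ) ^ δ / δ) := by
        ring
      rw [h5]; linarith
    have hpow : ((Y : ℝ) ^ δ) ^ 30 * (Y : ℝ) ^ (15 + ε / 2) = (Y : ℝ) ^ (15 + ε) := by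
      rw [← Real.rpow_natCast, ← Real.rpow_mul (by positivity), ← Real.rpow_add (by linarith)]
      congr 1
      rw [hδ]; push_cast; ring
    have hI0 : 0 ≤ ∫ γ, D γ ^ 30 := integral_nonneg fun γ => pow_nonneg (norm_nonneg _) 30
    clear_value D K
    generalize (∫ γ, D γ ^ 30) = I at hVY hI0 ⊢
    generalize (3 + 2 * 3 ^ δ / δ) = B at hKb ⊢
    have hb : 0 ≤ B * (Y : ℝ) ^ δ := hK0.trans hKb
    calc K ^ 29 * (K * I) = K ^ 30 * I := by ring
      _ ≤ (B * (Y : ℝ) ^ δ) ^ 30 * (C * (Y : ℝ) ^ (15 + ε / 2)) :=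
        mul_le_mul (pow_le_pow_left₀ hK0 hKb 30) hVY hI0 (pow_nonneg hb 30)
      _ = B ^ 30 * C * (((Y : ℝ) ^ δ) ^ 30 * (Y : ℝ) ^ (15 + ε / 2)) := by
        rw [mul_pow]; ring
      _ = _ := by rw [hpow]

end VMVT

/-! ### Shifts of the variable and near-periods -/

namespace VMVT

/-- The five-dimensional torus of coefficients `(γ₁, …, γ₅)`. -/
abbrev T5 : Type := Fin 5 → UnitAddCircle

/-- The three-dimensional torus. -/
abbrev T3 : Type := Fin 3 → UnitAddCircle

/-- The action on coefficients of the substitution `x ↦ x - y` (the constant term is dropped). -/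
noncomputable def shiftHom (y : ℤ) : T5 →+ T5 where
  toFun β := ![β 0 - (2 * y) • β 1 + (3 * y ^ 2) • β 2 - (4 * y ^ 3) • β 3 + (5 * y ^ 4) • β 4,
    β 1 - (3 * y) • β 2 + (6 * y ^ 2) • β 3 - (10 * y ^ 3) • β 4,
    β 2 - (4 * y) • β 3 + (10 * y ^ 2) • β 4, β 3 - (5 * y) • β 4, β 4]
  map_zero' := by
    funext j; fin_cases j <;> simp
  map_add' β β' := by
    funext j; fin_cases j <;> simp <;> abel

lemma shiftHom_apply (y : ℤ) (β : T5) : shiftHom y β =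
    ![β 0 - (2 * y) • β 1 + (3 * y ^ 2) • β 2 - (4 * y ^ 3) • β 3 + (5 * y ^ 4) • β 4,
    β 1 - (3 * y) • β 2 + (6 * y ^ 2) • β 3 - (10 * y ^ 3) • β 4,
    β 2 - (4 * y) • β 3 + (10 * y ^ 2) • β 4, β 3 - (5 * y) • β 4, β 4] := rfl

lemma shiftHom_shiftHom (y z : ℤ) (β : T5) : shiftHom y (shiftHom z β) = shiftHom (y + z) β := by
  funext j
  fin_cases j <;> simp [shiftHom_apply] <;> module

lemma shiftHom_zero (β : T5) : shiftHom 0 β = β := by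
  funext j
  fin_cases j <;> simp [shiftHom_apply]

lemma continuous_shiftHom (y : ℤ) : Continuous (shiftHom y) := by
  change Continuous fun β : T5 => shiftHom y β
  simp only [shiftHom_apply]
  refine continuous_pi fun j => ?_
  fin_cases j <;> simp <;> fun_prop

lemma surjective_shiftHom (y : ℤ) : Function.Surjective (shiftHom y) := fun β =>
  ⟨shiftHom (-y) β, by rw [shiftHom_shiftHom, add_neg_cancel, shiftHom_zero]⟩

lemma tph_shiftHom (y : ℤ) (β : T5) (x : ℤ) :
    tph (shiftHom y β) (x + y) = tph (shiftHom y β) y * tph β x := by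
  rw [tph, tph, tph, ← Circle.coe_mul, ← AddCircle.toCircle_add]
  congr 2
  simp [Fin.sum_univ_five, shiftHom_apply]
  module

lemma norm_sum_shiftHom (y : ℤ) (β : T5) (a : ℤ) (n : ℕ) :
    ‖∑ i ∈ Finset.range n, tph β (a + i)‖ =
      ‖∑ i ∈ Finset.range n, tph (shiftHom y β) (a + y + i)‖ := by
  have : ∀ i : ℕ, tph (shiftHom y β) (a + y + i) = tph (shiftHom y β) y * tph β (a + i) := by
    intro i
    rw [← tph_shiftHom]
    congr 1; ring
  simp_rw [this, ← Finset.mul_sum, norm_mul, norm_tph, one_mul]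

/-- Abel summation. -/
lemma abel_bound (c u : ℕ → ℂ) (n : ℕ) {M B : ℝ} (hM : 0 ≤ M)
    (hu : ∀ m ≤ n, ‖∑ i ∈ Finset.range m, u i‖ ≤ M) (hc : ∀ i < n, ‖c i‖ ≤ B) (hB : 0 ≤ B) :
    ‖∑ i ∈ Finset.range n, c i * u i‖ ≤
      M * (B + ∑ i ∈ Finset.range (n - 1), ‖c (i + 1) - c i‖) := by
  have h := Finset.sum_range_by_parts c u n
  simp only [smul_eq_mul] at h
  rw [h, mul_add]
  refine (norm_sub_le _ _).trans (add_le_add ?_ ?_)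
  · rw [norm_mul, mul_comm]
    rcases Nat.eq_zero_or_pos n with rfl | hn
    · simpa using mul_nonneg hM hB
    · exact mul_le_mul (hu n le_rfl) (hc _ (by omega)) (norm_nonneg _) hM
  · rw [Finset.mul_sum]
    refine (norm_sum_le _ _).trans (Finset.sum_le_sum fun i hi => ?_)
    rw [Finset.mem_range] at hi
    rw [norm_mul, mul_comm]
    exact mul_le_mul_of_nonneg_right (hu _ (by omega)) (norm_nonneg _)

lemma norm_zsmul_le' (d : ℤ) (t : UnitAddCircle) : ‖d • t‖ ≤ |(d : ℝ)| * ‖t‖ := by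
  have := norm_zsmul_le d t
  rwa [Int.norm_eq_abs] at this

/-- The coefficient vector with only even-degree entries. -/
def evenPart (s t : UnitAddCircle) : T5 := ![0, s, 0, t, 0]

lemma norm_tph_sub (γ : T5) (x : ℤ) :
    ‖tph γ (x + 1) - tph γ x‖ ≤
      2 * Real.pi * ‖∑ j : Fin 5, ((x + 1) ^ (j.val + 1) - x ^ (j.val + 1)) • γ j‖ := by
  have h1 : tph γ (x + 1) - tph γ x = tph γ x *
      ((AddCircle.toCircle (∑ j : Fin 5, ((x + 1) ^ (j.val + 1) - x ^ (j.val + 1)) • γ j) : ℂ) - 1) := by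
    rw [mul_sub, mul_one, tph, tph, ← Circle.coe_mul, ← AddCircle.toCircle_add]
    congr 3
    rw [← Finset.sum_add_distrib]
    refine Finset.sum_congr rfl fun j _ => ?_
    rw [← add_zsmul]; congr 1; ring
  rw [h1, norm_mul, norm_tph, one_mul]
  exact norm_sub_one_le _

/-- The even-degree perturbation has total variation `O(1)` on `[-L, L]`. -/
lemma even_variation {L : ℕ} (hL : 1 ≤ L) {s t : UnitAddCircle} (hs : ‖s‖ ≤ 1 / (L : ℝ) ^ 2)
    (ht : ‖t‖ ≤ 1 / (L : ℝ) ^ 4) (x : ℤ) (h1 : -(L : ℤ) ≤ x) (h2 : x + 1 ≤ L) :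
    ‖tph (evenPart s t) (x + 1) - tph (evenPart s t) x‖ ≤ 40 / L := by
  have hL0 : (1 : ℝ) ≤ L := by exact_mod_cast hL
  refine (norm_tph_sub _ _).trans ?_
  have e1 : ∑ j : Fin 5, ((x + 1) ^ (j.val + 1) - x ^ (j.val + 1)) • evenPart s t j =
      ((x + 1) ^ 2 - x ^ 2) • s + ((x + 1) ^ 4 - x ^ 4) • t := by
    simp [Fin.sum_univ_five, evenPart]
  have hx1 : (-(L : ℝ)) ≤ x := by exact_mod_cast h1
  have hx2 : (x : ℝ) + 1 ≤ L := by exact_mod_cast h2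
  have e2 : |(((x + 1) ^ 2 - x ^ 2 : ℤ) : ℝ)| ≤ 2 * L := by
    push_cast; rw [abs_le]; constructor <;> nlinarith
  have e2' : |(((x + 1) ^ 4 - x ^ 4 : ℤ) : ℝ)| ≤ 4 * L ^ 3 := by
    have : (((x + 1) ^ 4 - x ^ 4 : ℤ) : ℝ) =
        (((x + 1) ^ 2 - x ^ 2 : ℤ) : ℝ) * (((x : ℝ) + 1) ^ 2 + x ^ 2) := by push_cast; ring
    rw [this, abs_mul]
    have h3 : |((x : ℝ) + 1) ^ 2 + (x : ℝ) ^ 2| ≤ 2 * (L : ℝ) ^ 2 := by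
      rw [abs_of_nonneg (by positivity)]
      nlinarith
    calc _ ≤ 2 * (L : ℝ) * (2 * L ^ 2) := mul_le_mul e2 h3 (abs_nonneg _) (by positivity)
      _ = _ := by ring
  have e3 : ‖((x + 1) ^ 2 - x ^ 2) • s + ((x + 1) ^ 4 - x ^ 4) • t‖ ≤ 6 / L := by
    refine (norm_add_le _ _).trans ?_
    have f1 := norm_zsmul_le' ((x + 1) ^ 2 - x ^ 2) s
    have f2 := norm_zsmul_le' ((x + 1) ^ 4 - x ^ 4) t
    have g1 : |(((x + 1) ^ 2 - x ^ 2 : ℤ) : ℝ)| * ‖s‖ ≤ 2 * L * (1 / (L : ℝ) ^ 2) :=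
      mul_le_mul e2 hs (norm_nonneg _) (by positivity)
    have g2 : |(((x + 1) ^ 4 - x ^ 4 : ℤ) : ℝ)| * ‖t‖ ≤ 4 * L ^ 3 * (1 / (L : ℝ) ^ 4) :=
      mul_le_mul e2' ht (norm_nonneg _) (by positivity)
    have g3 : 2 * L * (1 / (L : ℝ) ^ 2) + 4 * L ^ 3 * (1 / (L : ℝ) ^ 4) = 6 / L := by
      field_simp; norm_num
    linarith
  rw [e1]
  have hpi := Real.pi_lt_d2
  calc 2 * Real.pi * ‖((x + 1) ^ 2 - x ^ 2) • s + ((x + 1) ^ 4 - x ^ 4) • t‖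
      ≤ 2 * 3.15 * (6 / L) := by gcongr
    _ ≤ 40 / L := by rw [mul_div_assoc']; gcongr; norm_num

/-- Small perturbations of the even-degree coefficients, followed by a shift, do not affect the
bound by the maximal function. -/
lemma pointwise {L : ℕ} (hL : 1 ≤ L) {G : T5 → ℝ} (hG0 : ∀ γ, 0 ≤ G γ)
    (hG : ∀ γ (a : ℤ) (n : ℕ), -((2 * L : ℕ) : ℤ) ≤ a → a + n ≤ (2 * L : ℕ) + 1 →
        ‖∑ i ∈ Finset.range n, tph γ (a + i)‖ ^ 30 ≤ G γ)
    (β : T5) {s t : UnitAddCircle} (hs : ‖s‖ ≤ 1 / (L : ℝ) ^ 2)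
    (ht : ‖t‖ ≤ 1 / (L : ℝ) ^ 4) (y : ℤ) (hy1 : -(L : ℤ) ≤ y) (hy2 : y ≤ L) :
    ‖∑ x ∈ Finset.Icc (-(L : ℤ)) L, tph β x‖ ^ 30 ≤
      81 ^ 30 * G (shiftHom y (β + evenPart s t)) := by
  have hL0 : (1 : ℝ) ≤ L := by exact_mod_cast hL
  set γ := β + evenPart s t with hγ
  set M : ℝ := G (shiftHom y γ) ^ ((1 : ℝ) / 30) with hM
  have hM0 : 0 ≤ M := Real.rpow_nonneg (hG0 _) _
  have hM30 : M ^ 30 = G (shiftHom y γ) := by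
    rw [hM, ← Real.rpow_natCast, ← Real.rpow_mul (hG0 _)]; norm_num
  have hI : Finset.Icc (-(L : ℤ)) L = Finset.Ico (-(L : ℤ)) (-(L : ℤ) + (2 * L + 1 : ℕ)) := by
    ext x; simp only [Finset.mem_Icc, Finset.mem_Ico]; push_cast; omega
  have hβ : ∀ x, tph β x = tph (evenPart (-s) (-t)) x * tph γ x := by
    intro x
    rw [← tph_add]
    congr 1
    rw [hγ]
    funext j
    fin_cases j <;> simp [evenPart] <;> rfl
  have hb := abel_bound (fun i => tph (evenPart (-s) (-t)) (-(L : ℤ) + i))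
    (fun i => tph γ (-(L : ℤ) + i)) (2 * L + 1) (M := M) (B := 1) hM0 (by
      intro m hm
      rw [norm_sum_shiftHom y]
      refine le_of_pow_le_pow_left₀ (by norm_num : (30 : ℕ) ≠ 0) hM0 ?_
      rw [hM30]
      exact hG _ _ _ (by push_cast; omega) (by push_cast; omega))
    (fun i _ => (norm_tph _ _).le) zero_le_one
  have hv : ∑ i ∈ Finset.range (2 * L + 1 - 1), ‖tph (evenPart (-s) (-t)) (-(L : ℤ) + (i + 1 : ℕ)) -
      tph (evenPart (-s) (-t)) (-(L : ℤ) + i)‖ ≤ 80 := by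
    have : ∑ i ∈ Finset.range (2 * L + 1 - 1), ‖tph (evenPart (-s) (-t)) (-(L : ℤ) + (i + 1 : ℕ)) -
      tph (evenPart (-s) (-t)) (-(L : ℤ) + i)‖ ≤ ∑ i ∈ Finset.range (2 * L + 1 - 1), 40 / (L : ℝ) := by
      refine Finset.sum_le_sum fun i hi => ?_
      rw [Finset.mem_range] at hi
      have := even_variation hL (s := -s) (t := -t) (by rwa [norm_neg]) (by rwa [norm_neg])
        (-(L : ℤ) + i) (by omega) (by omega)
      rw [show -(L : ℤ) + (i + 1 : ℕ) = -(L : ℤ) + i + 1 by push_cast; ring]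
      exact this
    refine this.trans (le_of_eq ?_)
    rw [Finset.sum_const, Finset.card_range, Nat.add_sub_cancel, nsmul_eq_mul]
    push_cast
    field_simp
    norm_num
  have hfin : ‖∑ x ∈ Finset.Icc (-(L : ℤ)) L, tph β x‖ ≤ 81 * M := by
    rw [hI, sum_Ico_int]
    simp_rw [hβ]
    refine hb.trans ?_
    nlinarith
  calc _ ≤ (81 * M) ^ 30 := by gcongr
    _ = 81 ^ 30 * G (shiftHom y γ) := by rw [mul_pow, hM30]

/-- The near-periods: integers `|d| ≤ L` for which `5 d θ₅` and `3 d θ₃` are so close to `0` that the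
shift by `d` may preserve the smallness of the coefficients of degrees `4` and `2`. -/
def nearPeriods (L : ℕ) (θ₃ θ₅ : UnitAddCircle) : Set ℤ :=
  {d | -(L : ℤ) ≤ d ∧ d ≤ L ∧ ‖(5 * d) • θ₅‖ ≤ 2 / (L : ℝ) ^ 4 ∧ ‖(3 * d) • θ₃‖ ≤ 12 / (L : ℝ) ^ 2}

lemma nearPeriods_finite (L : ℕ) (θ₃ θ₅ : UnitAddCircle) : (nearPeriods L θ₃ θ₅).Finite :=
  (Set.finite_Icc (-(L : ℤ)) L).subset fun _ hd => ⟨hd.1, hd.2.1⟩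

/-- Coefficient vectors with small even-degree entries and few near-periods. -/
def goodSet (L M : ℕ) : Set T5 :=
  {β | ‖β 1‖ ≤ 1 / (L : ℝ) ^ 2 ∧ ‖β 3‖ ≤ 1 / (L : ℝ) ^ 4 ∧ (nearPeriods L (β 2) (β 4)).ncard ≤ M}

/-- If a good coefficient vector is still good after the shift by `-d`, comparison of the
even-degree coefficients shows that `d` is a near-period. -/
lemma shift_nearPeriods {L : ℕ} {M : ℕ} {β : T5} {d : ℤ} (h1 : -(L : ℤ) ≤ d)
    (h2 : d ≤ L) (hL : 1 ≤ L) (hβ : β ∈ goodSet L M) (hβ' : shiftHom (-d) β ∈ goodSet L M) :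
    d ∈ nearPeriods L (β 2) (β 4) := by
  have hL0 : (1 : ℝ) ≤ L := by exact_mod_cast hL
  obtain ⟨a1, a2, -⟩ := hβ
  obtain ⟨b1, b2, -⟩ := hβ'
  have c2 : shiftHom (-d) β 3 = β 3 + (5 * d) • β 4 := by simp [shiftHom_apply]
  have c1 : shiftHom (-d) β 1 =
      β 1 + (3 * d) • β 2 + (6 * d ^ 2) • β 3 + (2 * d ^ 2) • ((5 * d) • β 4) := by
    simp [shiftHom_apply]; module
  rw [c1] at b1
  rw [c2] at b2
  have hd : |(d : ℝ)| ≤ L := by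
    rw [abs_le]; constructor <;> exact_mod_cast (by omega)
  have hd2 : (d : ℝ) ^ 2 ≤ L ^ 2 := by
    rw [← sq_abs]; gcongr
  have h5 : ‖(5 * d) • β 4‖ ≤ 2 / (L : ℝ) ^ 4 := by
    have : (5 * d) • β 4 = (β 3 + (5 * d) • β 4) - β 3 := by abel
    rw [this]
    refine (norm_sub_le _ _).trans ?_
    have : 2 / (L : ℝ) ^ 4 = 1 / (L : ℝ) ^ 4 + 1 / (L : ℝ) ^ 4 := by ring
    linarith
  refine ⟨h1, h2, h5, ?_⟩
  have : (3 * d) • β 2 = (β 1 + (3 * d) • β 2 + (6 * d ^ 2) • β 3 + (2 * d ^ 2) • ((5 * d) • β 4)) -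
      β 1 - (6 * d ^ 2) • β 3 - (2 * d ^ 2) • ((5 * d) • β 4) := by abel
  rw [this]
  have n1 := norm_sub_le (β 1 + (3 * d) • β 2 + (6 * d ^ 2) • β 3 + (2 * d ^ 2) • ((5 * d) • β 4)) (β 1)
  have n2 := norm_sub_le (β 1 + (3 * d) • β 2 + (6 * d ^ 2) • β 3 +
    (2 * d ^ 2) • ((5 * d) • β 4) - β 1) ((6 * d ^ 2) • β 3)
  have n3 := norm_sub_le (β 1 + (3 * d) • β 2 + (6 * d ^ 2) • β 3 +
    (2 * d ^ 2) • ((5 * d) • β 4) - β 1 - (6 * d ^ 2) • β 3) ((2 * d ^ 2) • ((5 * d) • β 4))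
  have m1 : ‖(6 * d ^ 2) • β 3‖ ≤ 6 / (L : ℝ) ^ 2 := by
    refine (norm_zsmul_le' _ _).trans ?_
    push_cast
    rw [abs_of_nonneg (by positivity)]
    calc 6 * (d : ℝ) ^ 2 * ‖β 3‖ ≤ 6 * L ^ 2 * (1 / L ^ 4) := by gcongr
      _ = 6 / (L : ℝ) ^ 2 := by field_simp
  have m2 : ‖(2 * d ^ 2) • ((5 * d) • β 4)‖ ≤ 4 / (L : ℝ) ^ 2 := by
    refine (norm_zsmul_le' _ _).trans ?_
    push_cast
    rw [abs_of_nonneg (by positivity)]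
    calc 2 * (d : ℝ) ^ 2 * ‖(5 * d) • β 4‖ ≤ 2 * L ^ 2 * (2 / L ^ 4) := by gcongr
      _ = 4 / (L : ℝ) ^ 2 := by field_simp; norm_num
  have : 12 / (L : ℝ) ^ 2 = 1 / (L : ℝ) ^ 2 + 1 / (L : ℝ) ^ 2 + 6 / (L : ℝ) ^ 2 + 4 / (L : ℝ) ^ 2 := by
    ring
  linarith

/-- The shifts of a given point meet the good set at most `M` times. -/
lemma card_shifts_le {L M : ℕ} (hL : 1 ≤ L) (γ : T5) (s : Finset ℤ)
    (hs : ∀ y ∈ s, 1 ≤ y ∧ y ≤ L ∧ shiftHom (-y) γ ∈ goodSet L M) : s.card ≤ M := by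
  classical
  rcases s.eq_empty_or_nonempty with rfl | ⟨y, hy⟩
  · simp
  obtain ⟨hy1, hy2, hyg⟩ := hs y hy
  have h1 : (s.image fun z => z - y : Finset ℤ).card = s.card :=
    Finset.card_image_of_injective _ (sub_left_injective)
  rw [← h1, ← Set.ncard_coe_finset]
  refine (Set.ncard_le_ncard ?_ (nearPeriods_finite _ _ _)).trans hyg.2.2
  intro d hd
  simp only [Finset.coe_image, Set.mem_image, Finset.mem_coe] at hd
  obtain ⟨z, hz, rfl⟩ := hd
  obtain ⟨hz1, hz2, hzg⟩ := hs z hz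
  refine shift_nearPeriods (M := M) (by omega) (by omega) hL hyg ?_
  rw [shiftHom_shiftHom]
  rw [show -(z - y) + -y = -z by ring]
  exact hzg

end VMVT

/-! ### The mean value where there are few near-periods -/

namespace VMVT

/-- The coefficient vector `(w₁ α₁, 0, w₂ α₂, 0, w₃ α₃)` of `w₁ α₁ x + w₂ α₂ x³ + w₃ α₃ x⁵`. -/
def emb (w : Fin 3 → ℤ) (α : T3) : T5 := ![w 0 • α 0, 0, w 1 • α 1, 0, w 2 • α 2]

lemma continuous_emb (w : Fin 3 → ℤ) : Continuous (emb w) := by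
  change Continuous fun α : T3 => emb w α
  unfold emb
  refine continuous_pi fun j => ?_
  fin_cases j <;> simp <;> fun_prop

/-- The homomorphism `(α, s, t) ↦ (w₁ α₁, s, w₂ α₂, t, w₃ α₃)` followed by the shift by `y`. -/
noncomputable def fullHom (w : Fin 3 → ℤ) (y : ℤ) : T3 × (UnitAddCircle × UnitAddCircle) →+ T5 :=
  (shiftHom y).comp
    { toFun := fun q => emb w q.1 + evenPart q.2.1 q.2.2
      map_zero' := by
        funext j; fin_cases j <;> simp [emb, evenPart]
      map_add' := fun q r => by
        funext j; fin_cases j <;> simp [emb, evenPart] }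

lemma fullHom_apply (w : Fin 3 → ℤ) (y : ℤ) (q : T3 × (UnitAddCircle × UnitAddCircle)) :
    fullHom w y q = shiftHom y (emb w q.1 + evenPart q.2.1 q.2.2) := rfl

lemma zsmul_surj {m : ℤ} (hm : m ≠ 0) (t : UnitAddCircle) : ∃ s : UnitAddCircle, m • s = t := by
  induction t using QuotientAddGroup.induction_on with
  | H θ =>
    have hm' : (m : ℝ) ≠ 0 := by exact_mod_cast hm
    refine ⟨((θ / m : ℝ) : UnitAddCircle), ?_⟩
    change m • ((θ / m : ℝ) : UnitAddCircle) = (θ : UnitAddCircle)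
    rw [← AddCircle.coe_zsmul, zsmul_eq_mul, mul_div_cancel₀ _ hm']

/-- Continuous surjective homomorphisms of compact groups preserve Haar probability measure. -/
lemma measurePreserving_fullHom {w : Fin 3 → ℤ} (h0 : w 0 ≠ 0) (h1 : w 1 ≠ 0) (h2 : w 2 ≠ 0)
    (y : ℤ) : MeasurePreserving (fullHom w y) (volume.prod (volume.prod volume)) volume := by
  have i1 : (volume : Measure T3).IsAddHaarMeasure := inferInstance
  have i2 : ((volume : Measure UnitAddCircle).prod
      (volume : Measure UnitAddCircle)).IsAddHaarMeasure := inferInstance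
  have i3 : ((volume : Measure T3).prod ((volume : Measure UnitAddCircle).prod
      (volume : Measure UnitAddCircle))).IsAddHaarMeasure :=
    Measure.prod.instIsAddHaarMeasure volume _
  refine AddMonoidHom.measurePreserving (μ := (volume : Measure T3).prod
    ((volume : Measure UnitAddCircle).prod (volume : Measure UnitAddCircle))) ?_ ?_ ?_
  · refine (continuous_shiftHom y).comp ?_
    refine ((continuous_emb w).comp continuous_fst).add ?_
    unfold evenPart
    refine continuous_pi fun j => ?_
    fin_cases j <;> simp <;> fun_prop
  · refine (surjective_shiftHom y).comp fun β => ?_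
    obtain ⟨a, ha⟩ := zsmul_surj h0 (β 0)
    obtain ⟨b, hb⟩ := zsmul_surj h1 (β 2)
    obtain ⟨c, hc⟩ := zsmul_surj h2 (β 4)
    refine ⟨(![a, b, c], β 1, β 3), ?_⟩
    change emb w ![a, b, c] + evenPart (β 1) (β 3) = β
    funext j
    fin_cases j <;> simp [emb, evenPart, ha, hb, hc]
  · rw [← Set.univ_prod_univ, Measure.prod_prod, ← Set.univ_prod_univ, Measure.prod_prod,
      volume_torus, volume_torus]
    simp

lemma measurable_ncard_nearPeriods (L : ℕ) :
    Measurable fun q : UnitAddCircle × UnitAddCircle => (nearPeriods L q.1 q.2).ncard := by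
  classical
  have h : ∀ q : UnitAddCircle × UnitAddCircle, (nearPeriods L q.1 q.2).ncard =
      ∑ d ∈ Finset.Icc (-(L : ℤ)) L, if ‖(5 * d) • q.2‖ ≤ 2 / (L : ℝ) ^ 4 ∧
        ‖(3 * d) • q.1‖ ≤ 12 / (L : ℝ) ^ 2 then 1 else 0 := by
    intro q
    rw [← Finset.card_filter, ← Set.ncard_coe_finset]
    congr 1
    ext d
    simp [nearPeriods, and_assoc]
  simp_rw [h]
  refine Finset.measurable_fun_sum _ fun d _ => Measurable.ite ?_ measurable_const measurable_const
  refine MeasurableSet.inter ?_ ?_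
  · exact measurableSet_le (f := fun q : UnitAddCircle × UnitAddCircle => ‖(5 * d) • q.2‖)
      (by fun_prop) measurable_const
  · exact measurableSet_le (f := fun q : UnitAddCircle × UnitAddCircle => ‖(3 * d) • q.1‖)
      (by fun_prop) measurable_const

/-- Points `α` whose associated coefficients have at most `M` near-periods. -/
def fewPeriods (w : Fin 3 → ℤ) (L M : ℕ) : Set T3 :=
  {α | (nearPeriods L (w 1 • α 1) (w 2 • α 2)).ncard ≤ M}

lemma measurableSet_fewPeriods (w : Fin 3 → ℤ) (L M : ℕ) : MeasurableSet (fewPeriods w L M) := by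
  have h : Measurable fun α : T3 => (nearPeriods L (w 1 • α 1) (w 2 • α 2)).ncard :=
    (measurable_ncard_nearPeriods L).comp
      (f := fun α : T3 => (w 1 • α 1, w 2 • α 2)) (by fun_prop)
  exact h measurableSet_Iic

lemma measurableSet_goodSet (L M : ℕ) : MeasurableSet (goodSet L M) := by
  have h : Measurable fun β : T5 => (nearPeriods L (β 2) (β 4)).ncard :=
    (measurable_ncard_nearPeriods L).comp (f := fun β : T5 => (β 2, β 4)) (by fun_prop)
  refine MeasurableSet.inter ?_ (MeasurableSet.inter ?_ (h measurableSet_Iic))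
  · exact measurableSet_le (f := fun β : T5 => ‖β 1‖) (by fun_prop) measurable_const
  · exact measurableSet_le (f := fun β : T5 => ‖β 3‖) (by fun_prop) measurable_const

lemma volume_ball_ge {r : ℝ} (h0 : 0 ≤ r) (h1 : r ≤ 1) :
    ENNReal.ofReal r ≤ volume {t : UnitAddCircle | ‖t‖ ≤ r} := by
  have : {t : UnitAddCircle | ‖t‖ ≤ r} = Metric.closedBall 0 r := by
    ext t; simp
  rw [this, AddCircle.volume_closedBall]
  exact ENNReal.ofReal_le_ofReal (le_min h1 (by linarith))

/-- The exponential sum of the theorem, as a function on the torus. -/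
noncomputable def tsum3 (w : Fin 3 → ℤ) (L : ℕ) (α : T3) : ℂ :=
  ∑ x ∈ Finset.Icc (-(L : ℤ)) L, tph (emb w α) x

lemma continuous_tsum3 (w : Fin 3 → ℤ) (L : ℕ) : Continuous (tsum3 w L) :=
  continuous_finsetSum _ fun x _ => (continuous_tph x).comp (continuous_emb w)

/-- The averaging argument: where there are few near-periods, the shifts of the domain of
integration overlap little, and the mean value saves a factor `M / L`. -/
lemma mean_few {w : Fin 3 → ℤ} (h0 : w 0 ≠ 0) (h1 : w 1 ≠ 0) (h2 : w 2 ≠ 0) (ε : ℝ) (hε : 0 < ε) :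
    ∃ C : ℝ, 0 < C ∧ ∀ L : ℕ, 1 ≤ L → ∀ M : ℕ,
      ∫⁻ α in fewPeriods w L M, ENNReal.ofReal (‖tsum3 w L α‖ ^ 30) ≤
        ENNReal.ofReal (C * M * (L : ℝ) ^ (20 + ε)) := by
  obtain ⟨C, hC, hmax⟩ := maximal ε hε
  refine ⟨81 ^ 30 * (C * 2 ^ (15 + ε)), by positivity, fun L hL M => ?_⟩
  have hL1 : (1 : ℝ) ≤ L := by exact_mod_cast hL
  obtain ⟨G, hGc, hG0, hG, hGi⟩ := hmax (2 * L) (by omega)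
  set I := ∫⁻ α in fewPeriods w L M, ENNReal.ofReal (‖tsum3 w L α‖ ^ 30) with hI
  set g : T3 → ENNReal := (fewPeriods w L M).indicator
    (fun α => ENNReal.ofReal (‖tsum3 w L α‖ ^ 30)) with hg
  have hfm : Measurable fun α => ENNReal.ofReal (‖tsum3 w L α‖ ^ 30) :=
    ENNReal.measurable_ofReal.comp (((continuous_tsum3 w L).norm.pow 30).measurable)
  have hgm : Measurable g := hfm.indicator (measurableSet_fewPeriods w L M)
  have hIg : I = ∫⁻ α, g α := (lintegral_indicator (measurableSet_fewPeriods w L M) _).symm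
  set B2 : Set UnitAddCircle := {t | ‖t‖ ≤ 1 / (L : ℝ) ^ 2} with hB2
  set B4 : Set UnitAddCircle := {t | ‖t‖ ≤ 1 / (L : ℝ) ^ 4} with hB4
  have hB2m : MeasurableSet B2 := measurableSet_le measurable_norm measurable_const
  have hB4m : MeasurableSet B4 := measurableSet_le measurable_norm measurable_const
  set c : ENNReal := ENNReal.ofReal (81 ^ 30) with hc
  set h : ℤ → T5 → ENNReal := fun y =>
    ((shiftHom (-y)) ⁻¹' goodSet L M).indicator (fun γ => ENNReal.ofReal (G γ)) with hh
  have hhm : ∀ y, Measurable (h y) := fun y =>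
    (ENNReal.measurable_ofReal.comp hGc.measurable).indicator
      ((continuous_shiftHom (-y)).measurable (measurableSet_goodSet L M))
  -- change of variables for a single shift `y`
  have hone : ∀ y : ℤ, 1 ≤ y → y ≤ L → I * (volume B2 * volume B4) ≤ c * ∫⁻ γ, h y γ := by
    intro y hy1 hy2
    have e1 : I * (volume B2 * volume B4) =
        ∫⁻ q : T3 × (UnitAddCircle × UnitAddCircle), g q.1 *
          (B2.indicator 1 q.2.1 * B4.indicator 1 q.2.2) ∂(volume.prod (volume.prod volume)) := by
      rw [lintegral_prod_mul (f := g)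
        (g := fun r : UnitAddCircle × UnitAddCircle => B2.indicator 1 r.1 * B4.indicator 1 r.2)
        hgm.aemeasurable, lintegral_prod_mul (f := B2.indicator 1) (g := B4.indicator 1), hIg,
        lintegral_indicator_one hB2m, lintegral_indicator_one hB4m]
      · exact (measurable_one.indicator hB2m).aemeasurable
      · exact (measurable_one.indicator hB4m).aemeasurable
      · exact (((measurable_one.indicator hB2m).comp measurable_fst).mul
          ((measurable_one.indicator hB4m).comp measurable_snd)).aemeasurable
    rw [e1, ← (measurePreserving_fullHom h0 h1 h2 y).lintegral_comp (hhm y),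
      ← lintegral_const_mul c (show Measurable fun q => h y (fullHom w y q) from
        (hhm y).comp (measurePreserving_fullHom h0 h1 h2 y).measurable)]
    refine lintegral_mono fun q => ?_
    obtain ⟨α, s, t⟩ := q
    by_cases hα : α ∈ fewPeriods w L M
    swap
    · simp [hg, hα]
    by_cases hs : s ∈ B2
    swap
    · simp [hs]
    by_cases ht : t ∈ B4
    swap
    · simp [ht]
    have hmem : fullHom w y (α, s, t) ∈ (shiftHom (-y)) ⁻¹' goodSet L M := by
      rw [Set.mem_preimage, fullHom_apply, shiftHom_shiftHom, neg_add_cancel, shiftHom_zero]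
      refine ⟨?_, ?_, ?_⟩
      · simpa [emb, evenPart, hB2] using hs
      · simpa [emb, evenPart, hB4] using ht
      · have : (nearPeriods L (w 1 • α 1) (w 2 • α 2)).ncard ≤ M := hα
        simpa [emb, evenPart] using this
    have hp := pointwise hL hG0 hG (emb w α) hs ht y (by omega) hy2
    simp only [hg, hh, Set.indicator_of_mem hα, Set.indicator_of_mem hs, Set.indicator_of_mem ht,
      Set.indicator_of_mem hmem, Pi.one_apply, mul_one, hc]
    rw [← ENNReal.ofReal_mul (by positivity)]
    exact ENNReal.ofReal_le_ofReal hp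
  -- each point of `T5` is covered at most `M` times by the `L` shifted copies
  have hsum : (L : ENNReal) * (I * (volume B2 * volume B4)) ≤
      c * (M * ENNReal.ofReal (C * ((2 * L : ℕ) : ℝ) ^ (15 + ε))) := by
    have e1 : ∑ y ∈ Finset.Icc (1 : ℤ) L, I * (volume B2 * volume B4) ≤
        ∑ y ∈ Finset.Icc (1 : ℤ) L, c * ∫⁻ γ, h y γ := by
      refine Finset.sum_le_sum fun y hy => ?_
      rw [Finset.mem_Icc] at hy
      exact hone y hy.1 hy.2
    rw [Finset.sum_const, Int.card_Icc, nsmul_eq_mul, ← Finset.mul_sum,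
      ← lintegral_finsetSum _ fun y _ => hhm y] at e1
    have e0 : (((L : ℤ) + 1 - 1).toNat : ENNReal) = L := by simp
    rw [e0] at e1
    refine e1.trans ?_
    gcongr
    have e2 : ∀ γ, ∑ y ∈ Finset.Icc (1 : ℤ) L, h y γ ≤ M * ENNReal.ofReal (G γ) := by
      intro γ
      classical
      simp only [hh, Set.indicator_apply]
      rw [← Finset.sum_filter, Finset.sum_const, nsmul_eq_mul]
      gcongr
      refine card_shifts_le hL γ _ fun y hy => ?_
      rw [Finset.mem_filter, Finset.mem_Icc] at hy
      exact ⟨hy.1.1, hy.1.2, hy.2⟩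
    refine (lintegral_mono e2).trans ?_
    rw [lintegral_const_mul _ (show Measurable fun γ => ENNReal.ofReal (G γ) from
      ENNReal.measurable_ofReal.comp hGc.measurable)]
    gcongr
    rw [← ofReal_integral_eq_lintegral_ofReal
      (hGc.integrable_of_hasCompactSupport (HasCompactSupport.of_compactSpace _))
      (Filter.Eventually.of_forall hG0)]
    exact ENNReal.ofReal_le_ofReal hGi
  have hv : ENNReal.ofReal (1 / (L : ℝ) ^ 2) * ENNReal.ofReal (1 / (L : ℝ) ^ 4) ≤
      volume B2 * volume B4 := by
    refine mul_le_mul' (volume_ball_ge (by positivity) ?_) (volume_ball_ge (by positivity) ?_)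
    · exact (div_le_one (by positivity)).2 (one_le_pow₀ hL1)
    · exact (div_le_one (by positivity)).2 (one_le_pow₀ hL1)
  have hfin : I * ENNReal.ofReal (1 / (L : ℝ) ^ 5) ≤
      ENNReal.ofReal (81 ^ 30 * (M * (C * (2 * L : ℝ) ^ (15 + ε)))) := by
    have e1 : I * ENNReal.ofReal (1 / (L : ℝ) ^ 5) = (L : ENNReal) *
        (I * (ENNReal.ofReal (1 / (L : ℝ) ^ 2) * ENNReal.ofReal (1 / (L : ℝ) ^ 4))) := by
      rw [← ENNReal.ofReal_natCast, mul_left_comm, ← ENNReal.ofReal_mul (by positivity),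
        ← ENNReal.ofReal_mul (by positivity)]
      congr 2
      field_simp
    rw [e1]
    refine le_trans (by gcongr) (hsum.trans (le_of_eq ?_))
    rw [hc, ← ENNReal.ofReal_natCast M, ← ENNReal.ofReal_mul (by positivity),
      ← ENNReal.ofReal_mul (by positivity)]
    push_cast
    rfl
  have hI5 : I = I * ENNReal.ofReal (1 / (L : ℝ) ^ 5) * ENNReal.ofReal ((L : ℝ) ^ 5) := by
    rw [mul_assoc, ← ENNReal.ofReal_mul (by positivity), one_div_mul_cancel (by positivity),
      ENNReal.ofReal_one, mul_one]
  rw [hI5]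
  refine (mul_le_mul_left hfin _).trans ?_
  rw [← ENNReal.ofReal_mul (by positivity)]
  refine ENNReal.ofReal_le_ofReal (le_of_eq ?_)
  rw [Real.mul_rpow (by norm_num) (by positivity)]
  have : (L : ℝ) ^ (20 + ε) = (L : ℝ) ^ (15 + ε) * (L : ℝ) ^ 5 := by
    rw [← Real.rpow_natCast, ← Real.rpow_add (by linarith)]
    congr 1; push_cast; ring
  rw [this]
  ring

end VMVT

/-! ### Diophantine approximation and the Kusmin–Landau inequality -/

namespace VMVT

/-- Two pigeonhole arguments: many near-periods give a small `d` and a large `K` such that both `d`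
and `K d` are differences of near-periods. -/
lemma many_pigeon {L M H N : ℕ} (h1 : 2 * L < H * M) (h2 : H * N ≤ M)
    {θ₃ θ₅ : UnitAddCircle} (hc : M < (nearPeriods L θ₃ θ₅).ncard) :
    ∃ d K : ℕ, 1 ≤ d ∧ d < H ∧ N ≤ K ∧ K * d ≤ 2 * L ∧
      (∃ x ∈ nearPeriods L θ₃ θ₅, ∃ y ∈ nearPeriods L θ₃ θ₅, (d : ℤ) = y - x) ∧
      (∃ x ∈ nearPeriods L θ₃ θ₅, ∃ y ∈ nearPeriods L θ₃ θ₅, ((K * d : ℕ) : ℤ) = y - x) := by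
  classical
  have hH : 0 < H := Nat.pos_of_ne_zero (by rintro rfl; simp at h1)
  set D : Finset ℤ := (nearPeriods_finite L θ₃ θ₅).toFinset with hD
  have hmem : ∀ x, x ∈ D ↔ x ∈ nearPeriods L θ₃ θ₅ := fun x => by simp [hD]
  have hcard : M < D.card := by
    rwa [hD, ← Set.ncard_eq_toFinset_card _ (nearPeriods_finite L θ₃ θ₅)]
  have hr : ∀ x ∈ D, -(L : ℤ) ≤ x ∧ x ≤ L := fun x hx => by
    have := (hmem x).1 hx
    exact ⟨this.1, this.2.1⟩
  obtain ⟨x, hx, y, hy, hxy, hf⟩ := Finset.exists_ne_map_eq_of_card_lt_of_maps_to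
    (s := D) (t := Finset.range M) (by simpa using hcard)
    (f := fun x : ℤ => ((x + L).toNat / H)) (by
      intro x hx
      simp only [Finset.coe_range, Set.mem_Iio]
      have := hr x hx
      rw [Nat.div_lt_iff_lt_mul hH, mul_comm]
      omega)
  -- two near-periods in the same block of length `H`, listed in increasing order
  have key : ∃ x ∈ D, ∃ y ∈ D, x < y ∧ y - x < H := by
    have hlt : ∀ x ∈ D, ∀ y ∈ D, (x + L).toNat / H = (y + L).toNat / H → x < y → y - x < H := by
      intro x hx y hy hf hlt
      have e1 := Nat.div_add_mod (x + L).toNat H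
      have e2 := Nat.div_add_mod (y + L).toNat H
      have e3 := Nat.mod_lt (y + L).toNat hH
      have := hr x hx
      have := hr y hy
      rw [hf] at e1
      omega
    rcases lt_or_gt_of_ne hxy with h | h
    · exact ⟨x, hx, y, hy, h, hlt x hx y hy hf h⟩
    · exact ⟨y, hy, x, hx, h, hlt y hy x hx hf.symm h⟩
  obtain ⟨x, hx, y, hy, hxy, hyx⟩ := key
  obtain ⟨d, hd⟩ := Int.eq_ofNat_of_zero_le (show 0 ≤ y - x by omega)
  have hd1 : 1 ≤ d := by omega
  have hdH : d < H := by omega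
  have hd0 : (0 : ℤ) < d := by omega
  obtain ⟨r, -, hrc⟩ := Finset.exists_lt_card_fiber_of_mul_lt_card_of_maps_to
    (s := D) (t := Finset.Ico (0 : ℤ) d) (f := fun x : ℤ => x % (d : ℤ)) (n := N)
    (fun z _ => Finset.mem_Ico.2 ⟨Int.emod_nonneg _ hd0.ne', Int.emod_lt_of_pos _ hd0⟩)
    (by
      rw [Int.card_Ico, sub_zero, Int.toNat_natCast]
      exact lt_of_le_of_lt ((Nat.mul_le_mul_right N hdH.le).trans h2) hcard)
  set F := D.filter fun x => x % (d : ℤ) = r with hF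
  have hFne : F.Nonempty := Finset.card_pos.1 (by omega)
  set m := F.min' hFne with hm
  set m' := F.max' hFne with hm'
  have hmF := Finset.min'_mem F hFne
  have hmF' := Finset.max'_mem F hFne
  rw [← hm] at hmF
  rw [← hm'] at hmF'
  rw [hF, Finset.mem_filter] at hmF hmF'
  have hmm : m ≤ m' := Finset.min'_le_max' F hFne
  have hdvd : (d : ℤ) ∣ m' - m := Int.ModEq.dvd (hmF.2.trans hmF'.2.symm)
  obtain ⟨K', hK'⟩ := hdvd
  have hK0 : 0 ≤ K' := by
    by_contra h
    have : (d : ℤ) * K' < 0 := mul_neg_of_pos_of_neg hd0 (by omega)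
    omega
  obtain ⟨K, rfl⟩ := Int.eq_ofNat_of_zero_le hK0
  have hKN : F.card ≤ K + 1 := by
    have : F ⊆ (Finset.range (K + 1)).image fun k : ℕ => m + (d : ℤ) * k := by
      intro z hz
      have z1 : m ≤ z := Finset.min'_le F z hz
      have z2 : z ≤ m' := Finset.le_max' F z hz
      have z3 := (Finset.mem_filter.1 (hF ▸ hz)).2
      obtain ⟨k, hk⟩ : (d : ℤ) ∣ z - m := Int.ModEq.dvd (hmF.2.trans z3.symm)
      have k0 : 0 ≤ k := by
        by_contra h
        have : (d : ℤ) * k < 0 := mul_neg_of_pos_of_neg hd0 (by omega)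
        omega
      obtain ⟨k, rfl⟩ := Int.eq_ofNat_of_zero_le k0
      have k1 : (k : ℤ) ≤ K := le_of_mul_le_mul_left (by omega : (d : ℤ) * k ≤ d * K) hd0
      exact Finset.mem_image.2 ⟨k, Finset.mem_range.2 (by omega), by omega⟩
    exact (Finset.card_le_card this).trans (Finset.card_image_le.trans (by simp))
  have hKd : ((K * d : ℕ) : ℤ) = m' - m := by rw [hK']; push_cast; ring
  refine ⟨d, K, hd1, hdH, by omega, ?_, ⟨x, (hmem x).1 hx, y, (hmem y).1 hy, hd.symm⟩,
    m, (hmem m).1 hmF.1, m', (hmem m').1 hmF'.1, hKd⟩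
  have := hr m hmF.1
  have := hr m' hmF'.1
  omega

/-- If `t` and `K t` are both so close to zero that no wrap-around can have occurred, then `t` is
`K` times closer. -/
lemma near_zero {t : UnitAddCircle} {K : ℕ} {δ : ℝ} (h1 : ‖t‖ ≤ δ) (h2 : ‖K • t‖ ≤ δ)
    (h3 : K * δ ≤ 1 / 2) : K * ‖t‖ ≤ δ := by
  induction t using QuotientAddGroup.induction_on with
  | H θ =>
    change ‖(θ : UnitAddCircle)‖ ≤ δ at h1
    change ‖K • (θ : UnitAddCircle)‖ ≤ δ at h2
    change K * ‖(θ : UnitAddCircle)‖ ≤ δ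
    have h0 : ((θ : ℝ) : UnitAddCircle) = ((θ - round θ : ℝ) : UnitAddCircle) := by
      have : (((round θ : ℤ) : ℝ) : UnitAddCircle) = 0 := by
        rw [AddCircle.coe_eq_zero_iff]; exact ⟨round θ, by simp⟩
      rw [AddCircle.coe_sub, this, sub_zero]
    rw [UnitAddCircle.norm_eq] at h1 ⊢
    rw [h0, ← AddCircle.coe_nsmul, nsmul_eq_mul] at h2
    have hK : |(K : ℝ) * (θ - round θ)| = K * |θ - round θ| := by
      rw [abs_mul, Nat.abs_cast]
    have h4 : ‖((K * (θ - round θ) : ℝ) : UnitAddCircle)‖ = |(K : ℝ) * (θ - round θ)| := by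
      rw [AddCircle.norm_coe_eq_abs_iff (1 : ℝ) one_ne_zero, hK, abs_one]
      exact (mul_le_mul_of_nonneg_left h1 (by positivity)).trans h3
    rw [h4, hK] at h2
    exact h2

/-- Kusmin–Landau with step `s`: a sequence of unimodular numbers whose `s`-step phase increments
`D i` stay away from `0` and vary slowly has small sums. -/
lemma kusmin {v : ℕ → ℂ} (hv : ∀ i, ‖v i‖ = 1) {D : ℕ → UnitAddCircle} {s n : ℕ} {lam η : ℝ}
    (hlam : 0 < lam) (hη : 0 ≤ η)
    (hvD : ∀ i, v (i + s) = v i * (AddCircle.toCircle (D i) : ℂ))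
    (hD : ∀ i < n, lam / 2 ≤ ‖D i‖) (hDD : ∀ i, i + 1 < n → ‖D (i + 1) - D i‖ ≤ η) :
    ‖∑ i ∈ Finset.range n, v i‖ ≤ s / lam * (1 + n * (4 * η / lam)) := by
  have hE : ∀ i < n, 2 * lam ≤ ‖(AddCircle.toCircle (D i) : ℂ) - 1‖ := fun i hi => by
    have := four_norm_le (D i)
    have := hD i hi
    linarith
  have hE0 : ∀ i < n, (AddCircle.toCircle (D i) : ℂ) - 1 ≠ 0 := fun i hi =>
    norm_pos_iff.1 (lt_of_lt_of_le (by positivity) (hE i hi))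
  have h1 : ∑ i ∈ Finset.range n, v i = ∑ i ∈ Finset.range n,
      ((AddCircle.toCircle (D i) : ℂ) - 1)⁻¹ * (v (i + s) - v i) := by
    refine Finset.sum_congr rfl fun i hi => ?_
    rw [hvD, show v i * (AddCircle.toCircle (D i) : ℂ) - v i =
      ((AddCircle.toCircle (D i) : ℂ) - 1) * v i by ring,
      inv_mul_cancel_left₀ (hE0 i (Finset.mem_range.1 hi))]
  have hpart : ∀ m ≤ n, ‖∑ i ∈ Finset.range m, (v (i + s) - v i)‖ ≤ 2 * s := by
    intro m _
    have e1 := Finset.sum_range_add v s m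
    have e2 := Finset.sum_range_add v m s
    rw [add_comm m s, e1] at e2
    have e3 : ∑ i ∈ Finset.range m, (v (i + s) - v i) =
        ∑ i ∈ Finset.range s, v (m + i) - ∑ i ∈ Finset.range s, v i := by
      rw [Finset.sum_sub_distrib]
      simp_rw [add_comm _ s]
      linear_combination e2
    have e4 : ∀ g : ℕ → ℕ, ‖∑ i ∈ Finset.range s, v (g i)‖ ≤ s := fun g => by
      refine (norm_sum_le _ _).trans ?_
      simp [hv]
    rw [e3]
    have := norm_sub_le (∑ i ∈ Finset.range s, v (m + i)) (∑ i ∈ Finset.range s, v i)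
    have := e4 (fun i => m + i)
    have := e4 (fun i => i)
    linarith
  rw [h1]
  have hab := abel_bound (fun i => ((AddCircle.toCircle (D i) : ℂ) - 1)⁻¹)
    (fun i => v (i + s) - v i) n (M := 2 * s) (B := 1 / (2 * lam)) (by positivity) hpart
    (fun i hi => by
      rw [norm_inv, ← one_div]
      exact one_div_le_one_div_of_le (by positivity) (hE i hi)) (by positivity)
  refine hab.trans ?_
  have hvar : ∑ i ∈ Finset.range (n - 1), ‖((AddCircle.toCircle (D (i + 1)) : ℂ) - 1)⁻¹ -
      ((AddCircle.toCircle (D i) : ℂ) - 1)⁻¹‖ ≤ n * (2 * η / lam ^ 2) := by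
    have : ∀ i ∈ Finset.range (n - 1), ‖((AddCircle.toCircle (D (i + 1)) : ℂ) - 1)⁻¹ -
      ((AddCircle.toCircle (D i) : ℂ) - 1)⁻¹‖ ≤ 2 * η / lam ^ 2 := by
      intro i hi
      rw [Finset.mem_range] at hi
      have a1 := hE i (by omega)
      have a2 := hE (i + 1) (by omega)
      rw [inv_sub_inv (hE0 _ (by omega)) (hE0 _ (by omega)), norm_div, norm_mul]
      have b1 : ‖(AddCircle.toCircle (D i) : ℂ) - 1 - ((AddCircle.toCircle (D (i + 1)) : ℂ) - 1)‖ ≤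
          2 * Real.pi * η := by
        have : (AddCircle.toCircle (D i) : ℂ) - 1 - ((AddCircle.toCircle (D (i + 1)) : ℂ) - 1) =
            -((AddCircle.toCircle (D i) : ℂ) *
              ((AddCircle.toCircle (D (i + 1) - D i) : ℂ) - 1)) := by
          have : (AddCircle.toCircle (D (i + 1)) : ℂ) = (AddCircle.toCircle (D i) : ℂ) *
              (AddCircle.toCircle (D (i + 1) - D i) : ℂ) := by
            rw [← Circle.coe_mul, ← AddCircle.toCircle_add, add_sub_cancel]
          rw [this]; ring
        rw [this, norm_neg, norm_mul, Circle.norm_coe, one_mul]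
        refine (norm_sub_one_le _).trans ?_
        have := hDD i (by omega)
        gcongr
      have b2 : (2 * lam) * (2 * lam) ≤ ‖(AddCircle.toCircle (D (i + 1)) : ℂ) - 1‖ *
          ‖(AddCircle.toCircle (D i) : ℂ) - 1‖ :=
        mul_le_mul a2 a1 (by positivity) (norm_nonneg _)
      calc _ ≤ 2 * Real.pi * η / ((2 * lam) * (2 * lam)) :=
            div_le_div₀ (by positivity) b1 (by positivity) b2
        _ ≤ 2 * 4 * η / ((2 * lam) * (2 * lam)) := by
            have := Real.pi_le_four
            gcongr
        _ = 2 * η / lam ^ 2 := by field_simp; ring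
    refine (Finset.sum_le_card_nsmul _ _ _ this).trans ?_
    rw [Finset.card_range, nsmul_eq_mul]
    have : ((n - 1 : ℕ) : ℝ) ≤ n := by exact_mod_cast Nat.sub_le n 1
    gcongr
  calc _ ≤ 2 * (s : ℝ) * (1 / (2 * lam) + n * (2 * η / lam ^ 2)) := by gcongr
    _ = s / lam * (1 + n * (4 * η / lam)) := by field_simp; ring

/-- Kusmin–Landau applied to the quintic phase. Here `s` is an approximate common denominator of the
cubic and the quintic coefficient, and the distance of `s γ₁` from `0` controls the sum. -/
lemma weyl_linear {w : Fin 3 → ℤ} {α : T3} {L s : ℕ} {κ : ℝ} (hL : 1 ≤ L) (hs : s ≤ L)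
    (h3 : ‖s • (w 1 • α 1)‖ ≤ 120 * κ / (L : ℝ) ^ 2)
    (h5 : ‖s • (w 2 • α 2)‖ ≤ 12 * κ / (L : ℝ) ^ 4) (hκ : 0 < κ)
    (h1 : 2600 * κ ≤ ‖s • (w 0 • α 0)‖) :
    ‖tsum3 w L α‖ ≤ 20 * s / ‖s • (w 0 • α 0)‖ := by
  set lam := ‖s • (w 0 • α 0)‖ with hlamdef
  have hlam : 0 < lam := by linarith
  have hL1 : (1 : ℝ) ≤ L := by exact_mod_cast hL
  have hsL : (s : ℝ) ≤ L := by exact_mod_cast hs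
  set x : ℕ → ℤ := fun i => -(L : ℤ) + i with hx
  -- `(x + s)³ - x³ = s P` and `(x + s)⁵ - x⁵ = s R`
  set P : ℕ → ℤ := fun i => 3 * x i ^ 2 + 3 * x i * s + s ^ 2 with hP
  set R : ℕ → ℤ := fun i =>
    5 * x i ^ 4 + 10 * x i ^ 3 * s + 10 * x i ^ 2 * s ^ 2 + 5 * x i * s ^ 3 + s ^ 4 with hR
  set D : ℕ → UnitAddCircle := fun i => s • (w 0 • α 0) +
    P i • (s • (w 1 • α 1)) + R i • (s • (w 2 • α 2)) with hD
  have hxabs : ∀ i < 2 * L + 1, |(x i : ℝ)| ≤ L := fun i hi => by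
    rw [abs_le]
    have a1 : -(L : ℤ) ≤ x i := by simp only [hx]; omega
    have a2 : x i ≤ (L : ℤ) := by simp only [hx]; omega
    exact ⟨by exact_mod_cast a1, by exact_mod_cast a2⟩
  have hs0 : (0 : ℝ) ≤ s := by positivity
  have hpoly : ∀ i < 2 * L + 1, |(P i : ℝ)| ≤ 7 * (L : ℝ) ^ 2 ∧ |(R i : ℝ)| ≤ 31 * (L : ℝ) ^ 4 := by
    intro i hi
    have b1 := hxabs i hi
    simp only [hP, hR]
    push_cast
    constructor
    · calc _ ≤ 3 * |(x i : ℝ)| ^ 2 + 3 * |(x i : ℝ)| * s + s ^ 2 := by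
            refine (abs_add_le _ _).trans (add_le_add ((abs_add_le _ _).trans
                (add_le_add ?_ ?_)) ?_)
            · rw [abs_mul, abs_pow, abs_of_nonneg (by norm_num : (0 : ℝ) ≤ 3)]
            · rw [abs_mul, abs_mul, abs_of_nonneg hs0, abs_of_nonneg (by norm_num : (0 : ℝ) ≤ 3)]
            · rw [abs_of_nonneg (by positivity)]
        _ ≤ 3 * (L : ℝ) ^ 2 + 3 * (L : ℝ) * L + (L : ℝ) ^ 2 := by gcongr
        _ = 7 * (L : ℝ) ^ 2 := by ring
    · calc _ ≤ 5 * |(x i : ℝ)| ^ 4 + 10 * |(x i : ℝ)| ^ 3 * s + 10 * |(x i : ℝ)| ^ 2 * s ^ 2 +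
            5 * |(x i : ℝ)| * s ^ 3 + s ^ 4 := by
            refine (abs_add_le _ _).trans (add_le_add ((abs_add_le _ _).trans (add_le_add
              ((abs_add_le _ _).trans (add_le_add ((abs_add_le _ _).trans (add_le_add
              ?_ ?_)) ?_)) ?_)) ?_)
            · rw [abs_mul, abs_pow, abs_of_nonneg (by norm_num : (0 : ℝ) ≤ 5)]
            · rw [abs_mul, abs_mul, abs_pow, abs_of_nonneg hs0,
                abs_of_nonneg (by norm_num : (0 : ℝ) ≤ 10)]
            · rw [abs_mul, abs_mul, abs_pow, abs_of_nonneg (by positivity : 0 ≤ (s : ℝ) ^ 2),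
                abs_of_nonneg (by norm_num : (0 : ℝ) ≤ 10)]
            · rw [abs_mul, abs_mul, abs_of_nonneg (by positivity : 0 ≤ (s : ℝ) ^ 3),
                abs_of_nonneg (by norm_num : (0 : ℝ) ≤ 5)]
            · rw [abs_of_nonneg (by positivity)]
        _ ≤ 5 * (L : ℝ) ^ 4 + 10 * (L : ℝ) ^ 3 * L + 10 * (L : ℝ) ^ 2 * L ^ 2 +
            5 * (L : ℝ) * L ^ 3 + L ^ 4 := by gcongr
        _ = 31 * (L : ℝ) ^ 4 := by ring
  have hkey := kusmin (v := fun i => tph (emb w α) (x i)) (fun i => norm_tph _ _) (D := D)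
    (s := s) (n := 2 * L + 1) (lam := lam) (η := 3600 * κ / L) hlam (by positivity) ?_ ?_ ?_
  · have e1 : tsum3 w L α = ∑ i ∈ Finset.range (2 * L + 1), tph (emb w α) (x i) := by
      rw [← sum_Ico_int (-(L : ℤ)) (2 * L + 1) (fun y => tph (emb w α) y), tsum3]
      congr 1
      ext y
      simp only [Finset.mem_Icc, Finset.mem_Ico]
      push_cast
      omega
    rw [e1]
    refine hkey.trans ?_
    have e2 : ((2 * L + 1 : ℕ) : ℝ) * (4 * (3600 * κ / L) / lam) ≤ 3 * (14400 * κ) / lam := by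
      rw [show ((2 * L + 1 : ℕ) : ℝ) * (4 * (3600 * κ / L) / lam) =
        ((2 * L + 1 : ℕ) : ℝ) / L * (14400 * κ) / lam by ring]
      gcongr
      rw [div_le_iff₀ (by positivity)]
      push_cast
      linarith
    have e3 : 3 * (14400 * κ) / lam ≤ 19 := by
      rw [div_le_iff₀ hlam]; linarith
    calc _ ≤ s / lam * (1 + 19) := by
          gcongr
          exact e2.trans e3
      _ = 20 * s / lam := by ring
  · intro i
    simp only [tph, ← Circle.coe_mul, ← AddCircle.toCircle_add]
    congr 2
    simp only [Fin.sum_univ_five, emb, hD, hP, hR, hx]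
    simp only [Fin.isValue, Matrix.cons_val_zero, Matrix.cons_val_one, Matrix.cons_val]
    simp only [Fin.val_zero, Fin.val_one, smul_zero, add_zero, show ((2 : Fin 5) : ℕ) = 2 from rfl,
      show ((4 : Fin 5) : ℕ) = 4 from rfl]
    push_cast
    module
  · intro i hi
    have b := hpoly i hi
    have c : s • (w 0 • α 0) = D i - (P i • (s • (w 1 • α 1)) + R i • (s • (w 2 • α 2))) := by
      simp only [hD]; abel
    have c2 := norm_sub_le (D i) (P i • (s • (w 1 • α 1)) + R i • (s • (w 2 • α 2)))
    rw [← c, ← hlamdef] at c2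
    have c3 := norm_add_le (P i • (s • (w 1 • α 1))) (R i • (s • (w 2 • α 2)))
    have c4 := (norm_zsmul_le' (P i) (s • (w 1 • α 1))).trans
      (mul_le_mul b.1 h3 (norm_nonneg _) (by positivity))
    have c5 := (norm_zsmul_le' (R i) (s • (w 2 • α 2))).trans
      (mul_le_mul b.2 h5 (norm_nonneg _) (by positivity))
    have c6 : 7 * (L : ℝ) ^ 2 * (120 * κ / (L : ℝ) ^ 2) = 840 * κ := by field_simp; norm_num
    have c7 : 31 * (L : ℝ) ^ 4 * (12 * κ / (L : ℝ) ^ 4) = 372 * κ := by field_simp; norm_num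
    linarith
  · intro i hi
    have b1 := hxabs i (by omega)
    have hx1 : x (i + 1) = x i + 1 := by simp only [hx]; push_cast; ring
    have c : D (i + 1) - D i = (6 * x i + 3 + 3 * s) • (s • (w 1 • α 1)) +
        (20 * x i ^ 3 + 30 * x i ^ 2 + 20 * x i + 5 + 10 * s * (3 * x i ^ 2 + 3 * x i + 1) +
          10 * s ^ 2 * (2 * x i + 1) + 5 * s ^ 3) • (s • (w 2 • α 2)) := by
      simp only [hD, hP, hR, hx1]
      module
    rw [c]
    have hx2 := pow_le_pow_left₀ (abs_nonneg _) b1 2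
    have hx3 := pow_le_pow_left₀ (abs_nonneg _) b1 3
    have hs2 := pow_le_pow_left₀ hs0 hsL 2
    have hs3 := pow_le_pow_left₀ hs0 hsL 3
    have l2 : (L : ℝ) ≤ (L : ℝ) ^ 3 := by nlinarith [sq_nonneg ((L : ℝ) - 1)]
    have l3 : (L : ℝ) ^ 2 ≤ (L : ℝ) ^ 3 := by nlinarith [sq_nonneg ((L : ℝ) - 1)]
    have p1 : |((6 * x i + 3 + 3 * s : ℤ) : ℝ)| ≤ 12 * (L : ℝ) := by
      push_cast
      rw [abs_le] at b1 ⊢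
      constructor <;> linarith
    have p2 : |((20 * x i ^ 3 + 30 * x i ^ 2 + 20 * x i + 5 +
        10 * s * (3 * x i ^ 2 + 3 * x i + 1) +
          10 * s ^ 2 * (2 * x i + 1) + 5 * s ^ 3 : ℤ) : ℝ)| ≤ 180 * (L : ℝ) ^ 3 := by
      push_cast
      have q1 : (s : ℝ) * |(x i : ℝ)| ^ 2 ≤ (L : ℝ) * (L : ℝ) ^ 2 := by gcongr
      have q2 : (s : ℝ) * |(x i : ℝ)| ≤ (L : ℝ) * (L : ℝ) := by gcongr
      have q3 : (s : ℝ) ^ 2 * |(x i : ℝ)| ≤ (L : ℝ) ^ 2 * (L : ℝ) := by gcongr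
      calc _ ≤ 20 * |(x i : ℝ)| ^ 3 + 30 * |(x i : ℝ)| ^ 2 + 20 * |(x i : ℝ)| + 5 +
            10 * s * (3 * |(x i : ℝ)| ^ 2 + 3 * |(x i : ℝ)| + 1) +
            10 * s ^ 2 * (2 * |(x i : ℝ)| + 1) + 5 * s ^ 3 := by
            refine (abs_add_le _ _).trans (add_le_add ((abs_add_le _ _).trans (add_le_add
              ((abs_add_le _ _).trans (add_le_add ((abs_add_le _ _).trans (add_le_add
              ((abs_add_le _ _).trans (add_le_add ((abs_add_le _ _).trans (add_le_add ?_ ?_)) ?_))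
              ?_)) ?_)) ?_)) ?_)
            · rw [abs_mul, abs_pow, abs_of_nonneg (by norm_num : (0 : ℝ) ≤ 20)]
            · rw [abs_mul, abs_pow, abs_of_nonneg (by norm_num : (0 : ℝ) ≤ 30)]
            · rw [abs_mul, abs_of_nonneg (by norm_num : (0 : ℝ) ≤ 20)]
            · rw [abs_of_nonneg (by norm_num : (0 : ℝ) ≤ 5)]
            · rw [abs_mul, abs_of_nonneg (by positivity : 0 ≤ 10 * (s : ℝ))]
              gcongr
              refine (abs_add_le _ _).trans (add_le_add ((abs_add_le _ _).trans
                (add_le_add ?_ ?_)) ?_)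
              · rw [abs_mul, abs_pow, abs_of_nonneg (by norm_num : (0 : ℝ) ≤ 3)]
              · rw [abs_mul, abs_of_nonneg (by norm_num : (0 : ℝ) ≤ 3)]
              · simp
            · rw [abs_mul, abs_of_nonneg (by positivity : 0 ≤ 10 * (s : ℝ) ^ 2)]
              gcongr
              refine (abs_add_le _ _).trans (add_le_add ?_ ?_)
              · rw [abs_mul, abs_of_nonneg (by norm_num : (0 : ℝ) ≤ 2)]
              · simp
            · rw [abs_of_nonneg (by positivity)]
        _ ≤ 180 * (L : ℝ) ^ 3 := by nlinarith
    have c3 := norm_add_le ((6 * x i + 3 + 3 * s) • (s • (w 1 • α 1)))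
      ((20 * x i ^ 3 + 30 * x i ^ 2 + 20 * x i + 5 + 10 * s * (3 * x i ^ 2 + 3 * x i + 1) +
          10 * s ^ 2 * (2 * x i + 1) + 5 * s ^ 3) • (s • (w 2 • α 2)))
    have c4 := (norm_zsmul_le' (6 * x i + 3 + 3 * s) (s • (w 1 • α 1))).trans
      (mul_le_mul p1 h3 (norm_nonneg _) (by positivity))
    have c5 := (norm_zsmul_le' (20 * x i ^ 3 + 30 * x i ^ 2 + 20 * x i + 5 +
      10 * s * (3 * x i ^ 2 + 3 * x i + 1) + 10 * s ^ 2 * (2 * x i + 1) + 5 * s ^ 3)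
      (s • (w 2 • α 2))).trans (mul_le_mul p2 h5 (norm_nonneg _) (by positivity))
    have c6 : 12 * (L : ℝ) * (120 * κ / (L : ℝ) ^ 2) = 1440 * κ / L := by field_simp; norm_num
    have c7 : 180 * (L : ℝ) ^ 3 * (12 * κ / (L : ℝ) ^ 4) = 2160 * κ / L := by
      field_simp; norm_num
    have c8 : 1440 * κ / L + 2160 * κ / L = 3600 * κ / L := by ring
    linarith

end VMVT

/-! ### Minor arcs with many near-periods -/

namespace VMVT

/-- On the minor arcs, no `q ≤ Q` is an approximate common denominator of all coordinates. The bound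
`q / (2 Q)` reflects the fact that the box `[1 / (2 Q), 1 + 1 / (2 Q)]ⁿ` keeps that distance from
the points with a zero coordinate, which are not centres of major arcs. -/
lemma minor_not_close {n : ℕ} {k : Fin n → ℕ} {Q : ℕ} {X : ℝ} {α : Fin n → ℝ} {q : ℕ}
    (hX : 0 < X) (hα : α ∈ minorArcs n k Q X) (hq : 1 ≤ q) (hqQ : q ≤ Q) :
    ¬ ∀ i, ‖q • (α i : UnitAddCircle)‖ < q / (2 * Q) ∧
      ‖q • (α i : UnitAddCircle)‖ ≤ Q / X ^ k i := by
  intro h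
  refine hα.2 ?_
  have hq0 : (0 : ℝ) < q := by exact_mod_cast hq
  have hQ0 : (0 : ℝ) < Q := lt_of_lt_of_le hq0 (by exact_mod_cast hqQ)
  have hqQ' : (q : ℝ) / Q ≤ 1 := (div_le_one hQ0).2 (by exact_mod_cast hqQ)
  have hρ : ∀ i, |(q : ℝ) * α i - round ((q : ℝ) * α i)| < q / (2 * Q) ∧
      |(q : ℝ) * α i - round ((q : ℝ) * α i)| ≤ Q / X ^ k i := by
    intro i
    have := h i
    rwa [← AddCircle.coe_nsmul, nsmul_eq_mul, UnitAddCircle.norm_eq] at this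
  have hb : ∀ i, ∃ b : ℕ, (round ((q : ℝ) * α i) : ℤ) = b ∧ 1 ≤ b ∧ b ≤ q := by
    intro i
    obtain ⟨h1, -⟩ := hρ i
    rw [abs_lt] at h1
    have a1 : 1 / (2 * Q : ℝ) ≤ α i := hα.1.1 i
    have a2 : α i ≤ 1 + 1 / (2 * Q : ℝ) := hα.1.2 i
    have a3 : (q : ℝ) / (2 * Q) ≤ q * α i := by
      calc (q : ℝ) / (2 * Q) = q * (1 / (2 * Q)) := by ring
        _ ≤ _ := by gcongr
    have a4 : (q : ℝ) * α i ≤ q + q / (2 * Q) := by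
      calc (q : ℝ) * α i ≤ q * (1 + 1 / (2 * Q)) := by gcongr
        _ = _ := by ring
    have a5 : (q : ℝ) / (2 * Q) + q / (2 * Q) = q / Q := by field_simp; norm_num
    have b1 : (0 : ℝ) < round ((q : ℝ) * α i) := by linarith
    have b2 : (round ((q : ℝ) * α i) : ℝ) < q + 1 := by linarith
    have c1 : 0 < round ((q : ℝ) * α i) := by exact_mod_cast b1
    have c2 : round ((q : ℝ) * α i) < q + 1 := by exact_mod_cast b2
    obtain ⟨b, hb⟩ := Int.eq_ofNat_of_zero_le c1.le
    exact ⟨b, hb, by omega, by omega⟩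
  choose b hb1 hb2 hb3 using hb
  -- reduce the fractions `b i / q` to lowest terms
  set g := Nat.gcd (Finset.univ.gcd b) q with hg
  have hg0 : 0 < g := Nat.gcd_pos_of_pos_right _ hq
  have hgb : ∀ i, ∃ a, b i = g * a := fun i =>
    (Nat.gcd_dvd_left _ _).trans (Finset.gcd_dvd (Finset.mem_univ i))
  choose a ha using hgb
  obtain ⟨r, hr⟩ : ∃ r, q = g * r := Nat.gcd_dvd_right _ _
  have hr0 : 0 < r := Nat.pos_of_ne_zero (by rintro rfl; omega)
  refine ⟨r, hr0, ?_, a, fun i => ⟨?_, ?_⟩, ?_, fun i => ?_⟩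
  · calc r ≤ g * r := Nat.le_mul_of_pos_left r hg0
      _ ≤ Q := by omega
  · have := hb2 i
    rw [ha] at this
    exact Nat.pos_of_ne_zero (by intro h; rw [h] at this; omega)
  · have := hb3 i
    rw [ha, hr] at this
    exact Nat.le_of_mul_le_mul_left this hg0
  · have e1 : Finset.univ.gcd b = g * Finset.univ.gcd a := by
      rw [funext ha, Finset.gcd_mul_left, normalize_eq]
    have e2 : g * Nat.gcd (Finset.univ.gcd a) r = g * 1 := by
      rw [← Nat.gcd_mul_left, ← e1, ← hr, ← hg, mul_one]
    exact Nat.eq_of_mul_eq_mul_left hg0 e2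
  · have hr1 : (0 : ℝ) < r := by exact_mod_cast hr0
    have hg1 : (0 : ℝ) < g := by exact_mod_cast hg0
    have e1 : (a i : ℝ) / r = b i / q := by
      have h1 : (b i : ℝ) = g * a i := by exact_mod_cast ha i
      have h2 : (q : ℝ) = g * r := by exact_mod_cast hr
      rw [h1, h2, mul_div_mul_left _ _ hg1.ne']
    have h2 := (hρ i).2
    rw [hb1, Int.cast_natCast] at h2
    have e2 : α i - b i / q = (q * α i - b i) / q := by field_simp
    rw [e1, e2, abs_div, abs_of_pos hq0]
    have hrq : (r : ℝ) ≤ q := by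
      exact_mod_cast (by rw [hr]; exact Nat.le_mul_of_pos_left r hg0 : r ≤ q)
    calc _ ≤ (Q : ℝ) / X ^ k i / q := by gcongr
      _ ≤ (Q : ℝ) / X ^ k i / r := by gcongr
      _ = _ := by rw [div_div, mul_comm]

set_option maxHeartbeats 1000000 in
/-- The pointwise bound on the part of the minor arcs with many near-periods. -/
lemma many_bound {w : Fin 3 → ℤ} {W : ℕ} (hW : W = (w 0 * w 1 * w 2).natAbs) (hW1 : 1 ≤ W)
    {L M H N Q : ℕ} {X : ℝ} (hL : 97 ≤ L) (hLX : (L : ℝ) ≤ X) (hXL : X ≤ 2 * L)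
    (h1 : 2 * L < H * M) (h2 : H * N ≤ M) (hN : 5200 * W * Q ≤ N)
    (hH : 15 * W * H * X ≤ (Q : ℝ) ^ 2) (hQL : Q ≤ L) {α : Fin 3 → ℝ}
    (hα : α ∈ minorArcs 3 ![1, 3, 5] Q X)
    (hM : (fun i => (α i : UnitAddCircle)) ∉ fewPeriods w L M) :
    ‖tsum3 w L (fun i => (α i : UnitAddCircle))‖ ≤ 40 * Q := by
  set A : T3 := fun i => (α i : UnitAddCircle) with hA
  have hM' : M < (nearPeriods L (w 1 • A 1) (w 2 • A 2)).ncard := by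
    simpa [fewPeriods] using hM
  obtain ⟨d, K, hd1, hdH, hNK, hKd, ⟨x, hx, y, hy, hxy⟩, ⟨x', hx', y', hy', hxy'⟩⟩ :=
    many_pigeon h1 h2 hM'
  have hL0 : (97 : ℝ) ≤ L := by exact_mod_cast hL
  have hX0 : 0 < X := by linarith
  have hd0 : (1 : ℝ) ≤ d := by exact_mod_cast hd1
  have hW0 : (1 : ℝ) ≤ W := by exact_mod_cast hW1
  have hHd : (d : ℝ) ≤ H := by exact_mod_cast hdH.le
  have hQX : (Q : ℝ) ≤ X := le_trans (by exact_mod_cast hQL) hLX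
  have hH0 : (0 : ℝ) < H := by linarith
  have hQ0 : (0 : ℝ) < Q := by
    have : (0 : ℝ) < (Q : ℝ) ^ 2 := lt_of_lt_of_le (by positivity) hH
    exact lt_of_le_of_ne (Nat.cast_nonneg Q) fun h => by rw [← h] at this; norm_num at this
  have hNK' : 5200 * (W : ℝ) * Q ≤ K := by exact_mod_cast hN.trans hNK
  have hK0 : (0 : ℝ) < K := lt_of_lt_of_le (by positivity) hNK'
  have hKd' : (K : ℝ) * d ≤ 2 * L := by exact_mod_cast hKd
  have hK2L : (K : ℝ) ≤ 2 * L := (le_mul_of_one_le_right hK0.le hd0).trans hKd'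
  -- `d` is almost a period of both the quintic and the cubic coefficient
  have hdiff5 : ∀ x ∈ nearPeriods L (w 1 • A 1) (w 2 • A 2),
      ∀ y ∈ nearPeriods L (w 1 • A 1) (w 2 • A 2),
      ‖(5 * (y - x)) • (w 2 • A 2)‖ ≤ 4 / (L : ℝ) ^ 4 ∧
        ‖(3 * (y - x)) • (w 1 • A 1)‖ ≤ 24 / (L : ℝ) ^ 2 := by
    intro x hx y hy
    rw [mul_sub, mul_sub, sub_smul, sub_smul]
    have a1 := norm_sub_le ((5 * y) • (w 2 • A 2)) ((5 * x) • (w 2 • A 2))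
    have a2 := norm_sub_le ((3 * y) • (w 1 • A 1)) ((3 * x) • (w 1 • A 1))
    have b1 := hx.2.2.1
    have b2 := hx.2.2.2
    have b3 := hy.2.2.1
    have b4 := hy.2.2.2
    have c1 : 4 / (L : ℝ) ^ 4 = 2 / (L : ℝ) ^ 4 + 2 / (L : ℝ) ^ 4 := by ring
    have c2 : 24 / (L : ℝ) ^ 2 = 12 / (L : ℝ) ^ 2 + 12 / (L : ℝ) ^ 2 := by ring
    exact ⟨by linarith, by linarith⟩
  have g1 := hdiff5 x hx y hy
  have g2 := hdiff5 x' hx' y' hy'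
  rw [← hxy] at g1
  rw [← hxy'] at g2
  have t5 : K * ‖(5 * (d : ℤ)) • (w 2 • A 2)‖ ≤ 4 / (L : ℝ) ^ 4 := by
    refine near_zero g1.1 ?_ ?_
    · convert g2.1 using 2
      rw [← natCast_zsmul, smul_smul]
      congr 1
      push_cast; ring
    · calc (K : ℝ) * (4 / (L : ℝ) ^ 4) ≤ 2 * L * (4 / (L : ℝ) ^ 4) := by gcongr
        _ = 8 / (L : ℝ) ^ 3 := by field_simp; norm_num
        _ ≤ 1 / 2 := by
          rw [div_le_iff₀ (by positivity)]
          have : (97 : ℝ) ^ 3 ≤ (L : ℝ) ^ 3 := by gcongr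
          linarith
  have t3 : K * ‖(3 * (d : ℤ)) • (w 1 • A 1)‖ ≤ 24 / (L : ℝ) ^ 2 := by
    refine near_zero g1.2 ?_ ?_
    · convert g2.2 using 2
      rw [← natCast_zsmul, smul_smul]
      congr 1
      push_cast; ring
    · calc (K : ℝ) * (24 / (L : ℝ) ^ 2) ≤ 2 * L * (24 / (L : ℝ) ^ 2) := by gcongr
        _ = 48 / (L : ℝ) := by field_simp; norm_num
        _ ≤ 1 / 2 := by
          rw [div_le_iff₀ (by positivity)]
          linarith
  have t5' : ‖(5 * (d : ℤ)) • (w 2 • A 2)‖ ≤ 4 / (L : ℝ) ^ 4 / K := by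
    rw [le_div_iff₀ hK0]; linarith
  have t3' : ‖(3 * (d : ℤ)) • (w 1 • A 1)‖ ≤ 24 / (L : ℝ) ^ 2 / K := by
    rw [le_div_iff₀ hK0]; linarith
  clear g1 g2 hdiff5 t5 t3 hxy hxy' hx hy hx' hy'
  -- the step `s` and the denominator `q = s |w₀|`
  set s : ℕ := 15 * d * ((w 1).natAbs * (w 2).natAbs) with hs
  set q : ℕ := 15 * d * W with hq
  have hWabs : W = (w 0).natAbs * ((w 1).natAbs * (w 2).natAbs) := by
    rw [hW, Int.natAbs_mul, Int.natAbs_mul, mul_assoc]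
  have hqs : q = (w 0).natAbs * s := by rw [hq, hs, hWabs]; ring
  have hw0 : 1 ≤ (w 0).natAbs := Nat.pos_of_ne_zero (by intro h; rw [hWabs, h] at hW1; omega)
  have hw1 : 1 ≤ (w 1).natAbs := Nat.pos_of_ne_zero (by intro h; rw [hWabs, h] at hW1; simp at hW1)
  have hw2 : 1 ≤ (w 2).natAbs := Nat.pos_of_ne_zero (by intro h; rw [hWabs, h] at hW1; simp at hW1)
  have hsq : s ≤ q := by rw [hqs]; exact Nat.le_mul_of_pos_left s hw0
  have hs1 : 1 ≤ s := Nat.mul_pos (by omega) (Nat.mul_pos hw1 hw2)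
  have hqX : (q : ℝ) * X ≤ (Q : ℝ) ^ 2 := by
    refine le_trans ?_ hH
    rw [hq]; push_cast
    calc 15 * (d : ℝ) * W * X ≤ 15 * H * W * X := by gcongr
      _ = _ := by ring
  have hqQ : (q : ℝ) ≤ Q := by
    have : (q : ℝ) * Q ≤ Q * Q := by
      calc (q : ℝ) * Q ≤ q * X := by gcongr
        _ ≤ _ := by rw [← sq]; exact hqX
    exact le_of_mul_le_mul_right this hQ0
  have hq1 : (1 : ℝ) ≤ q := by exact_mod_cast hs1.trans hsq
  have hs0 : (0 : ℝ) < s := by exact_mod_cast hs1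
  have hXQ : X ≤ (Q : ℝ) ^ 2 := (le_mul_of_one_le_left hX0.le hq1).trans hqX
  have hsign : ∀ m : ℤ, ∀ t : UnitAddCircle, ‖m.natAbs • t‖ = ‖m • t‖ := by
    intro m t
    rcases Int.natAbs_eq m with h | h
    · conv_rhs => rw [h, natCast_zsmul]
    · conv_rhs => rw [h, neg_smul, norm_neg, natCast_zsmul]
  have hmulW : ∀ (c : ℕ) (t : UnitAddCircle) (E : ℝ), c ≤ W → 0 ≤ E → ‖t‖ ≤ E → ‖c • t‖ ≤ W * E := by
    intro c t E hc hE ht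
    refine (norm_nsmul_le).trans ?_
    have : (c : ℝ) ≤ W := by exact_mod_cast hc
    gcongr
  have hs3 : ‖s • (w 1 • A 1)‖ ≤ 120 * (W / K) / (L : ℝ) ^ 2 := by
    have : s • (w 1 • A 1) = 5 • (((w 1).natAbs * (w 2).natAbs) • ((3 * (d : ℤ)) • (w 1 • A 1))) := by
      rw [hs]; simp only [← natCast_zsmul, smul_smul]; congr 1; push_cast; ring
    rw [this]
    have b := hmulW ((w 1).natAbs * (w 2).natAbs) _ _
      (by rw [hWabs]; exact Nat.le_mul_of_pos_left _ hw0) (by positivity) t3'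
    refine (norm_nsmul_le).trans ?_
    calc ((5 : ℕ) : ℝ) * _ ≤ (5 : ℕ) * (W * (24 / (L : ℝ) ^ 2 / K)) := by gcongr
      _ = _ := by push_cast; ring
  have hs5 : ‖s • (w 2 • A 2)‖ ≤ 12 * (W / K) / (L : ℝ) ^ 4 := by
    have : s • (w 2 • A 2) = 3 • (((w 1).natAbs * (w 2).natAbs) • ((5 * (d : ℤ)) • (w 2 • A 2))) := by
      rw [hs]; simp only [← natCast_zsmul, smul_smul]; congr 1; push_cast; ring
    rw [this]
    have b := hmulW ((w 1).natAbs * (w 2).natAbs) _ _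
      (by rw [hWabs]; exact Nat.le_mul_of_pos_left _ hw0) (by positivity) t5'
    refine (norm_nsmul_le).trans ?_
    calc ((3 : ℕ) : ℝ) * _ ≤ (3 : ℕ) * (W * (4 / (L : ℝ) ^ 4 / K)) := by gcongr
      _ = _ := by push_cast; ring
  have hq3 : ‖q • A 1‖ ≤ 120 * (W / K) / (L : ℝ) ^ 2 := by
    have e1 : q • A 1 = 5 • (((w 0).natAbs * (w 2).natAbs) • ((w 1).natAbs • ((3 * (d : ℤ)) • A 1))) := by
      rw [hq, hWabs]; simp only [← natCast_zsmul, smul_smul]; congr 1; push_cast; ring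
    rw [e1]
    have e2 : ‖(w 1).natAbs • ((3 * (d : ℤ)) • A 1)‖ ≤ 24 / (L : ℝ) ^ 2 / K := by
      rw [hsign, smul_comm]; exact t3'
    have b := hmulW ((w 0).natAbs * (w 2).natAbs) _ _
      (by rw [hWabs]; exact Nat.mul_le_mul_left _ (Nat.le_mul_of_pos_left _ hw1)) (by positivity) e2
    refine (norm_nsmul_le).trans ?_
    calc ((5 : ℕ) : ℝ) * _ ≤ (5 : ℕ) * (W * (24 / (L : ℝ) ^ 2 / K)) := by gcongr
      _ = _ := by push_cast; ring
  have hq5 : ‖q • A 2‖ ≤ 12 * (W / K) / (L : ℝ) ^ 4 := by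
    have e1 : q • A 2 = 3 • (((w 0).natAbs * (w 1).natAbs) • ((w 2).natAbs • ((5 * (d : ℤ)) • A 2))) := by
      rw [hq, hWabs]; simp only [← natCast_zsmul, smul_smul]; congr 1; push_cast; ring
    rw [e1]
    have e2 : ‖(w 2).natAbs • ((5 * (d : ℤ)) • A 2)‖ ≤ 4 / (L : ℝ) ^ 4 / K := by
      rw [hsign, smul_comm]; exact t5'
    have b := hmulW ((w 0).natAbs * (w 1).natAbs) _ _
      (by rw [hWabs]; exact Nat.mul_le_mul_left _ (Nat.le_mul_of_pos_right _ hw2)) (by positivity) e2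
    refine (norm_nsmul_le).trans ?_
    calc ((3 : ℕ) : ℝ) * _ ≤ (3 : ℕ) * (W * (4 / (L : ℝ) ^ 4 / K)) := by gcongr
      _ = _ := by push_cast; ring
  have hWK : (W : ℝ) / K ≤ 1 / (5200 * Q) := by
    rw [div_le_div_iff₀ hK0 (by positivity)]; linarith
  -- since `α` is on the minor arcs, `q` is far from being a period of the linear coefficient
  have hlow : (q : ℝ) / (2 * Q) ≤ ‖q • A 0‖ := by
    by_contra hlt
    push Not at hlt
    refine minor_not_close hX0 hα (by exact_mod_cast hq1) (by exact_mod_cast hqQ) fun i => ?_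
    have hsmall : (1 : ℝ) / (5200 * Q) * 120 < q / (2 * Q) := by
      rw [div_mul_eq_mul_div, div_lt_div_iff₀ (by positivity) (by positivity)]
      nlinarith
    have hL2 : (1 : ℝ) ≤ (L : ℝ) ^ 2 := one_le_pow₀ (by linarith)
    have hL4 : (1 : ℝ) ≤ (L : ℝ) ^ 4 := one_le_pow₀ (by linarith)
    fin_cases i
    · refine ⟨hlt, hlt.le.trans ?_⟩
      simp only [Fin.zero_eta, Matrix.cons_val_zero, pow_one]
      rw [div_le_div_iff₀ (by positivity) hX0]
      nlinarith
    · constructor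
      · refine hq3.trans_lt (lt_of_le_of_lt ?_ hsmall)
        calc 120 * (W / K) / (L : ℝ) ^ 2 ≤ 120 * (W / K) := div_le_self (by positivity) hL2
          _ ≤ 120 * (1 / (5200 * Q)) := by gcongr
          _ = _ := by ring
      · refine hq3.trans ?_
        simp only [Fin.mk_one, Matrix.cons_val_one, Matrix.cons_val_zero]
        calc 120 * (W / K) / (L : ℝ) ^ 2 ≤ 120 * (1 / (5200 * Q)) / (L : ℝ) ^ 2 := by gcongr
          _ = 120 / (5200 * Q * (L : ℝ) ^ 2) := by field_simp
          _ ≤ Q / X ^ 3 := by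
            rw [div_le_div_iff₀ (by positivity) (by positivity)]
            have : X ^ 3 ≤ (2 * L) ^ 2 * (Q : ℝ) ^ 2 := by
              calc X ^ 3 = X ^ 2 * X := by ring
                _ ≤ _ := by gcongr
            nlinarith [mul_nonneg (sq_nonneg (L : ℝ)) (sq_nonneg (Q : ℝ))]
    · constructor
      · refine hq5.trans_lt (lt_of_le_of_lt ?_ hsmall)
        calc 12 * (W / K) / (L : ℝ) ^ 4 ≤ 12 * (W / K) := div_le_self (by positivity) hL4
          _ ≤ 120 * (1 / (5200 * Q)) := by gcongr; norm_num
          _ = _ := by ring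
      · refine hq5.trans ?_
        simp only [Fin.reduceFinMk, Matrix.cons_val]
        calc 12 * (W / K) / (L : ℝ) ^ 4 ≤ 12 * (1 / (5200 * Q)) / (L : ℝ) ^ 4 := by gcongr
          _ = 12 / (5200 * Q * (L : ℝ) ^ 4) := by field_simp
          _ ≤ Q / X ^ 5 := by
            rw [div_le_div_iff₀ (by positivity) (by positivity)]
            have : X ^ 5 ≤ (2 * L) ^ 4 * (Q : ℝ) ^ 2 := by
              calc X ^ 5 = X ^ 4 * X := by ring
                _ ≤ _ := by gcongr
            nlinarith [mul_nonneg (pow_nonneg (Nat.cast_nonneg L : (0 : ℝ) ≤ L) 4)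
              (sq_nonneg (Q : ℝ))]
  have hlam : ‖q • A 0‖ = ‖s • (w 0 • A 0)‖ := by
    rw [hqs, mul_smul, hsign, smul_comm]
  rw [hlam] at hlow
  have hsL : s ≤ L := hsq.trans (le_trans (by exact_mod_cast hqQ) hQL)
  have hfin := weyl_linear (w := w) (α := A) (L := L) (s := s) (κ := W / K) (by omega) hsL hs3 hs5
    (by positivity) (by
      refine le_trans ?_ hlow
      calc 2600 * ((W : ℝ) / K) ≤ 2600 * (1 / (5200 * Q)) := by gcongr
        _ = 1 / (2 * Q) := by field_simp; norm_num
        _ ≤ q / (2 * Q) := by gcongr)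
  refine hfin.trans ?_
  have hpos : 0 < ‖s • (w 0 • A 0)‖ := lt_of_lt_of_le (by positivity) hlow
  rw [div_le_iff₀ hpos]
  have hsq' : (s : ℝ) ≤ q := by exact_mod_cast hsq
  calc 20 * (s : ℝ) ≤ 20 * q := by gcongr
    _ = 40 * Q * (q / (2 * Q)) := by field_simp; norm_num
    _ ≤ _ := by gcongr

end VMVT

/-! ### Transfer to the torus and choice of parameters -/

namespace VMVT

lemma e_eq_toCircle (θ : ℝ) : e θ = (AddCircle.toCircle (θ : UnitAddCircle) : ℂ) := by
  rw [AddCircle.toCircle_apply_mk, Circle.coe_exp, e]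
  congr 1
  push_cast
  ring

lemma fK_eq_tsum3 (w : Fin 3 → ℤ) (α : Fin 3 → ℝ) {X : ℝ} (hX : 0 ≤ X) :
    fK ![1, 3, 5] (fun i => (w i : ℝ) * α i) X =
      tsum3 w ⌊X⌋₊ (fun i => (α i : UnitAddCircle)) := by
  have hf : ⌊X⌋ = (⌊X⌋₊ : ℤ) := (Int.natCast_floor_eq_floor hX).symm
  rw [fK, tsum3, hf]
  refine Finset.sum_congr rfl fun x _ => ?_
  rw [e_eq_toCircle, tph]
  congr 2
  simp only [Fin.sum_univ_five, Fin.sum_univ_three, emb]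
  simp only [Fin.isValue, Matrix.cons_val_zero, Matrix.cons_val_one, Matrix.cons_val, Fin.val_zero,
    Fin.val_one, smul_zero, add_zero, show ((2 : Fin 5) : ℕ) = 2 from rfl,
    show ((4 : Fin 5) : ℕ) = 4 from rfl, AddCircle.coe_add, ← AddCircle.coe_zsmul,
    zsmul_eq_mul]
  push_cast
  rw [pow_one, mul_comm (x : ℝ), mul_comm ((x : ℝ) ^ 3), mul_comm ((x : ℝ) ^ 5)]

/-- Integrals over a unit cube of functions of the residues mod `1` are integrals over the torus. -/
lemma lintegral_box (a : ℝ) {G : T3 → ENNReal} (hG : Measurable G) :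
    ∫⁻ α in Set.Icc (fun _ : Fin 3 => a) (fun _ => a + 1), G (fun i => (α i : UnitAddCircle)) =
      ∫⁻ A, G A := by
  have h1 : MeasurePreserving (fun (α : Fin 3 → ℝ) i => (α i : UnitAddCircle))
      (Measure.pi fun _ => (volume : Measure ℝ).restrict (Set.Ioc a (a + 1)))
      (Measure.pi fun _ => (volume : Measure UnitAddCircle)) :=
    measurePreserving_pi _ _ fun _ => UnitAddCircle.measurePreserving_mk a
  have h2 : (volume : Measure (Fin 3 → ℝ)).restrict
      (Set.Icc (fun _ : Fin 3 => a) (fun _ => a + 1)) =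
      Measure.pi fun _ => (volume : Measure ℝ).restrict (Set.Ioc a (a + 1)) := by
    rw [← Measure.restrict_pi_pi]
    exact (Measure.restrict_congr_set Measure.univ_pi_Ioc_ae_eq_Icc).symm
  rw [h2]
  exact h1.lintegral_comp hG

/-- The choice of parameters: with `X = Y⁸` and `Y` large in terms of `W`, the sum is `O(Q)` where
there are more than `X ^ (7/8)` near-periods. -/
lemma many_bound_large {w : Fin 3 → ℤ} {W : ℕ} (hW : W = (w 0 * w 1 * w 2).natAbs) (hW1 : 1 ≤ W)
    {Y : ℝ} (hY : 10 ^ 6 * (W : ℝ) ≤ Y) {α : Fin 3 → ℝ}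
    (hα : α ∈ minorArcs 3 ![1, 3, 5] ⌊Y ^ 5⌋₊ (Y ^ 8))
    (hM : (fun i => (α i : UnitAddCircle)) ∉ fewPeriods w ⌊Y ^ 8⌋₊ ⌊Y ^ 7⌋₊) :
    ‖tsum3 w ⌊Y ^ 8⌋₊ (fun i => (α i : UnitAddCircle))‖ ≤ 40 * Y ^ 5 := by
  have hW0 : (1 : ℝ) ≤ W := by exact_mod_cast hW1
  have hY6 : (10 ^ 6 : ℝ) ≤ Y := by nlinarith
  have hY1 : (1 : ℝ) ≤ Y := by linarith
  have hY0 : (0 : ℝ) < Y := by linarith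
  have hpow : ∀ n : ℕ, 1 ≤ n → (10 ^ 6 : ℝ) ≤ Y ^ n := fun n hn =>
    hY6.trans (le_self_pow₀ hY1 (by omega))
  have fl : ∀ n : ℕ, 1 ≤ n → Y ^ n / 2 ≤ (⌊Y ^ n⌋₊ : ℝ) ∧ (⌊Y ^ n⌋₊ : ℝ) ≤ Y ^ n := fun n hn => by
    have a := Nat.lt_floor_add_one (Y ^ n)
    have b := hpow n hn
    exact ⟨by linarith, Nat.floor_le (by positivity)⟩
  obtain ⟨L1, L2⟩ := fl 8 (by norm_num)
  obtain ⟨M1, M2⟩ := fl 7 (by norm_num)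
  obtain ⟨Q1, Q2⟩ := fl 5 (by norm_num)
  set H := ⌊4 * Y⌋₊ + 1 with hH
  set N := ⌊Y ^ 6 / 20⌋₊ with hN
  have H1 : 4 * Y < (H : ℝ) := by rw [hH]; push_cast; exact Nat.lt_floor_add_one _
  have H2 : (H : ℝ) ≤ 5 * Y := by
    rw [hH]; push_cast
    have := Nat.floor_le (show 0 ≤ 4 * Y by positivity)
    linarith
  have N1 : Y ^ 6 / 40 ≤ (N : ℝ) := by
    have a := Nat.lt_floor_add_one (Y ^ 6 / 20)
    have b := hpow 6 (by norm_num)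
    rw [← hN] at a
    linarith
  have N2 : (N : ℝ) ≤ Y ^ 6 / 20 := Nat.floor_le (by positivity)
  refine (many_bound hW hW1 (H := H) (N := N) ?_ L2 (by linarith) ?_ ?_ ?_ ?_ ?_ hα hM).trans
    (by gcongr)
  · have : (97 : ℝ) ≤ (⌊Y ^ 8⌋₊ : ℝ) := by
      have := hpow 8 (by norm_num)
      linarith
    exact_mod_cast this
  · have : 2 * (⌊Y ^ 8⌋₊ : ℝ) < H * (⌊Y ^ 7⌋₊ : ℝ) := by
      calc 2 * (⌊Y ^ 8⌋₊ : ℝ) ≤ 2 * Y ^ 8 := by gcongr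
        _ = 4 * Y * (Y ^ 7 / 2) := by ring
        _ < H * (Y ^ 7 / 2) := by gcongr
        _ ≤ _ := by gcongr
    exact_mod_cast this
  · have : (H : ℝ) * N ≤ (⌊Y ^ 7⌋₊ : ℝ) := by
      calc (H : ℝ) * N ≤ 5 * Y * (Y ^ 6 / 20) := by gcongr
        _ = Y ^ 7 / 4 := by ring
        _ ≤ Y ^ 7 / 2 := by gcongr; norm_num
        _ ≤ _ := M1
    exact_mod_cast this
  · have : 5200 * (W : ℝ) * (⌊Y ^ 5⌋₊ : ℝ) ≤ N := by
      calc 5200 * (W : ℝ) * (⌊Y ^ 5⌋₊ : ℝ) ≤ 5200 * (W : ℝ) * Y ^ 5 := by gcongr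
        _ ≤ Y / 40 * Y ^ 5 := by gcongr; linarith
        _ = Y ^ 6 / 40 := by ring
        _ ≤ N := N1
    exact_mod_cast this
  · calc 15 * (W : ℝ) * H * Y ^ 8 ≤ 15 * (W : ℝ) * (5 * Y) * Y ^ 8 := by gcongr
      _ = 75 * (W : ℝ) * Y ^ 9 := by ring
      _ ≤ Y / 4 * Y ^ 9 := by gcongr; linarith
      _ = (Y ^ 5 / 2) ^ 2 := by ring
      _ ≤ _ := by gcongr
  · exact Nat.floor_le_floor (pow_le_pow_right₀ hY1 (by norm_num))

lemma norm_tsum3_le (w : Fin 3 → ℤ) (L : ℕ) (A : T3) : ‖tsum3 w L A‖ ≤ 2 * L + 1 := by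
  refine (norm_sum_le _ _).trans ?_
  simp only [norm_tph, Finset.sum_const, Int.card_Icc, nsmul_eq_mul, mul_one]
  have : ((L : ℤ) + 1 - -(L : ℤ)).toNat = 2 * L + 1 := by omega
  rw [this]
  push_cast
  exact le_rfl

/-- `f ≪ X ^ (5/8)` on the minor arcs where there are more than `X ^ (7/8)` near-periods; for bounded
`X` the trivial estimate suffices. -/
lemma many_bound_all {w : Fin 3 → ℤ} (hw : w 0 * w 1 * w 2 ≠ 0) :
    ∃ C : ℝ, 0 < C ∧ ∀ X : ℝ, 1 ≤ X →
      ∀ α ∈ minorArcs 3 ![1, 3, 5] ⌊X ^ ((5 : ℝ) / 8)⌋₊ X,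
        (fun i => (α i : UnitAddCircle)) ∉ fewPeriods w ⌊X⌋₊ ⌊X ^ ((7 : ℝ) / 8)⌋₊ →
        ‖tsum3 w ⌊X⌋₊ (fun i => (α i : UnitAddCircle))‖ ≤ C * X ^ ((5 : ℝ) / 8) := by
  set W := (w 0 * w 1 * w 2).natAbs with hW
  have hW1 : 1 ≤ W := Int.natAbs_pos.2 hw
  set Z : ℝ := (10 ^ 6 * (W : ℝ)) ^ 8 with hZ
  refine ⟨max 40 (3 * Z), by positivity, fun X hX α hα hM => ?_⟩
  have hX0 : 0 ≤ X := by linarith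
  set Y := X ^ ((1 : ℝ) / 8) with hY
  have hYp : ∀ n : ℕ, Y ^ n = X ^ ((n : ℝ) / 8) := fun n => by
    rw [hY, ← Real.rpow_natCast, ← Real.rpow_mul hX0]; congr 1; ring
  have hY5 : X ^ ((5 : ℝ) / 8) = Y ^ 5 := by rw [hYp]; norm_num
  have hY7 : X ^ ((7 : ℝ) / 8) = Y ^ 7 := by rw [hYp]; norm_num
  have hY8 : X = Y ^ 8 := by rw [hYp]; norm_num
  have hY1 : 1 ≤ Y := Real.one_le_rpow hX (by norm_num)
  by_cases h : 10 ^ 6 * (W : ℝ) ≤ Y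
  · rw [hY5] at hα ⊢
    rw [hY7] at hM
    rw [hY8] at hα hM ⊢
    refine (many_bound_large hW hW1 h hα hM).trans ?_
    gcongr
    exact le_max_left _ _
  · push Not at h
    have h1 : X ≤ Z := by
      rw [hY8, hZ]
      gcongr
    have h2 := norm_tsum3_le w ⌊X⌋₊ (fun i => (α i : UnitAddCircle))
    have h3 := Nat.floor_le hX0
    have h4 : 1 ≤ X ^ ((5 : ℝ) / 8) := Real.one_le_rpow hX (by norm_num)
    have h5 := le_max_right 40 (3 * Z)
    have h6 : max 40 (3 * Z) ≤ max 40 (3 * Z) * X ^ ((5 : ℝ) / 8) :=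
      le_mul_of_one_le_right (by positivity) h4
    linarith

end VMVT
open VMVT

theorem stmt6 (w : Fin 3 → ℤ) (hw : w 0 * w 1 * w 2 ≠ 0)
    (ε : ℝ) (hε : 0 < ε) :
    ∃ C : ℝ, ∀ X : ℝ, 1 ≤ X →
      (∫ α in minorArcs 3 ![1, 3, 5] ⌊X ^ ((5 : ℝ) / 8)⌋₊ X,
          ‖fK ![1, 3, 5] (fun i => (w i : ℝ) * α i) X‖ ^ (30 : ℕ)) ≤
        C * X ^ ((21 : ℝ) - 1 / 8 + ε) := by
  have hw12 : w 0 ≠ 0 ∧ w 1 ≠ 0 ∧ w 2 ≠ 0 :=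
    ⟨by rintro h; simp [h] at hw, by rintro h; simp [h] at hw, by rintro h; simp [h] at hw⟩
  obtain ⟨C₁, hC₁, hfew⟩ := mean_few hw12.1 hw12.2.1 hw12.2.2 ε hε
  obtain ⟨C₂, hC₂, hmany⟩ := many_bound_all hw
  refine ⟨C₁ + C₂ ^ 30, fun X hX => ?_⟩
  have hX0 : 0 < X := by linarith
  set L := ⌊X⌋₊ with hL
  set M := ⌊X ^ ((7 : ℝ) / 8)⌋₊ with hM
  set Q := ⌊X ^ ((5 : ℝ) / 8)⌋₊ with hQ
  set F : T3 → ENNReal := fun A => ENNReal.ofReal (‖tsum3 w L A‖ ^ 30) with hF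
  have hFm : Measurable F :=
    ENNReal.measurable_ofReal.comp (((continuous_tsum3 w L).norm.pow 30).measurable)
  set B : ℝ := (C₂ * X ^ ((5 : ℝ) / 8)) ^ 30 with hB
  set G : T3 → ENNReal := fun A => (fewPeriods w L M).indicator F A + ENNReal.ofReal B with hG
  have hGm : Measurable G := (hFm.indicator (measurableSet_fewPeriods w L M)).add measurable_const
  have hmk : Continuous fun (α : Fin 3 → ℝ) (i : Fin 3) => (α i : UnitAddCircle) :=
    continuous_pi fun i => (AddCircle.continuous_mk' 1).comp (continuous_apply i)
  have hbound : ∀ α ∈ minorArcs 3 ![1, 3, 5] Q X,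
      F (fun i => (α i : UnitAddCircle)) ≤ G (fun i => (α i : UnitAddCircle)) := by
    intro α hα
    by_cases h : (fun i => (α i : UnitAddCircle)) ∈ fewPeriods w L M
    · simp only [hG, Set.indicator_of_mem h]
      exact le_self_add
    · refine le_trans (ENNReal.ofReal_le_ofReal ?_) le_add_self
      exact pow_le_pow_left₀ (norm_nonneg _) (hmany X hX α hα h) 30
  have hlint : ∫⁻ α in minorArcs 3 ![1, 3, 5] Q X, F (fun i => (α i : UnitAddCircle)) ≤
      ENNReal.ofReal ((C₁ + C₂ ^ 30) * X ^ ((21 : ℝ) - 1 / 8 + ε)) := by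
    calc _ ≤ ∫⁻ α in minorArcs 3 ![1, 3, 5] Q X, G (fun i => (α i : UnitAddCircle)) :=
          setLIntegral_mono (hGm.comp hmk.measurable) hbound
      _ ≤ ∫⁻ α in Set.Icc (fun _ : Fin 3 => 1 / (2 * Q : ℝ)) (fun _ => 1 / (2 * Q : ℝ) + 1),
            G (fun i => (α i : UnitAddCircle)) := by
          refine lintegral_mono_set ?_
          rw [add_comm (1 / (2 * Q : ℝ)) 1]
          exact Set.sdiff_subset
      _ = ∫⁻ A, G A := lintegral_box _ hGm
      _ = (∫⁻ A in fewPeriods w L M, F A) + ENNReal.ofReal B := by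
          simp only [hG]
          rw [lintegral_add_right _ measurable_const,
            lintegral_indicator (measurableSet_fewPeriods w L M), lintegral_const, measure_univ,
            mul_one]
      _ ≤ ENNReal.ofReal (C₁ * M * (L : ℝ) ^ (20 + ε)) + ENNReal.ofReal B := by
          gcongr
          exact hfew L (Nat.floor_pos.2 hX) M
      _ = ENNReal.ofReal (C₁ * M * (L : ℝ) ^ (20 + ε) + B) :=
          (ENNReal.ofReal_add (by positivity) (by positivity)).symm
      _ ≤ _ := by
          refine ENNReal.ofReal_le_ofReal ?_
          rw [add_mul]
          refine add_le_add ?_ ?_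
          · calc C₁ * M * (L : ℝ) ^ (20 + ε) ≤ C₁ * X ^ ((7 : ℝ) / 8) * X ^ (20 + ε) := by
                  gcongr
                  · exact Nat.floor_le (by positivity)
                  · exact Nat.floor_le hX0.le
              _ = C₁ * X ^ ((21 : ℝ) - 1 / 8 + ε) := by
                  rw [mul_assoc, ← Real.rpow_add hX0]
                  congr 2
                  ring
          · rw [hB, mul_pow]
            gcongr
            rw [← Real.rpow_natCast, ← Real.rpow_mul hX0.le]
            refine Real.rpow_le_rpow_of_exponent_le hX ?_
            push_cast
            linarith
  have hcongr : ∀ α : Fin 3 → ℝ, ‖fK ![1, 3, 5] (fun i => (w i : ℝ) * α i) X‖ ^ (30 : ℕ) =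
      ‖tsum3 w L (fun i => (α i : UnitAddCircle))‖ ^ 30 := fun α => by
    rw [fK_eq_tsum3 w α hX0.le]
  simp_rw [hcongr]
  have hcont : Continuous fun α : Fin 3 → ℝ =>
      ‖tsum3 w L (fun i => (α i : UnitAddCircle))‖ ^ 30 :=
    ((continuous_tsum3 w L).comp hmk).norm.pow 30
  rw [integral_eq_lintegral_of_nonneg_ae (Filter.Eventually.of_forall fun α => by positivity)
    hcont.aestronglyMeasurable]
  exact ENNReal.toReal_le_of_le_ofReal (by positivity) hlint
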